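/- Let ω be an irrational number of bounded type and let l ∈ ℕ. The set of 1-periodic C^l potentials v whose Schrödinger cocycle has positive Lyapunov exponent is not open in the C^l topology: there exists a 1-periodic C^l function v : ℝ → ℝ with L(S_v) > 0 such that for every δ > 0 there is a 1-periodic C^l function w : ℝ → ℝ with ‖w − v‖_{C^l} < δ and L(S_w) = 0. -/

import Mathlib

open Real MeasureTheory Filter

/-- Operator norm of a 2×2 real matrix, acting on Euclidean space. -/
noncomputable def opNorm (A : Matrix (Fin 2) (Fin 2) ℝ) : ℝ :=
  ‖(Matrix.toEuclideanCLM (𝕜 := ℝ) A : EuclideanSpace ℝ (Fin 2) →L[ℝ] EuclideanSpace ℝ (Fin 2))‖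

/-- Iterates of the quasi-periodic cocycle: A^n(x) = A(x+(n-1)ω)⋯A(x+ω)A(x). -/
noncomputable def cocycle (ω : ℝ) (A : ℝ → Matrix (Fin 2) (Fin 2) ℝ) :
    ℕ → ℝ → Matrix (Fin 2) (Fin 2) ℝ
  | 0, _ => 1
  | n + 1, x => A (x + n * ω) * cocycle ω A n x

/-- Finite Lyapunov exponents L_n(A) = (1/n) ∫₀¹ log ‖A^n(x)‖ dx. -/
noncomputable def LEn (ω : ℝ) (A : ℝ → Matrix (Fin 2) (Fin 2) ℝ) (n : ℕ) : ℝ :=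
  (1 / n) * ∫ x in (0:ℝ)..1, Real.log (opNorm (cocycle ω A n x))

/-- The Schrödinger cocycle S_v(x) = [[v(x), -1],[1,0]]. -/
def SchrodingerCocycle (v : ℝ → ℝ) (x : ℝ) : Matrix (Fin 2) (Fin 2) ℝ := !![v x, -1; 1, 0]

/-- The denominators of the continued fraction convergents of ω. -/
noncomputable def cfDen (ω : ℝ) (k : ℕ) : ℝ := (GenContFract.of ω).dens k

/-!
For a positive `1`-periodic `f`, the products `ψ n = ∏ i < n, f (x + i * ω)` solve the Schrödinger
equation with potential `f x + 1 / f (x - ω)`. The Lyapunov exponent is therefore at least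
`∫ log f`, and it vanishes if `∫ log f = 0`, by uniform equidistribution.

Reduction of order modifies the solution along an orbit segment of length `R`: with
`N j = ∑ i < j, 1 / (ψ i * ψ (i + 1))` and a bump `χ` supported on a short interval, multiplying
`ψ j` by `1 - (1 - exp (-κ * χ x)) * N j / N R` still solves the equation except at the two ends of
the segment. This lowers `∫ log f` by `κ * ∫ χ`. The error at the near end is of order `1 / N R`,
the one at the far end of order `exp κ / ψ R ^ 2`; both are tiny if the solution first dips and then
grows at a rate close to `1`, as long as `κ` is below about `2 * R`.

Damping by `κ = √R` at a sparse sequence of lengths `R` creates such dips at a small total cost, and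
the potentials converge in `C^l` to one with exponent at least `1 / 2`. At every stage the dip of
the previous one makes it possible to remove all of `∫ log f` by a single small perturbation: this
needs `κ ≈ 1 / ∫ χ`, and bounded type supplies bumps so wide that this is less than `2 * R`,
although their first `R` translates are disjoint.
-/

/-! ### Convergents of an irrational number -/

/-- The properties of the convergents `p k / q k` of the continued fraction of `ω` on which the
best-approximation argument rests. -/
structure IsConvergentSeq (ω : ℝ) (p q : ℕ → ℤ) : Prop where
  one_le_den (k : ℕ) : 1 ≤ q k
  den_add_den_le (k : ℕ) : q (k + 1) + q k ≤ q (k + 2)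
  abs_det (k : ℕ) : |p k * q (k + 1) - q k * p (k + 1)| = 1
  den_mul_abs_error_le (k : ℕ) : (q (k + 1) : ℝ) * |q k * ω - p k| ≤ 1

section ContinuedFraction

variable {ω : ℝ}

lemma not_terminatedAt_of_irrational (hω : Irrational ω) (n : ℕ) :
    ¬ (GenContFract.of ω).TerminatedAt n := by
  intro hn
  obtain ⟨r, hr⟩ := (GenContFract.terminates_iff_rat ω).1 ⟨n, hn⟩
  exact hω ⟨r, hr.symm⟩

lemma exists_int_partialQuotient (hω : Irrational ω) (n : ℕ) :
    ∃ a : ℤ, 1 ≤ a ∧ (GenContFract.of ω).s.get? n = some ⟨1, (a : ℝ)⟩ := by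
  have hn := not_terminatedAt_of_irrational hω n
  rw [GenContFract.TerminatedAt, Stream'.Seq.TerminatedAt] at hn
  obtain ⟨⟨num, den⟩, hpair⟩ := Option.ne_none_iff_exists'.1 hn
  obtain ⟨hnum, a, hden⟩ := GenContFract.of_partNum_eq_one_and_exists_int_partDen_eq hpair
  obtain rfl : num = 1 := hnum
  obtain rfl : den = a := hden
  have ha : (1 : ℝ) ≤ a :=
    GenContFract.of_one_le_get?_partDen (GenContFract.partDen_eq_s_b hpair)
  exact ⟨a, mod_cast ha, hpair⟩

lemma exists_int_nums_dens (hω : Irrational ω) (n : ℕ) :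
    ∃ p q : ℤ, (p : ℝ) = (GenContFract.of ω).nums n ∧ (q : ℝ) = (GenContFract.of ω).dens n ∧
      1 ≤ q := by
  induction n using Nat.twoStepInduction with
  | zero =>
    refine ⟨⌊ω⌋, 1, ?_, ?_, le_rfl⟩
    · rw [GenContFract.zeroth_num_eq_h, GenContFract.of_h_eq_floor]
    · rw [GenContFract.zeroth_den_eq_one, Int.cast_one]
  | one =>
    obtain ⟨a, ha, hget⟩ := exists_int_partialQuotient hω 0
    refine ⟨a * ⌊ω⌋ + 1, a, ?_, ?_, ha⟩
    · rw [GenContFract.first_num_eq hget, GenContFract.of_h_eq_floor]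
      push_cast
      rfl
    · rw [GenContFract.first_den_eq hget]
  | more n ih₀ ih₁ =>
    obtain ⟨p₀, q₀, hp₀, hq₀, hq₀_pos⟩ := ih₀
    obtain ⟨p₁, q₁, hp₁, hq₁, hq₁_pos⟩ := ih₁
    obtain ⟨a, ha, hget⟩ := exists_int_partialQuotient hω (n + 1)
    refine ⟨a * p₁ + p₀, a * q₁ + q₀, ?_, ?_, ?_⟩
    · rw [GenContFract.nums_recurrence hget hp₀.symm hp₁.symm]
      push_cast
      ring
    · rw [GenContFract.dens_recurrence hget hq₀.symm hq₁.symm]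
      push_cast
      ring
    · nlinarith

theorem exists_isConvergentSeq (hω : Irrational ω) :
    ∃ p q : ℕ → ℤ, IsConvergentSeq ω p q ∧ ∀ k, (q k : ℝ) = cfDen ω k := by
  choose p q hp hq hq_pos using exists_int_nums_dens hω
  have hq_posR (k : ℕ) : (0 : ℝ) < q k := by exact_mod_cast hq_pos k
  refine ⟨p, q, ⟨hq_pos, fun k => ?_, fun k => ?_, fun k => ?_⟩, hq⟩
  · obtain ⟨a, ha, hget⟩ := exists_int_partialQuotient hω (k + 1)
    have hrec := GenContFract.dens_recurrence hget (hq k).symm (hq (k + 1)).symm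
    simp only [← hq, one_mul] at hrec
    have hrec : q (k + 2) = a * q (k + 1) + q k := by exact_mod_cast hrec
    nlinarith [hq_pos (k + 1)]
  · have hdet := SimpContFract.determinant (s := SimpContFract.of ω) (n := k)
      (not_terminatedAt_of_irrational hω k)
    change (GenContFract.of ω).nums k * (GenContFract.of ω).dens (k + 1) -
      (GenContFract.of ω).dens k * (GenContFract.of ω).nums (k + 1) = _ at hdet
    rw [← hq, ← hq, ← hp, ← hp] at hdet
    have hdet : p k * q (k + 1) - q k * p (k + 1) = (-1) ^ (k + 1) := by exact_mod_cast hdet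
    rw [hdet, abs_pow, abs_neg, abs_one, one_pow]
  · have herr := GenContFract.abs_sub_convs_le (not_terminatedAt_of_irrational hω k)
    rw [GenContFract.conv_eq_num_div_den, ← hq, ← hq, ← hp,
      le_div_iff₀ (mul_pos (hq_posR k) (hq_posR (k + 1)))] at herr
    have hfactor : (q k : ℝ) * ω - p k = q k * (ω - p k / q k) := by
      have := (hq_posR k).ne'
      field_simp
    rw [hfactor, abs_mul, abs_of_pos (hq_posR k)]
    linarith

end ContinuedFraction

lemma mul_neg_of_abs_sub_eq_one {u v : ℝ} (hu₀ : u ≠ 0) (hv₀ : v ≠ 0) (hu : |u| ≤ 1)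
    (hv : |v| ≤ 1) (huv : |u - v| = 1) : u * v < 0 := by
  by_contra! hnonneg
  rw [abs_le] at hu hv
  rcases hu₀.lt_or_gt with hu' | hu' <;> rcases hv₀.lt_or_gt with hv' | hv' <;>
    rcases abs_cases (u - v) with h | h <;> nlinarith

lemma abs_add_abs_eq_abs_sub_of_mul_neg {u v : ℝ} (huv : u * v < 0) : |u| + |v| = |u - v| := by
  rcases mul_neg_iff.1 huv with ⟨hu, hv⟩ | ⟨hu, hv⟩
  · rw [abs_of_pos hu, abs_of_neg hv, abs_of_pos (by linarith), sub_eq_add_neg]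
  · rw [abs_of_neg hu, abs_of_pos hv, abs_of_neg (by linarith)]
    ring

/-- If `(j, m) = x • (a, c) + y • (b, d)` with `1 ≤ j < b`, then `x ≠ 0` and `x y ≤ 0`, so the two
terms of `jω - m = x (aω - c) + y (bω - d)` do not cancel. -/
lemma abs_mul_sub_le_of_det_eq_one {ω : ℝ} {a b c d : ℤ} (ha : 1 ≤ a) (hb : 1 ≤ b)
    (hdet : |c * b - a * d| = 1) (hsign : ((a : ℝ) * ω - c) * (b * ω - d) < 0)
    {j : ℤ} (hj : 1 ≤ j) (hjb : j < b) (m : ℤ) : |a * ω - c| ≤ |j * ω - m| := by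
  obtain ⟨x, y, hx, hy⟩ : ∃ x y : ℤ, j = x * a + y * b ∧ m = x * c + y * d := by
    rcases (abs_eq zero_le_one).1 hdet with h | h
    · exact ⟨m * b - j * d, j * c - m * a, by linear_combination (-j) * h,
        by linear_combination (-m) * h⟩
    · exact ⟨-(m * b - j * d), -(j * c - m * a), by linear_combination j * h,
        by linear_combination m * h⟩
  have hx₀ : x ≠ 0 := by
    rintro rfl
    have : 0 < y := by nlinarith
    nlinarith
  have hxy : x * y ≤ 0 := by
    by_contra! hpos
    rcases hx₀.lt_or_gt with h | h
    · have : y < 0 := by nlinarith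
      nlinarith
    · have : 0 < y := by nlinarith
      nlinarith
  have hcombine : (j : ℝ) * ω - m = x * (a * ω - c) + y * (b * ω - d) := by
    rw [hx, hy]
    push_cast
    ring
  have hx₁ : (1 : ℝ) ≤ x ^ 2 := by
    have : 1 ≤ x ^ 2 := by nlinarith [sq_abs x, Int.one_le_abs hx₀]
    exact_mod_cast this
  have hxy' : (x : ℝ) * y ≤ 0 := by exact_mod_cast hxy
  rw [hcombine]
  apply sq_le_sq.1
  nlinarith [mul_nonneg_of_nonpos_of_nonpos hxy' hsign.le, sq_nonneg (y * (b * ω - d)),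
    mul_nonneg (sub_nonneg.2 hx₁) (sq_nonneg ((a : ℝ) * ω - c))]

namespace IsConvergentSeq

variable {ω : ℝ} {p q : ℕ → ℤ}

lemma one_le_den_real (h : IsConvergentSeq ω p q) (k : ℕ) : (1 : ℝ) ≤ q k := by
  exact_mod_cast h.one_le_den k

lemma den_add_den_le_real (h : IsConvergentSeq ω p q) (k : ℕ) :
    (q (k + 1) : ℝ) + q k ≤ q (k + 2) := by
  exact_mod_cast h.den_add_den_le k

lemma error_ne_zero (h : IsConvergentSeq ω p q) (hω : Irrational ω) (k : ℕ) :
    (q k : ℝ) * ω - p k ≠ 0 := by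
  have hq : q k ≠ 0 := by linarith [h.one_le_den k]
  exact ((hω.intCast_mul hq).sub_intCast _).ne_zero

lemma den_mul_error_signs (h : IsConvergentSeq ω p q) (hω : Irrational ω) (k : ℕ) :
    (q (k + 1) * (q k * ω - p k) : ℝ) * (q k * (q (k + 1) * ω - p (k + 1))) < 0 ∧
      |(q (k + 1) * (q k * ω - p k) : ℝ) - q k * (q (k + 1) * ω - p (k + 1))| = 1 := by
  have hq₀ : (0 : ℝ) < q k := zero_lt_one.trans_le (h.one_le_den_real k)
  have hq₁ : (0 : ℝ) < q (k + 1) := zero_lt_one.trans_le (h.one_le_den_real (k + 1))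
  have hdet : |(q (k + 1) * (q k * ω - p k) : ℝ) - q k * (q (k + 1) * ω - p (k + 1))| = 1 := by
    have hint : |((p k * q (k + 1) - q k * p (k + 1) : ℤ) : ℝ)| = 1 := by
      exact_mod_cast h.abs_det k
    rw [← hint, ← abs_neg]
    congr 1
    push_cast
    ring
  refine ⟨mul_neg_of_abs_sub_eq_one (mul_ne_zero hq₁.ne' (h.error_ne_zero hω k))
    (mul_ne_zero hq₀.ne' (h.error_ne_zero hω (k + 1))) ?_ ?_ hdet, hdet⟩
  · rw [abs_mul, abs_of_pos hq₁]
    exact h.den_mul_abs_error_le k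
  · rw [abs_mul, abs_of_pos hq₀]
    refine le_trans ?_ (h.den_mul_abs_error_le (k + 1))
    gcongr
    linarith [h.den_add_den_le k, h.one_le_den (k + 1)]

lemma error_mul_error_neg (h : IsConvergentSeq ω p q) (hω : Irrational ω) (k : ℕ) :
    ((q k : ℝ) * ω - p k) * (q (k + 1) * ω - p (k + 1)) < 0 := by
  have hneg := (h.den_mul_error_signs hω k).1
  rw [mul_mul_mul_comm] at hneg
  have hq := mul_pos (zero_lt_one.trans_le (h.one_le_den_real (k + 1)))
    (zero_lt_one.trans_le (h.one_le_den_real k))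
  exact (pos_iff_neg_of_mul_neg hneg).1 hq

lemma den_mul_abs_error_add (h : IsConvergentSeq ω p q) (hω : Irrational ω) (k : ℕ) :
    (q (k + 1) : ℝ) * |q k * ω - p k| + q k * |q (k + 1) * ω - p (k + 1)| = 1 := by
  obtain ⟨hneg, hdet⟩ := h.den_mul_error_signs hω k
  rw [← abs_add_abs_eq_abs_sub_of_mul_neg hneg, abs_mul, abs_mul,
    abs_of_nonneg (zero_le_one.trans (h.one_le_den_real k)),
    abs_of_nonneg (zero_le_one.trans (h.one_le_den_real (k + 1)))] at hdet
  exact hdet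

lemma le_den_succ (h : IsConvergentSeq ω p q) (k : ℕ) : (k : ℝ) ≤ q (k + 1) := by
  induction k with
  | zero => exact Nat.cast_zero.trans_le (zero_le_one.trans (h.one_le_den_real 1))
  | succ k ih =>
    push_cast
    linarith [h.den_add_den_le_real k, h.one_le_den_real k]

lemma abs_error_le_of_lt_den (h : IsConvergentSeq ω p q) (hω : Irrational ω) (k : ℕ) {j : ℕ}
    (hj : 1 ≤ j) (hjq : (j : ℤ) < q (k + 1)) (m : ℤ) :
    |q k * ω - p k| ≤ |j * ω - m| :=
  mod_cast abs_mul_sub_le_of_det_eq_one (h.one_le_den k) (h.one_le_den (k + 1)) (h.abs_det k)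
    (h.error_mul_error_neg hω k) (j := j) (mod_cast hj) hjq m

lemma exists_den_between (h : IsConvergentSeq ω p q) {M : ℝ} (hM : 1 ≤ M) (hq₀ : q 0 = 1)
    (hbt : ∀ k, (q (k + 1) : ℝ) ≤ M * q k) {X : ℝ} (hX : 1 ≤ X) :
    ∃ k, X + 1 ≤ q (k + 2) ∧ (q (k + 2) : ℝ) ≤ 2 * M ^ 2 * X := by
  classical
  have hlarge : ∃ k, X + 1 ≤ q (k + 2) := by
    obtain ⟨k, hk⟩ := exists_nat_ge (X + 1)
    refine ⟨k, hk.trans ?_⟩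
    exact_mod_cast (Nat.cast_le.2 k.le_succ).trans (h.le_den_succ (k + 1))
  refine ⟨Nat.find hlarge, Nat.find_spec hlarge, ?_⟩
  have hMX : 1 ≤ M * X := by nlinarith
  rcases hk : Nat.find hlarge with _ | k
  · have h₁ := hbt 0
    rw [hq₀, Int.cast_one] at h₁
    nlinarith [hbt 1]
  · have hsmall : (q (k + 2) : ℝ) < X + 1 :=
      not_le.1 (Nat.find_min hlarge (hk ▸ k.lt_succ_self))
    calc (q (k + 1 + 2) : ℝ) ≤ M * q (k + 2) := hbt (k + 2)
      _ ≤ M * (2 * X) := by gcongr; linarith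
      _ ≤ 2 * M ^ 2 * X := by nlinarith

end IsConvergentSeq

/-! ### Separation of the orbit of a rotation of bounded type -/

/-- The points `ω, 2ω, …, Rω` stay at distance at least `ℓ` from `ℤ`, where `(R + 1) ℓ` exceeds the
value `1 / 2` by at least `η`. -/
structure SeparationScale (ω η : ℝ) (R : ℕ) (ℓ : ℝ) : Prop where
  pos : 0 < ℓ
  le_abs_sub {j : ℕ} (hj : 1 ≤ j) (hjR : j ≤ R) (m : ℤ) : ℓ ≤ |j * ω - m|
  half_add_le : 1 / 2 + η ≤ (R + 1) * ℓ
  le_one : (R + 1) * ℓ ≤ 1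

lemma IsConvergentSeq.separationScale {ω : ℝ} {p q : ℕ → ℤ} (h : IsConvergentSeq ω p q)
    (hω : Irrational ω) {M : ℝ} (hM : 1 ≤ M) {k : ℕ} (hbt : (q (k + 1) : ℝ) ≤ M * q k) {R : ℕ}
    (hR : (R : ℤ) + 1 = q (k + 2)) :
    SeparationScale ω (1 / (2 * (2 * M + 1))) R |q (k + 1) * ω - p (k + 1)| := by
  have hR' : (R : ℝ) + 1 = q (k + 2) := by exact_mod_cast hR
  refine ⟨abs_pos.2 (h.error_ne_zero hω _), fun hj hjR m => ?_, ?_, ?_⟩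
  · exact h.abs_error_le_of_lt_den hω (k + 1) hj (hR ▸ by omega) m
  · set e := |(q (k + 2) : ℝ) * ω - p (k + 2)|
    have hnext : (q (k + 1) : ℝ) * e ≤ M / (2 * M + 1) := by
      rw [le_div_iff₀ (by linarith)]
      have hgrowth : (q (k + 1) : ℝ) * (2 * M + 1) ≤ M * q (k + 3) := by
        nlinarith [h.den_add_den_le_real k, h.den_add_den_le_real (k + 1)]
      nlinarith [h.den_mul_abs_error_le (k + 2), abs_nonneg ((q (k + 2) : ℝ) * ω - p (k + 2))]
    have hsplit : 1 / 2 + 1 / (2 * (2 * M + 1)) = 1 - M / (2 * M + 1) := by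
      field_simp
      ring
    rw [hsplit, hR']
    linarith [h.den_mul_abs_error_add hω (k + 1)]
  · rw [hR']
    exact h.den_mul_abs_error_le (k + 1)

theorem exists_separationScale {ω : ℝ} (hω : Irrational ω) {M : ℝ} (hM : 1 ≤ M)
    (hbt : ∀ k, cfDen ω (k + 1) ≤ M * cfDen ω k) {X : ℝ} (hX : 1 ≤ X) :
    ∃ (R : ℕ) (ℓ : ℝ), X ≤ R ∧ R ≤ 2 * M ^ 2 * X ∧
      SeparationScale ω (1 / (2 * (2 * M + 1))) R ℓ := by
  obtain ⟨p, q, h, hq⟩ := exists_isConvergentSeq hω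
  simp only [← hq] at hbt
  have hq₀ : q 0 = 1 := by
    have := (hq 0).trans GenContFract.zeroth_den_eq_one
    exact_mod_cast this
  obtain ⟨k, hXk, hkX⟩ := h.exists_den_between hM hq₀ hbt hX
  obtain ⟨R, hR⟩ := Int.le.dest (h.one_le_den (k + 2))
  rw [add_comm] at hR
  have hR' : (R : ℝ) + 1 = q (k + 2) := by exact_mod_cast hR
  exact ⟨R, _, by linarith, by linarith, h.separationScale hω hM (hbt k) hR⟩

/-! ### Geometric bounds on derivatives -/

/-- `g` is `C^l` and `|g^(m)| ≤ C ^ m * Z` pointwise for every order `m ≤ l`: each derivative costs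
one factor `C` relative to the envelope `Z`. -/
structure DerivDominated (l : ℕ) (C : ℝ) (g Z : ℝ → ℝ) : Prop where
  contDiff : ContDiff ℝ l g
  abs_iteratedDeriv_le {m : ℕ} (hm : m ≤ l) (x : ℝ) : |iteratedDeriv m g x| ≤ C ^ m * Z x

lemma abs_iteratedDeriv_mul_le {m : ℕ} {f g : ℝ → ℝ} (hf : ContDiff ℝ m f) (hg : ContDiff ℝ m g)
    {x B : ℝ} (hB : ∀ i ≤ m, |iteratedDeriv i f x| * |iteratedDeriv (m - i) g x| ≤ B) :
    |iteratedDeriv m (f * g) x| ≤ 2 ^ m * B := by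
  rw [iteratedDeriv_mul hf.contDiffAt hg.contDiffAt]
  calc _ ≤ ∑ i ∈ Finset.range (m + 1), (m.choose i : ℝ) * B := by
        refine (Finset.abs_sum_le_sum_abs _ _).trans (Finset.sum_le_sum fun i hi => ?_)
        rw [abs_mul, abs_mul, Nat.abs_cast, mul_assoc]
        gcongr
        exact hB i (Nat.lt_succ_iff.1 (Finset.mem_range.1 hi))
    _ = 2 ^ m * B := by
        rw [← Finset.sum_mul]
        congr 1
        exact_mod_cast Nat.sum_range_choose m

lemma abs_mul_iteratedDeriv_le_of_mul_eq_one {m : ℕ} {f g : ℝ → ℝ} (hf : ContDiff ℝ (m + 1 : ℕ) f)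
    (hg : ContDiff ℝ (m + 1 : ℕ) g) (hfg : f * g = 1) {x B : ℝ} (hB₀ : 0 ≤ B)
    (hB : ∀ i ≤ m, |iteratedDeriv (i + 1) f x| * |iteratedDeriv (m - i) g x| ≤ B) :
    |f x * iteratedDeriv (m + 1) g x| ≤ 2 ^ (m + 1) * B := by
  have hleibniz := iteratedDeriv_mul hf.contDiffAt (x := x) hg.contDiffAt
  have hzero : iteratedDeriv (m + 1) (1 : ℝ → ℝ) x = 0 :=
    iteratedDeriv_const.trans (if_neg m.succ_ne_zero)
  rw [hfg, hzero, Finset.sum_range_succ'] at hleibniz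
  simp only [Nat.choose_zero_right, Nat.cast_one, one_mul, iteratedDeriv_zero, Nat.sub_zero,
    Nat.add_sub_add_right] at hleibniz
  rw [eq_neg_of_add_eq_zero_right hleibniz.symm, abs_neg]
  have hchoose : ∑ i ∈ Finset.range (m + 1), ((m + 1).choose (i + 1) : ℝ) ≤ 2 ^ (m + 1) := by
    have : ∑ i ∈ Finset.range (m + 1), (m + 1).choose (i + 1) ≤ 2 ^ (m + 1) := by
      rw [← Nat.sum_range_choose, Finset.sum_range_succ' _ (m + 1)]
      exact Nat.le_add_right _ _
    exact_mod_cast this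
  calc _ ≤ ∑ i ∈ Finset.range (m + 1), ((m + 1).choose (i + 1) : ℝ) * B := by
        refine (Finset.abs_sum_le_sum_abs _ _).trans (Finset.sum_le_sum fun i hi => ?_)
        rw [abs_mul, abs_mul, Nat.abs_cast, mul_assoc]
        gcongr
        exact hB i (Nat.lt_succ_iff.1 (Finset.mem_range.1 hi))
    _ ≤ 2 ^ (m + 1) * B := by
        rw [← Finset.sum_mul]
        gcongr

lemma deriv_exp_neg_mul {χ : ℝ → ℝ} (hχ : Differentiable ℝ χ) (κ : ℝ) :
    deriv (fun x => Real.exp (-κ * χ x)) =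
      (fun x => -κ * deriv χ x) * fun x => Real.exp (-κ * χ x) := by
  funext y
  rw [(((hχ y).hasDerivAt.const_mul (-κ)).exp).deriv, Pi.mul_apply, mul_comm]

namespace DerivDominated

variable {l : ℕ} {C C' : ℝ} {g g' Z Z' : ℝ → ℝ}

lemma abs_le (h : DerivDominated l C g Z) (x : ℝ) : |g x| ≤ Z x := by
  simpa only [iteratedDeriv_zero, pow_zero, one_mul] using h.abs_iteratedDeriv_le l.zero_le x

lemma nonneg (h : DerivDominated l C g Z) (x : ℝ) : 0 ≤ Z x := (abs_nonneg _).trans (h.abs_le x)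

lemma contDiff_of_le (h : DerivDominated l C g Z) {m : ℕ} (hm : m ≤ l) : ContDiff ℝ m g :=
  h.contDiff.of_le (mod_cast hm)

lemma mono (h : DerivDominated l C g Z) (hC : 0 ≤ C) (hCC' : C ≤ C') (hZ : ∀ x, Z x ≤ Z' x) :
    DerivDominated l C' g Z' where
  contDiff := h.contDiff
  abs_iteratedDeriv_le {m} hm x := by
    refine (h.abs_iteratedDeriv_le hm x).trans ?_
    have hC' := hC.trans hCC'
    have := h.nonneg x
    gcongr
    exact hZ x

lemma mono_const (h : DerivDominated l C g Z) (hC : 0 ≤ C) (hCC' : C ≤ C') :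
    DerivDominated l C' g Z :=
  h.mono hC hCC' fun _ => le_rfl

lemma add (h : DerivDominated l C g Z) (h' : DerivDominated l C g' Z') :
    DerivDominated l C (fun x => g x + g' x) (fun x => Z x + Z' x) where
  contDiff := h.contDiff.add h'.contDiff
  abs_iteratedDeriv_le {m} hm x := by
    rw [iteratedDeriv_fun_add (h.contDiff_of_le hm).contDiffAt (h'.contDiff_of_le hm).contDiffAt,
      mul_add]
    exact (abs_add_le _ _).trans
      (add_le_add (h.abs_iteratedDeriv_le hm x) (h'.abs_iteratedDeriv_le hm x))

lemma neg (h : DerivDominated l C g Z) : DerivDominated l C (fun x => -g x) Z where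
  contDiff := h.contDiff.neg
  abs_iteratedDeriv_le {m} hm x := by
    rw [iteratedDeriv_fun_neg, abs_neg]
    exact h.abs_iteratedDeriv_le hm x

lemma const (hC : 0 ≤ C) (c : ℝ) : DerivDominated l C (fun _ => c) (fun _ => |c|) where
  contDiff := contDiff_const
  abs_iteratedDeriv_le {m} _ x := by
    rw [iteratedDeriv_const]
    split_ifs with h
    · rw [h, pow_zero, one_mul]
    · rw [abs_zero]
      positivity

lemma comp_add_const (h : DerivDominated l C g Z) (a : ℝ) :
    DerivDominated l C (fun x => g (x + a)) (fun x => Z (x + a)) where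
  contDiff := h.contDiff.comp (contDiff_id.add contDiff_const)
  abs_iteratedDeriv_le {m} hm x := by
    rw [iteratedDeriv_comp_add_const]
    exact h.abs_iteratedDeriv_le hm _

lemma mul (h : DerivDominated l C g Z) (h' : DerivDominated l C' g' Z') (hC : 0 ≤ C) :
    DerivDominated l (C + C') (fun x => g x * g' x) (fun x => Z x * Z' x) where
  contDiff := h.contDiff.mul h'.contDiff
  abs_iteratedDeriv_le {m} hm x := by
    rw [iteratedDeriv_fun_mul (h.contDiff_of_le hm).contDiffAt (h'.contDiff_of_le hm).contDiffAt,
      add_pow, Finset.sum_mul]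
    refine (Finset.abs_sum_le_sum_abs _ _).trans (Finset.sum_le_sum fun i hi => ?_)
    have him : i ≤ m := Nat.lt_succ_iff.1 (Finset.mem_range.1 hi)
    have hZ := h.nonneg x
    have hi := h.abs_iteratedDeriv_le (him.trans hm) x
    have hi' := h'.abs_iteratedDeriv_le ((m.sub_le i).trans hm) x
    rw [abs_mul, abs_mul, Nat.abs_cast]
    calc (m.choose i : ℝ) * |iteratedDeriv i g x| * |iteratedDeriv (m - i) g' x|
        ≤ m.choose i * (C ^ i * Z x) * (C' ^ (m - i) * Z' x) := by gcongr
      _ = _ := by ring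

lemma sum {ι : Type*} {G Y : ι → ℝ → ℝ} {s : Finset ι} (hC : 0 ≤ C)
    (h : ∀ i ∈ s, DerivDominated l C (G i) (Y i)) :
    DerivDominated l C (fun x => ∑ i ∈ s, G i x) (fun x => ∑ i ∈ s, Y i x) := by
  classical
  induction s using Finset.induction_on with
  | empty => simpa only [Finset.sum_empty, abs_zero] using const (l := l) hC 0
  | insert a s ha ih =>
    simp only [Finset.sum_insert ha]
    exact (h a (s.mem_insert_self a)).add (ih fun i hi => h i (Finset.mem_insert_of_mem hi))

lemma prod {ι : Type*} {G Y : ι → ℝ → ℝ} {s : Finset ι} (hC : 0 ≤ C)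
    (h : ∀ i ∈ s, DerivDominated l C (G i) (Y i)) :
    DerivDominated l (s.card * C) (fun x => ∏ i ∈ s, G i x) (fun x => ∏ i ∈ s, Y i x) := by
  classical
  induction s using Finset.induction_on with
  | empty =>
    simpa only [Finset.prod_empty, Finset.card_empty, Nat.cast_zero, zero_mul, abs_one]
      using const (l := l) le_rfl 1
  | insert a s ha ih =>
    have hcard : ((insert a s).card : ℝ) * C = C + s.card * C := by
      rw [Finset.card_insert_of_notMem ha]
      push_cast
      ring
    simp only [Finset.prod_insert ha, hcard]
    exact (h a (s.mem_insert_self a)).mul (ih fun i hi => h i (Finset.mem_insert_of_mem hi)) hC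

/-- Differentiating `g * (1 / g) = 1` bounds each derivative of `1 / g` by the lower ones. -/
lemma one_div (h : DerivDominated l C g g) (hC : 0 ≤ C) (hpos : ∀ x, 0 < g x) :
    DerivDominated l (2 ^ l * C) (fun x => 1 / g x) (fun x => 1 / g x) := by
  have hcd : ContDiff ℝ l (fun x => 1 / g x) :=
    contDiff_const.div h.contDiff fun x => (hpos x).ne'
  refine ⟨hcd, fun {m} => ?_⟩
  induction m using Nat.strong_induction_on with
  | _ m ih =>
  intro hm x
  have hgx := hpos x
  rcases m with _ | m
  · rw [iteratedDeriv_zero, pow_zero, one_mul, abs_of_pos (one_div_pos.2 hgx)]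
  have hgg : (g * fun x => 1 / g x) = 1 := funext fun y => mul_one_div_cancel (hpos y).ne'
  have hterm : ∀ i ≤ m, |iteratedDeriv (i + 1) g x| *
      |iteratedDeriv (m - i) (fun x => 1 / g x) x| ≤ C ^ (m + 1) * 2 ^ (l * m) := by
    intro i hi
    calc |iteratedDeriv (i + 1) g x| * |iteratedDeriv (m - i) (fun x => 1 / g x) x|
        ≤ (C ^ (i + 1) * g x) * ((2 ^ l * C) ^ (m - i) * (1 / g x)) := by
          gcongr
          · exact h.abs_iteratedDeriv_le (by omega) x
          · exact ih (m - i) (by omega) (by omega) x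
      _ = C ^ (i + 1 + (m - i)) * 2 ^ (l * (m - i)) := by
          rw [mul_pow, ← pow_mul, pow_add]
          field_simp
          ring
      _ ≤ C ^ (m + 1) * 2 ^ (l * m) := by
          rw [show i + 1 + (m - i) = m + 1 by omega]
          gcongr
          · exact one_le_two
          · exact m.sub_le i
  have hbound := abs_mul_iteratedDeriv_le_of_mul_eq_one (h.contDiff_of_le hm)
    (hcd.of_le (mod_cast hm)) hgg (by positivity) hterm
  rw [abs_mul, abs_of_pos hgx] at hbound
  rw [mul_one_div, le_div_iff₀ hgx, mul_comm]
  calc _ ≤ _ := hbound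
    _ ≤ 2 ^ l * (C ^ (m + 1) * 2 ^ (l * m)) := by
      gcongr
      exact one_le_two
    _ = (2 ^ l * C) ^ (m + 1) := by
      rw [mul_pow, ← pow_mul, Nat.mul_succ, pow_add]
      ring

lemma abs_iteratedDeriv_succ_exp_neg_mul_le_of_le {χ : ℝ → ℝ} {c κ K : ℝ}
    (h : DerivDominated l c χ Z) (hc : 0 ≤ c) (hκ : 0 ≤ κ) (hcK : c ≤ K) {m : ℕ} (hm : m + 1 ≤ l)
    {x : ℝ} (hle : ∀ i ≤ m, |iteratedDeriv i (fun x => Real.exp (-κ * χ x)) x| ≤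
      K ^ i * Real.exp (-κ * χ x)) :
    |iteratedDeriv (m + 1) (fun x => Real.exp (-κ * χ x)) x| ≤
      2 ^ m * (κ * c * (K ^ m * (Real.exp (-κ * χ x) * Z x))) := by
  have hcd : ContDiff ℝ (m + 1 : ℕ) χ := h.contDiff_of_le hm
  have hexp : ContDiff ℝ m (fun x => Real.exp (-κ * χ x)) :=
    (contDiff_const.mul (h.contDiff_of_le (m.le_succ.trans hm))).exp
  have hderiv : ContDiff ℝ m (fun x => -κ * deriv χ x) := contDiff_const.mul
    (contDiff_succ_iff_deriv.1 (mod_cast hcd : ContDiff ℝ ((m : WithTop ℕ∞) + 1) χ)).2.2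
  have hZ₀ : 0 ≤ Z x := h.nonneg x
  rw [iteratedDeriv_succ', deriv_exp_neg_mul (hcd.differentiable (by simp))]
  refine abs_iteratedDeriv_mul_le hderiv hexp fun i hi => ?_
  rw [iteratedDeriv_const_mul_field, ← iteratedDeriv_succ', abs_mul, abs_neg, abs_of_nonneg hκ]
  calc _ ≤ κ * (c ^ (i + 1) * Z x) * (K ^ (m - i) * Real.exp (-κ * χ x)) := by
        gcongr
        · exact h.abs_iteratedDeriv_le (by omega) x
        · exact hle _ (m.sub_le i)
    _ = κ * c * (c ^ i * K ^ (m - i) * (Real.exp (-κ * χ x) * Z x)) := by ring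
    _ ≤ κ * c * (K ^ i * K ^ (m - i) * (Real.exp (-κ * χ x) * Z x)) := by
        have := hc.trans hcK
        gcongr
    _ = _ := by rw [← pow_add, Nat.add_sub_cancel' hi]

lemma abs_iteratedDeriv_succ_exp_neg_mul_le {χ : ℝ → ℝ} {c κ : ℝ} (h : DerivDominated l c χ Z)
    (hc : 0 ≤ c) (hκ : 0 ≤ κ) (hZ : ∀ x, Z x ≤ 1) {m : ℕ} (hm : m + 1 ≤ l) (x : ℝ) :
    |iteratedDeriv (m + 1) (fun x => Real.exp (-κ * χ x)) x| ≤
      (2 ^ l * c * (1 + κ)) ^ (m + 1) * (Real.exp (-κ * χ x) * Z x) := by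
  induction m using Nat.strong_induction_on generalizing x with
  | _ m ih =>
  set K := 2 ^ l * c * (1 + κ) with hK
  have hcK : c ≤ K := by
    have : (1 : ℝ) ≤ 2 ^ l := one_le_pow₀ one_le_two
    calc c = 1 * c * 1 := by ring
      _ ≤ K := by rw [hK]; gcongr; linarith
  have hZ₀ : 0 ≤ Z x := h.nonneg x
  have hlower (i : ℕ) (hi : i ≤ m) : |iteratedDeriv i (fun x => Real.exp (-κ * χ x)) x| ≤
      K ^ i * Real.exp (-κ * χ x) := by
    rcases i with _ | i
    · simp
    · refine (ih i hi (by omega) x).trans ?_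
      gcongr
      exact mul_le_of_le_one_right (by positivity) (hZ x)
  calc _ ≤ 2 ^ m * (κ * c * (K ^ m * (Real.exp (-κ * χ x) * Z x))) :=
        h.abs_iteratedDeriv_succ_exp_neg_mul_le_of_le hc hκ hcK hm hlower
    _ ≤ 2 ^ l * ((1 + κ) * c * (K ^ m * (Real.exp (-κ * χ x) * Z x))) := by
        gcongr
        · exact one_le_two
        · omega
        · linarith
    _ = K ^ (m + 1) * (Real.exp (-κ * χ x) * Z x) := by rw [pow_succ]; ring

lemma exp_neg_mul {χ : ℝ → ℝ} {c κ : ℝ} (h : DerivDominated l c χ Z) (hc : 0 ≤ c) (hκ : 0 ≤ κ)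
    (hZ : ∀ x, Z x ≤ 1) :
    DerivDominated l (2 ^ l * c * (1 + κ)) (fun x => Real.exp (-κ * χ x))
      (fun x => Real.exp (-κ * χ x)) where
  contDiff := (contDiff_const.mul h.contDiff).exp
  abs_iteratedDeriv_le {m} hm x := by
    rcases m with _ | m
    · simp
    · refine (h.abs_iteratedDeriv_succ_exp_neg_mul_le hc hκ hZ hm x).trans ?_
      gcongr
      exact mul_le_of_le_one_right (exp_nonneg _) (hZ x)

lemma one_sub_exp_neg_mul {χ : ℝ → ℝ} {c κ : ℝ} {s : Set ℝ}
    (h : DerivDominated l c χ (s.indicator 1)) (hc : 0 ≤ c) (hκ : 0 ≤ κ) (hχ : ∀ x, 0 ≤ χ x) :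
    DerivDominated l (2 ^ l * c * (1 + κ)) (fun x => 1 - Real.exp (-κ * χ x))
      (s.indicator 1) where
  contDiff := contDiff_const.sub (contDiff_const.mul h.contDiff).exp
  abs_iteratedDeriv_le {m} hm x := by
    have hle : Real.exp (-κ * χ x) ≤ 1 :=
      Real.exp_le_one_iff.2 (mul_nonpos_of_nonpos_of_nonneg (neg_nonpos.2 hκ) (hχ x))
    rcases m with _ | m
    · rw [iteratedDeriv_zero, pow_zero, one_mul, abs_of_nonneg (sub_nonneg.2 hle)]
      by_cases hx : x ∈ s
      · rw [Set.indicator_of_mem hx, Pi.one_apply]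
        linarith [Real.exp_pos (-κ * χ x)]
      · have hχx := h.abs_le x
        rw [Set.indicator_of_notMem hx, abs_nonpos_iff] at hχx
        rw [Set.indicator_of_notMem hx, hχx, mul_zero, Real.exp_zero, sub_self]
    · rw [iteratedDeriv_const_sub m.succ_pos, iteratedDeriv_neg, abs_neg]
      have hind (y : ℝ) : s.indicator (1 : ℝ → ℝ) y ≤ 1 :=
        Set.indicator_le_self' (fun _ _ => zero_le_one) y
      refine (h.abs_iteratedDeriv_succ_exp_neg_mul_le hc hκ hind hm x).trans ?_
      gcongr
      exact mul_le_of_le_one_left (h.nonneg x) hle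

lemma add_one_sub_mul {θ ρ : ℝ → ℝ} {c c' : ℝ} (h : DerivDominated l c θ θ)
    (h' : DerivDominated l c' ρ ρ) (hc : 0 ≤ c) (hc' : 0 ≤ c') (hθ : ∀ x, θ x ≤ 1)
    (hρ : ∀ x, ρ x ≤ 1) :
    DerivDominated l (3 * (c + c')) (fun x => θ x + (1 - θ x) * ρ x)
      (fun x => θ x + (1 - θ x) * ρ x) := by
  have hdom := ((h.mono_const hc (le_add_of_nonneg_right hc')).add
    (h'.mono_const hc' (le_add_of_nonneg_left hc))).add (h.mul h' hc).neg
  have hexpand (y : ℝ) : θ y + (1 - θ y) * ρ y = θ y + ρ y + -(θ y * ρ y) := by ring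
  simp only [hexpand]
  refine ⟨hdom.contDiff, fun {m} hm x => ?_⟩
  have hθρ := mul_nonneg (h.nonneg x) (sub_nonneg.2 (hρ x))
  have hρθ := mul_nonneg (h'.nonneg x) (sub_nonneg.2 (hθ x))
  have hpos : 0 ≤ θ x + ρ x + -(θ x * ρ x) := by nlinarith [h.nonneg x, h'.nonneg x]
  rcases m with _ | m
  · rw [iteratedDeriv_zero, pow_zero, one_mul, abs_of_nonneg hpos]
  calc _ ≤ (c + c') ^ (m + 1) * (θ x + ρ x + θ x * ρ x) := hdom.abs_iteratedDeriv_le hm x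
    _ ≤ (c + c') ^ (m + 1) * (3 * (θ x + ρ x + -(θ x * ρ x))) := by
        gcongr
        nlinarith
    _ ≤ (c + c') ^ (m + 1) * (3 ^ (m + 1) * (θ x + ρ x + -(θ x * ρ x))) := by
        gcongr
        exact le_self_pow₀ (by norm_num) m.succ_ne_zero
    _ = _ := by rw [mul_pow]; ring

end DerivDominated

/-! ### Periodized bump functions -/

/-- The closed `r`-neighbourhood of `ℤ` in `ℝ`. -/
def nearInt (r : ℝ) : Set ℝ := {x | |x - round x| ≤ r}

/-- The `1`-periodic extension of the rescaled bump `x ↦ ψ (x / ℓ)`. It is smooth if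
`ψ.rOut * ℓ < 1 / 2`. -/
noncomputable def periodicBump (ψ : ContDiffBump (0 : ℝ)) (ℓ x : ℝ) : ℝ := ψ ((x - round x) / ℓ)

lemma exists_int_near_of_mem_nearInt_add {r x y : ℝ} (hx : x ∈ nearInt r)
    (hxy : x + y ∈ nearInt r) : ∃ m : ℤ, |y - m| ≤ 2 * r := by
  refine ⟨round (x + y) - round x, ?_⟩
  calc |y - (round (x + y) - round x : ℤ)|
      = |(x + y - round (x + y)) - (x - round x)| := by
        push_cast
        congr 1
        ring
    _ ≤ |x + y - round (x + y)| + |x - round x| := abs_sub _ _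
    _ ≤ 2 * r := by linarith [hx.out, hxy.out]

section Bump

variable (ψ : ContDiffBump (0 : ℝ)) {ℓ : ℝ}

lemma bump_apply_eq_zero {y : ℝ} (hy : ψ.rOut ≤ |y|) : ψ y = 0 :=
  ψ.zero_of_le_dist (by rwa [dist_zero_right, norm_eq_abs])

lemma bump_apply_eq_one {y : ℝ} (hy : |y| ≤ ψ.rIn) : ψ y = 1 :=
  ψ.one_of_mem_closedBall (by rwa [mem_closedBall_zero_iff, norm_eq_abs])

lemma iteratedDeriv_bump_eq_zero (m : ℕ) {y : ℝ} (hy : ψ.rOut < |y|) :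
    iteratedDeriv m ψ y = 0 := by
  have hlocal : ψ =ᶠ[nhds y] fun _ => 0 := by
    filter_upwards [(isOpen_lt continuous_const continuous_abs).mem_nhds hy] with z hz
    exact bump_apply_eq_zero ψ hz.le
  rw [hlocal.iteratedDeriv_eq, iteratedDeriv_const, ite_self]

lemma exists_abs_iteratedDeriv_bump_le (m : ℕ) : ∃ K, ∀ y, |iteratedDeriv m ψ y| ≤ K := by
  have hcont : Continuous (iteratedDeriv m ψ) := ψ.contDiff.continuous_iteratedDeriv m le_rfl
  have hsupp : HasCompactSupport (iteratedDeriv m ψ) :=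
    (ψ.hasCompactSupport.iteratedFDeriv m).comp_left
      (g := fun T : ContinuousMultilinearMap ℝ (fun _ : Fin m => ℝ) ℝ => T fun _ => 1) rfl
  simpa only [norm_eq_abs] using hcont.bounded_above_of_compact_support hsupp

lemma exists_abs_iteratedDeriv_bump_le_pow (l : ℕ) :
    ∃ B, 1 ≤ B ∧ ∀ m ≤ l, ∀ y, |iteratedDeriv m ψ y| ≤ B ^ m := by
  choose K hK using exists_abs_iteratedDeriv_bump_le ψ
  have hK₀ (m : ℕ) : 0 ≤ K m := (abs_nonneg _).trans (hK m 0)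
  have hB : 1 ≤ 1 + ∑ m ∈ Finset.range (l + 1), K m :=
    le_add_of_nonneg_right (Finset.sum_nonneg fun i _ => hK₀ i)
  refine ⟨_, hB, fun m hm y => ?_⟩
  rcases m with _ | m
  · rw [iteratedDeriv_zero, pow_zero, abs_of_nonneg ψ.nonneg]
    exact ψ.le_one
  · have hle : K (m + 1) ≤ ∑ i ∈ Finset.range (l + 1), K i :=
      Finset.single_le_sum (fun i _ => hK₀ i) (Finset.mem_range.2 (by omega))
    calc _ ≤ 1 + ∑ i ∈ Finset.range (l + 1), K i := by linarith [hK (m + 1) y]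
      _ ≤ _ := le_self_pow₀ hB m.succ_ne_zero

variable (ℓ) in
lemma periodicBump_nonneg (x : ℝ) : 0 ≤ periodicBump ψ ℓ x := ψ.nonneg

variable (ℓ) in
lemma periodicBump_le_one (x : ℝ) : periodicBump ψ ℓ x ≤ 1 := ψ.le_one

variable (ℓ) in
lemma periodic_periodicBump : Function.Periodic (periodicBump ψ ℓ) 1 := by
  intro x
  rw [periodicBump, round_add_one]
  push_cast
  rw [add_sub_add_right_eq_sub, periodicBump]

lemma periodicBump_eq_one (hℓ : 0 < ℓ) {x : ℝ} (hx : x ∈ nearInt (ψ.rIn * ℓ)) :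
    periodicBump ψ ℓ x = 1 := by
  apply bump_apply_eq_one
  rw [abs_div, abs_of_pos hℓ, div_le_iff₀ hℓ]
  exact hx

lemma periodicBump_eq_zero (hℓ : 0 < ℓ) {x : ℝ} (hx : x ∉ nearInt (ψ.rOut * ℓ)) :
    periodicBump ψ ℓ x = 0 := by
  apply bump_apply_eq_zero
  rw [abs_div, abs_of_pos hℓ, le_div_iff₀ hℓ]
  exact (not_le.1 hx).le

lemma periodicBump_eq_bump_sub_div (hψ : ψ.rOut ≤ 1 / 2) (hℓ : 0 < ℓ) (hℓ₁ : ℓ ≤ 1) {k : ℤ} {x : ℝ}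
    (hx : |x - k| ≤ 1 - ψ.rOut) : periodicBump ψ ℓ x = ψ ((x - k) / ℓ) := by
  by_cases hround : round x = k
  · rw [periodicBump, hround]
  have hfar {y : ℝ} (hy : ψ.rOut ≤ |y|) : ψ (y / ℓ) = 0 := by
    apply bump_apply_eq_zero
    rw [abs_div, abs_of_pos hℓ, le_div_iff₀ hℓ]
    nlinarith [ψ.rOut_pos]
  have hdist : (1 : ℝ) ≤ |x - k| + |x - round x| := by
    calc (1 : ℝ) ≤ |(round x : ℝ) - k| := by
          exact_mod_cast Int.one_le_abs (sub_ne_zero.2 hround)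
      _ = |(x - k) - (x - round x)| := by congr 1; ring
      _ ≤ _ := abs_sub _ _
  rw [periodicBump, hfar (by linarith), hfar (by linarith [round_le x k])]

lemma periodicBump_eventuallyEq (hψ : ψ.rOut < 1 / 2) (hℓ : 0 < ℓ) (hℓ₁ : ℓ ≤ 1) (x : ℝ) :
    periodicBump ψ ℓ =ᶠ[nhds x] fun y => ψ ((y - round x) / ℓ) := by
  have hopen : IsOpen {y : ℝ | |y - round x| < 1 - ψ.rOut} :=
    isOpen_lt (by fun_prop) continuous_const
  have hmem : x ∈ {y : ℝ | |y - round x| < 1 - ψ.rOut} := by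
    change |x - round x| < 1 - ψ.rOut
    linarith [abs_sub_round x]
  filter_upwards [hopen.mem_nhds hmem] with y hy
  exact periodicBump_eq_bump_sub_div ψ hψ.le hℓ hℓ₁ hy.le

lemma contDiff_periodicBump (hψ : ψ.rOut < 1 / 2) (hℓ : 0 < ℓ) (hℓ₁ : ℓ ≤ 1) (n : ℕ) :
    ContDiff ℝ n (periodicBump ψ ℓ) := by
  refine contDiff_iff_contDiffAt.2 fun x => ?_
  have hsmooth : ContDiff ℝ n fun y => ψ ((y - round x) / ℓ) :=
    ψ.contDiff.comp ((contDiff_id.sub contDiff_const).div_const ℓ)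
  exact hsmooth.contDiffAt.congr_of_eventuallyEq (periodicBump_eventuallyEq ψ hψ hℓ hℓ₁ x)

lemma iteratedDeriv_periodicBump (hψ : ψ.rOut < 1 / 2) (hℓ : 0 < ℓ) (hℓ₁ : ℓ ≤ 1) (m : ℕ) (x : ℝ) :
    iteratedDeriv m (periodicBump ψ ℓ) x = ℓ⁻¹ ^ m * iteratedDeriv m ψ ((x - round x) / ℓ) := by
  rw [(periodicBump_eventuallyEq ψ hψ hℓ hℓ₁ x).iteratedDeriv_eq]
  simp only [div_eq_inv_mul]
  rw [iteratedDeriv_comp_sub_const (f := fun z => ψ (ℓ⁻¹ * z)),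
    iteratedDeriv_comp_const_mul ψ.contDiff]

lemma derivDominated_periodicBump {l : ℕ} {B : ℝ} (hB : ∀ m ≤ l, ∀ y, |iteratedDeriv m ψ y| ≤ B ^ m)
    (hψ : ψ.rOut < 1 / 2) (hℓ : 0 < ℓ) (hℓ₁ : ℓ ≤ 1) :
    DerivDominated l (B / ℓ) (periodicBump ψ ℓ) ((nearInt (ψ.rOut * ℓ)).indicator 1) where
  contDiff := contDiff_periodicBump ψ hψ hℓ hℓ₁ l
  abs_iteratedDeriv_le {m} hm x := by
    rw [iteratedDeriv_periodicBump ψ hψ hℓ hℓ₁, div_eq_mul_inv B, mul_pow]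
    by_cases hx : x ∈ nearInt (ψ.rOut * ℓ)
    · rw [Set.indicator_of_mem hx, Pi.one_apply, mul_one, mul_comm, abs_mul,
        abs_of_pos (by positivity : 0 < ℓ⁻¹ ^ m)]
      gcongr
      exact hB m hm _
    · have hfar : ψ.rOut < |(x - round x) / ℓ| := by
        rw [abs_div, abs_of_pos hℓ, lt_div_iff₀ hℓ]
        exact not_le.1 hx
      rw [iteratedDeriv_bump_eq_zero ψ m hfar, mul_zero, abs_zero, Set.indicator_of_notMem hx,
        mul_zero]

lemma integral_periodicBump (hψ : ψ.rOut < 1 / 2) (hℓ : 0 < ℓ) (hℓ₁ : ℓ ≤ 1) :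
    ∫ x in (0 : ℝ)..1, periodicBump ψ ℓ x = ℓ * ∫ x, ψ x := by
  have hcenter : ∫ x in (0 : ℝ)..1, periodicBump ψ ℓ x =
      ∫ x in (-(1 / 2) : ℝ)..(1 / 2), periodicBump ψ ℓ x := by
    have hshift := (periodic_periodicBump ψ ℓ).intervalIntegral_add_eq 0 (-(1 / 2))
    norm_num at hshift ⊢
    exact hshift
  have hbump : ∫ x in (-(1 / 2) : ℝ)..(1 / 2), periodicBump ψ ℓ x =
      ∫ x in (-(1 / 2) : ℝ)..(1 / 2), ψ (x / ℓ) := by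
    refine intervalIntegral.integral_congr fun x hx => ?_
    rw [Set.uIcc_of_le (by norm_num), Set.mem_Icc, ← abs_le] at hx
    simpa using periodicBump_eq_bump_sub_div ψ hψ.le hℓ hℓ₁ (k := 0) (x := x)
      (by rw [Int.cast_zero, sub_zero]; linarith)
  have hsupp : Function.support (fun x => ψ (x / ℓ)) ⊆ Set.Ioc (-(1 / 2)) (1 / 2) := by
    intro x hx
    have hlt : |x / ℓ| < ψ.rOut := by
      by_contra! hge
      exact hx (bump_apply_eq_zero ψ hge)
    rw [abs_div, abs_of_pos hℓ, div_lt_iff₀ hℓ] at hlt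
    have hx' := abs_lt.1 (hlt.trans (show ψ.rOut * ℓ < 1 / 2 by nlinarith [ψ.rOut_pos]))
    exact ⟨hx'.1, hx'.2.le⟩
  rw [hcenter, hbump, intervalIntegral.integral_eq_integral_of_support_subset hsupp,
    Measure.integral_comp_div ψ, abs_of_pos hℓ, smul_eq_mul]

lemma volume_real_closedBall_zero {r : ℝ} (hr : 0 ≤ r) :
    volume.real (Metric.closedBall (0 : ℝ) r) = 2 * r := by
  rw [measureReal_def, Real.volume_closedBall, ENNReal.toReal_ofReal (by positivity)]

lemma le_integral_periodicBump (hψ : ψ.rOut < 1 / 2) (hℓ : 0 < ℓ) (hℓ₁ : ℓ ≤ 1) :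
    2 * ψ.rIn * ℓ ≤ ∫ x in (0 : ℝ)..1, periodicBump ψ ℓ x := by
  have hle := ψ.measure_closedBall_le_integral volume
  rw [volume_real_closedBall_zero ψ.rIn_pos.le] at hle
  rw [integral_periodicBump ψ hψ hℓ hℓ₁]
  nlinarith

lemma integral_periodicBump_le (hψ : ψ.rOut < 1 / 2) (hℓ : 0 < ℓ) (hℓ₁ : ℓ ≤ 1) :
    ∫ x in (0 : ℝ)..1, periodicBump ψ ℓ x ≤ ℓ := by
  have hle := ψ.integral_le_measure_closedBall (μ := volume)
  rw [volume_real_closedBall_zero ψ.rOut_pos.le] at hle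
  rw [integral_periodicBump ψ hψ hℓ hℓ₁]
  nlinarith

end Bump

/-! ### Products with at most one nontrivial factor -/

lemma prod_eq_one_add_sum_sub_one {ι α : Type*} [CommRing α] {s : Finset ι} {a : ι → α}
    (ha : (s : Set ι).Pairwise fun i j => a i = 1 ∨ a j = 1) :
    ∏ i ∈ s, a i = 1 + ∑ i ∈ s, (a i - 1) := by
  by_cases hex : ∃ k ∈ s, a k ≠ 1
  · obtain ⟨k, hks, hk⟩ := hex
    have hother : ∀ i ∈ s, i ≠ k → a i = 1 := fun i hi hik => (ha hi hks hik).resolve_right hk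
    rw [Finset.prod_eq_single_of_mem k hks hother,
      Finset.sum_eq_single_of_mem k hks fun i hi hik => sub_eq_zero.2 (hother i hi hik)]
    ring
  · push Not at hex
    rw [Finset.prod_eq_one hex, Finset.sum_eq_zero fun i hi => sub_eq_zero.2 (hex i hi), add_zero]

@[to_additive]
lemma prod_eq_one_or_exists_prod_eq {ι α : Type*} [CommMonoid α] {s : Finset ι} {a : ι → α}
    (ha : (s : Set ι).Pairwise fun i j => a i = 1 ∨ a j = 1) :
    ∏ i ∈ s, a i = 1 ∨ ∃ k ∈ s, ∏ i ∈ s, a i = a k := by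
  by_cases hex : ∃ k ∈ s, a k ≠ 1
  · obtain ⟨k, hks, hk⟩ := hex
    exact Or.inr ⟨k, hks, Finset.prod_eq_single_of_mem k hks fun i hi hik =>
      (ha hi hks hik).resolve_right hk⟩
  · push Not at hex
    exact Or.inl (Finset.prod_eq_one hex)

/-! ### Orbit products, Wronskian sums and Riccati potentials -/

/-- The product of `f` along `n` steps of the rotation by `ω`. For `f > 0` these are the values of
a positive solution of the Schrödinger equation with potential `riccatiPotential ω f`. -/
noncomputable def orbitProd (ω : ℝ) (f : ℝ → ℝ) (n : ℕ) (x : ℝ) : ℝ :=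
  ∏ i ∈ Finset.range n, f (x + i * ω)

/-- The reduction-of-order sum `∑ 1 / (ψ i * ψ (i + 1))` of the solution `ψ i = orbitProd ω f i x`:
`ψ n` times this sum is the second solution, of Wronskian one with `ψ`. -/
noncomputable def wronskianSum (ω : ℝ) (f : ℝ → ℝ) (n : ℕ) (x : ℝ) : ℝ :=
  ∑ i ∈ Finset.range n, 1 / (orbitProd ω f i x * orbitProd ω f (i + 1) x)

/-- The potential whose Schrödinger equation is solved by the orbit products of `f`. -/
noncomputable def riccatiPotential (ω : ℝ) (f : ℝ → ℝ) (x : ℝ) : ℝ := f x + 1 / f (x - ω)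

section OrbitProd

variable {ω : ℝ} {f : ℝ → ℝ}

lemma orbitProd_zero (ω : ℝ) (f : ℝ → ℝ) (x : ℝ) : orbitProd ω f 0 x = 1 := Finset.prod_range_zero _

lemma orbitProd_succ (ω : ℝ) (f : ℝ → ℝ) (n : ℕ) (x : ℝ) :
    orbitProd ω f (n + 1) x = orbitProd ω f n x * f (x + n * ω) := Finset.prod_range_succ _ _

lemma wronskianSum_zero (ω : ℝ) (f : ℝ → ℝ) (x : ℝ) : wronskianSum ω f 0 x = 0 :=
  Finset.sum_range_zero _

lemma wronskianSum_succ (ω : ℝ) (f : ℝ → ℝ) (n : ℕ) (x : ℝ) :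
    wronskianSum ω f (n + 1) x =
      wronskianSum ω f n x + 1 / (orbitProd ω f n x * orbitProd ω f (n + 1) x) :=
  Finset.sum_range_succ _ _

lemma orbitProd_pos (hf : ∀ x, 0 < f x) (n : ℕ) (x : ℝ) : 0 < orbitProd ω f n x :=
  Finset.prod_pos fun _ _ => hf _

lemma wronskianSum_term_pos (hf : ∀ x, 0 < f x) (n : ℕ) (x : ℝ) :
    0 < 1 / (orbitProd ω f n x * orbitProd ω f (n + 1) x) :=
  one_div_pos.2 (mul_pos (orbitProd_pos hf _ _) (orbitProd_pos hf _ _))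

lemma wronskianSum_mono (hf : ∀ x, 0 < f x) {m n : ℕ} (hmn : m ≤ n) (x : ℝ) :
    wronskianSum ω f m x ≤ wronskianSum ω f n x :=
  Finset.sum_le_sum_of_subset_of_nonneg (Finset.range_mono hmn) fun _ _ _ =>
    (wronskianSum_term_pos hf _ _).le

lemma wronskianSum_nonneg (hf : ∀ x, 0 < f x) (n : ℕ) (x : ℝ) : 0 ≤ wronskianSum ω f n x :=
  Finset.sum_nonneg fun _ _ => (wronskianSum_term_pos hf _ _).le

lemma one_div_le_wronskianSum (hf : ∀ x, 0 < f x) {n : ℕ} (hn : 1 ≤ n) (x : ℝ) :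
    1 / f x ≤ wronskianSum ω f n x := by
  simpa [wronskianSum, orbitProd] using wronskianSum_mono (ω := ω) hf hn x

lemma wronskianSum_pos (hf : ∀ x, 0 < f x) {n : ℕ} (hn : 1 ≤ n) (x : ℝ) :
    0 < wronskianSum ω f n x :=
  (one_div_pos.2 (hf x)).trans_le (one_div_le_wronskianSum hf hn x)

lemma one_div_wronskianSum_le (hf : ∀ x, 0 < f x) {n : ℕ} (hn : 1 ≤ n) (x : ℝ) :
    1 / wronskianSum ω f n x ≤ f x := by
  simpa using one_div_le_one_div_of_le (one_div_pos.2 (hf x))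
    (one_div_le_wronskianSum (ω := ω) hf hn x)

lemma continuous_orbitProd (hf : Continuous f) (n : ℕ) : Continuous (orbitProd ω f n) := by
  unfold orbitProd
  fun_prop

lemma continuous_wronskianSum (hf : Continuous f) (hpos : ∀ x, 0 < f x) (n : ℕ) :
    Continuous (wronskianSum ω f n) :=
  continuous_finsetSum _ fun i _ => continuous_const.div
    ((continuous_orbitProd hf i).mul (continuous_orbitProd hf (i + 1)))
    fun x => (mul_pos (orbitProd_pos hpos _ x) (orbitProd_pos hpos _ x)).ne'

lemma contDiff_riccatiPotential {n : WithTop ℕ∞} (hf : ContDiff ℝ n f) (hpos : ∀ x, 0 < f x) :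
    ContDiff ℝ n (riccatiPotential ω f) :=
  hf.add (contDiff_const.div (hf.comp (contDiff_id.sub contDiff_const)) fun _ => (hpos _).ne')

lemma periodic_orbitProd {c : ℝ} (hf : Function.Periodic f c) (n : ℕ) :
    Function.Periodic (orbitProd ω f n) c := fun x =>
  Finset.prod_congr rfl fun i _ => hf.add_const (i * ω) x

lemma periodic_wronskianSum {c : ℝ} (hf : Function.Periodic f c) (n : ℕ) :
    Function.Periodic (wronskianSum ω f n) c := fun x =>
  Finset.sum_congr rfl fun i _ => by
    rw [periodic_orbitProd hf i x, periodic_orbitProd hf (i + 1) x]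

lemma periodic_riccatiPotential {c : ℝ} (hf : Function.Periodic f c) :
    Function.Periodic (riccatiPotential ω f) c := fun x => by
  have hshift : f (x + c - ω) = f (x - ω) := hf.sub_const ω x
  rw [riccatiPotential, riccatiPotential, hf x, hshift]

end OrbitProd

/-! ### Damping a positive solution -/

/-- The coefficient of the reduction-of-order correction, chosen so that `R` steps after `x` the
correction has multiplied the solution by `exp (-κ * χ x)`. -/
noncomputable def dampingCoeff (ω : ℝ) (f χ : ℝ → ℝ) (κ : ℝ) (R : ℕ) (x : ℝ) : ℝ :=
  (1 - Real.exp (-κ * χ x)) / wronskianSum ω f R x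

/-- The factor by which the solution started at `x` has been damped after `j ≤ R` steps: it
decreases from `1` to `exp (-κ * χ x)` and `orbitProd ω f j x * dampingFactor ω f χ κ R j x` solves
the same Schrödinger equation in between. -/
noncomputable def dampingFactor (ω : ℝ) (f χ : ℝ → ℝ) (κ : ℝ) (R j : ℕ) (x : ℝ) : ℝ :=
  1 - dampingCoeff ω f χ κ R x * wronskianSum ω f j x

/-- The ratio of consecutive values of the damped solution; the `k`-th factor accounts for the
damping started `k` steps before `x`. -/
noncomputable def dampedRatio (ω : ℝ) (f χ : ℝ → ℝ) (κ : ℝ) (R : ℕ) (x : ℝ) : ℝ :=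
  f x * ∏ k ∈ Finset.range R,
    (dampingFactor ω f χ κ R (k + 1) (x - k * ω) / dampingFactor ω f χ κ R k (x - k * ω))

/-- The total damping in progress just before `x`; it makes `dampedRatio` cohomologous to
`f * exp (-κ * χ)`. -/
noncomputable def dampingProfile (ω : ℝ) (f χ : ℝ → ℝ) (κ : ℝ) (R : ℕ) (x : ℝ) : ℝ :=
  ∏ k ∈ Finset.range R, dampingFactor ω f χ κ R (k + 1) (x - (k + 1) * ω)

/-- The hypotheses of one damping step: `f` is damped by `exp (-κ)` during `R` steps after each
visit to the support of `χ`, whose first `R` translates are disjoint from it. -/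
structure DampingData (ω : ℝ) (f χ : ℝ → ℝ) (κ : ℝ) (R : ℕ) : Prop where
  ratio_pos (x : ℝ) : 0 < f x
  one_le_length : 1 ≤ R
  strength_nonneg : 0 ≤ κ
  bump_nonneg (x : ℝ) : 0 ≤ χ x
  bump_le_one (x : ℝ) : χ x ≤ 1
  bump_eq_zero_or_add {j : ℕ} (hj : 1 ≤ j) (hjR : j ≤ R) (x : ℝ) : χ x = 0 ∨ χ (x + j * ω) = 0

section DampingFactor

variable {ω : ℝ} {f χ : ℝ → ℝ} {κ : ℝ} {R : ℕ}

lemma dampingFactor_zero (x : ℝ) : dampingFactor ω f χ κ R 0 x = 1 := by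
  rw [dampingFactor, wronskianSum_zero, mul_zero, sub_zero]

lemma dampingFactor_succ (j : ℕ) (x : ℝ) :
    dampingFactor ω f χ κ R (j + 1) x = dampingFactor ω f χ κ R j x -
      dampingCoeff ω f χ κ R x / (orbitProd ω f j x * orbitProd ω f (j + 1) x) := by
  rw [dampingFactor, dampingFactor, wronskianSum_succ]
  ring

lemma dampingCoeff_eq_zero {x : ℝ} (hx : χ x = 0) : dampingCoeff ω f χ κ R x = 0 := by
  rw [dampingCoeff, hx, mul_zero, Real.exp_zero, sub_self, zero_div]

lemma dampingFactor_eq_one {x : ℝ} (hx : χ x = 0) (j : ℕ) : dampingFactor ω f χ κ R j x = 1 := by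
  rw [dampingFactor, dampingCoeff_eq_zero hx, zero_mul, sub_zero]

lemma periodic_dampingFactor {c : ℝ} (hf : Function.Periodic f c) (hχ : Function.Periodic χ c)
    (j : ℕ) : Function.Periodic (dampingFactor ω f χ κ R j) c := fun x => by
  simp only [dampingFactor, dampingCoeff, periodic_wronskianSum hf _ x, hχ x]

lemma periodic_dampedRatio {c : ℝ} (hf : Function.Periodic f c) (hχ : Function.Periodic χ c) :
    Function.Periodic (dampedRatio ω f χ κ R) c := fun x => by
  have hshift (j k : ℕ) := (periodic_dampingFactor (ω := ω) (κ := κ) (R := R) hf hχ j).sub_const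
    (k * ω) x
  simp only [dampedRatio, hf x, hshift]

lemma periodic_dampingProfile {c : ℝ} (hf : Function.Periodic f c) (hχ : Function.Periodic χ c) :
    Function.Periodic (dampingProfile ω f χ κ R) c := fun x =>
  Finset.prod_congr rfl fun k _ => (periodic_dampingFactor hf hχ (k + 1)).sub_const ((k + 1) * ω) x

end DampingFactor

namespace DampingData

variable {ω : ℝ} {f χ : ℝ → ℝ} {κ : ℝ} {R : ℕ}

lemma exp_neg_mul_bump_le_one (h : DampingData ω f χ κ R) (x : ℝ) : Real.exp (-κ * χ x) ≤ 1 :=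
  Real.exp_le_one_iff.2 <| mul_nonpos_of_nonpos_of_nonneg (neg_nonpos.2 h.strength_nonneg)
    (h.bump_nonneg x)

lemma exp_neg_le_exp_neg_mul_bump (h : DampingData ω f χ κ R) (x : ℝ) :
    Real.exp (-κ) ≤ Real.exp (-κ * χ x) :=
  Real.exp_le_exp.2 <| by nlinarith [h.strength_nonneg, h.bump_le_one x]

lemma wronskianSum_length_pos (h : DampingData ω f χ κ R) (x : ℝ) : 0 < wronskianSum ω f R x :=
  wronskianSum_pos h.ratio_pos h.one_le_length x

lemma dampingCoeff_nonneg (h : DampingData ω f χ κ R) (x : ℝ) : 0 ≤ dampingCoeff ω f χ κ R x :=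
  div_nonneg (sub_nonneg.2 (h.exp_neg_mul_bump_le_one x)) (h.wronskianSum_length_pos x).le

lemma dampingFactor_length (h : DampingData ω f χ κ R) (x : ℝ) :
    dampingFactor ω f χ κ R R x = Real.exp (-κ * χ x) := by
  rw [dampingFactor, dampingCoeff, div_mul_cancel₀ _ (h.wronskianSum_length_pos x).ne',
    sub_sub_cancel]

lemma dampingFactor_anti (h : DampingData ω f χ κ R) {i j : ℕ} (hij : i ≤ j) (x : ℝ) :
    dampingFactor ω f χ κ R j x ≤ dampingFactor ω f χ κ R i x :=
  sub_le_sub_left (mul_le_mul_of_nonneg_left (wronskianSum_mono h.ratio_pos hij x)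
    (h.dampingCoeff_nonneg x)) 1

lemma dampingFactor_le_one (h : DampingData ω f χ κ R) (j : ℕ) (x : ℝ) :
    dampingFactor ω f χ κ R j x ≤ 1 :=
  (h.dampingFactor_anti (Nat.zero_le j) x).trans_eq (dampingFactor_zero x)

lemma exp_le_dampingFactor (h : DampingData ω f χ κ R) {j : ℕ} (hj : j ≤ R) (x : ℝ) :
    Real.exp (-κ * χ x) ≤ dampingFactor ω f χ κ R j x :=
  (h.dampingFactor_length x).symm.trans_le (h.dampingFactor_anti hj x)

lemma dampingFactor_pos (h : DampingData ω f χ κ R) {j : ℕ} (hj : j ≤ R) (x : ℝ) :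
    0 < dampingFactor ω f χ κ R j x :=
  (Real.exp_pos _).trans_le (h.exp_le_dampingFactor hj x)

lemma bump_add_eq_zero_or (h : DampingData ω f χ κ R) (x : ℝ) {i j : ℕ} (hi : i ≤ R) (hj : j ≤ R)
    (hij : i ≠ j) : χ (x + i * ω) = 0 ∨ χ (x + j * ω) = 0 := by
  wlog hlt : i < j generalizing i j
  · exact (this hj hi hij.symm (by omega)).symm
  have hshift := h.bump_eq_zero_or_add (j := j - i) (by omega) (by omega) (x + i * ω)
  rwa [Nat.cast_sub hlt.le, show x + i * ω + (j - i : ℝ) * ω = x + j * ω by ring] at hshift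

lemma bump_sub_eq_zero_or (h : DampingData ω f χ κ R) (x : ℝ) {i j : ℕ} (hi : i ≤ R) (hj : j ≤ R)
    (hij : i ≠ j) : χ (x - i * ω) = 0 ∨ χ (x - j * ω) = 0 := by
  have hshift := h.bump_add_eq_zero_or (x - R * ω) (Nat.sub_le R i) (Nat.sub_le R j) (by omega)
  rwa [Nat.cast_sub hi, Nat.cast_sub hj, show x - R * ω + (R - i : ℝ) * ω = x - i * ω by ring,
    show x - R * ω + (R - j : ℝ) * ω = x - j * ω by ring] at hshift

lemma dampedRatio_pos (h : DampingData ω f χ κ R) (x : ℝ) : 0 < dampedRatio ω f χ κ R x :=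
  mul_pos (h.ratio_pos x) <| Finset.prod_pos fun _ hk =>
    have hkR := Finset.mem_range.1 hk
    div_pos (h.dampingFactor_pos hkR _) (h.dampingFactor_pos hkR.le _)

lemma dampedRatio_le (h : DampingData ω f χ κ R) (x : ℝ) : dampedRatio ω f χ κ R x ≤ f x := by
  refine mul_le_of_le_one_right (h.ratio_pos x).le (Finset.prod_le_one ?_ ?_) <;> intro k hk <;>
    have hkR := Finset.mem_range.1 hk
  · exact div_nonneg (h.dampingFactor_pos hkR _).le (h.dampingFactor_pos hkR.le _).le
  · exact div_le_one_of_le₀ (h.dampingFactor_anti k.le_succ _) (h.dampingFactor_pos hkR.le _).le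

lemma dampedRatio_add (h : DampingData ω f χ κ R) {y : ℝ} (hy : χ y ≠ 0) {k : ℕ} (hk : k < R) :
    dampedRatio ω f χ κ R (y + k * ω) = f (y + k * ω) *
      (dampingFactor ω f χ κ R (k + 1) y / dampingFactor ω f χ κ R k y) := by
  rw [dampedRatio, Finset.prod_eq_single_of_mem k (Finset.mem_range.2 hk), add_sub_cancel_right]
  intro i hi hik
  have hzero : χ (y + k * ω - i * ω) = 0 :=
    (h.bump_sub_eq_zero_or (y + k * ω) (Finset.mem_range.1 hi).le hk.le hik).resolve_right
      (by rwa [add_sub_cancel_right])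
  rw [dampingFactor_eq_one hzero, dampingFactor_eq_one hzero, div_one]

lemma orbitProd_dampedRatio (h : DampingData ω f χ κ R) {y : ℝ} (hy : χ y ≠ 0) {j : ℕ}
    (hj : j ≤ R) : orbitProd ω (dampedRatio ω f χ κ R) j y =
      orbitProd ω f j y * dampingFactor ω f χ κ R j y := by
  induction j with
  | zero => rw [orbitProd_zero, orbitProd_zero, dampingFactor_zero, one_mul]
  | succ j ih =>
    rw [orbitProd_succ, orbitProd_succ, ih (by omega), h.dampedRatio_add hy (by omega)]
    have hfac := (h.dampingFactor_pos (by omega : j ≤ R) y).ne'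
    field_simp

lemma wronskianSum_dampedRatio (h : DampingData ω f χ κ R) {y : ℝ} (hy : χ y ≠ 0) {j : ℕ}
    (hj : j ≤ R) : wronskianSum ω (dampedRatio ω f χ κ R) j y =
      wronskianSum ω f j y / dampingFactor ω f χ κ R j y := by
  induction j with
  | zero => rw [wronskianSum_zero, wronskianSum_zero, zero_div]
  | succ j ih =>
    have hfac := (h.dampingFactor_pos (by omega : j ≤ R) y).ne'
    have hfac' := (h.dampingFactor_pos (by omega : j + 1 ≤ R) y).ne'
    have hcross : wronskianSum ω f (j + 1) y * dampingFactor ω f χ κ R j y -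
        wronskianSum ω f j y * dampingFactor ω f χ κ R (j + 1) y =
          1 / (orbitProd ω f j y * orbitProd ω f (j + 1) y) := by
      rw [dampingFactor, dampingFactor, wronskianSum_succ]
      ring
    rw [wronskianSum_succ, ih (by omega), h.orbitProd_dampedRatio hy (by omega),
      h.orbitProd_dampedRatio hy hj, mul_mul_mul_comm, ← one_div_mul_one_div, ← hcross]
    field_simp
    ring

lemma wronskianSum_dampedRatio_of_bump_eq_one (h : DampingData ω f χ κ R) {y : ℝ} (hy : χ y = 1) :
    wronskianSum ω (dampedRatio ω f χ κ R) R y = Real.exp κ * wronskianSum ω f R y := by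
  rw [h.wronskianSum_dampedRatio (hy.trans_ne one_ne_zero) le_rfl, h.dampingFactor_length, hy,
    mul_one, Real.exp_neg, div_inv_eq_mul, mul_comm]

lemma dampedRatio_mul_dampingProfile (h : DampingData ω f χ κ R) (x : ℝ) :
    dampedRatio ω f χ κ R x * dampingProfile ω f χ κ R x =
      f x * Real.exp (-κ * χ (x - R * ω)) * dampingProfile ω f χ κ R (x + ω) := by
  set D := ∏ k ∈ Finset.range R, dampingFactor ω f χ κ R k (x - k * ω) with hD
  have hD_ne : D ≠ 0 :=
    Finset.prod_ne_zero_iff.2 fun k hk => (h.dampingFactor_pos (Finset.mem_range.1 hk).le _).ne'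
  have hnext : dampingProfile ω f χ κ R (x + ω) =
      ∏ k ∈ Finset.range R, dampingFactor ω f χ κ R (k + 1) (x - k * ω) :=
    Finset.prod_congr rfl fun k _ => by ring_nf
  have hprofile : dampingProfile ω f χ κ R x = D * Real.exp (-κ * χ (x - R * ω)) := by
    rw [← h.dampingFactor_length, hD,
      ← Finset.prod_range_succ (fun k : ℕ => dampingFactor ω f χ κ R k (x - k * ω)),
      Finset.prod_range_succ', dampingFactor_zero, mul_one]
    exact Finset.prod_congr rfl fun k _ => by push_cast; rfl
  rw [dampedRatio, Finset.prod_div_distrib, ← hD, ← hnext, hprofile]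
  field_simp

lemma dampingProfile_le_one (h : DampingData ω f χ κ R) (x : ℝ) : dampingProfile ω f χ κ R x ≤ 1 :=
  Finset.prod_le_one (fun _ hk => (h.dampingFactor_pos (Finset.mem_range.1 hk) _).le)
    fun _ _ => h.dampingFactor_le_one _ _

lemma exp_neg_le_dampingProfile (h : DampingData ω f χ κ R) (x : ℝ) :
    Real.exp (-κ) ≤ dampingProfile ω f χ κ R x := by
  have hpair : (Finset.range R : Set ℕ).Pairwise fun i j =>
      dampingFactor ω f χ κ R (i + 1) (x - (i + 1) * ω) = 1 ∨
        dampingFactor ω f χ κ R (j + 1) (x - (j + 1) * ω) = 1 := by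
    intro i hi j hj hij
    have hzero := h.bump_sub_eq_zero_or x (i := i + 1) (j := j + 1)
      (Finset.mem_range.1 hi) (Finset.mem_range.1 hj) (by omega)
    push_cast at hzero
    exact hzero.imp (dampingFactor_eq_one · _) (dampingFactor_eq_one · _)
  rcases prod_eq_one_or_exists_prod_eq hpair with hone | ⟨k, hk, hprod⟩
  · rw [dampingProfile, hone]
    exact Real.exp_le_one_iff.2 (neg_nonpos.2 h.strength_nonneg)
  · rw [dampingProfile, hprod]
    exact (h.exp_neg_le_exp_neg_mul_bump _).trans
      (h.exp_le_dampingFactor (Finset.mem_range.1 hk) _)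

lemma dampingProfile_pos (h : DampingData ω f χ κ R) (x : ℝ) : 0 < dampingProfile ω f χ κ R x :=
  (Real.exp_pos _).trans_le (h.exp_neg_le_dampingProfile x)

end DampingData

/-- The change of the potential produced `k` steps after a damping starts at `x`; consecutive
changes cancel, so that only the first and the last of them survive. -/
noncomputable def dampingFlux (ω : ℝ) (f χ : ℝ → ℝ) (κ : ℝ) (R k : ℕ) (x : ℝ) : ℝ :=
  dampingCoeff ω f χ κ R x / (orbitProd ω f k x ^ 2 * dampingFactor ω f χ κ R k x)

namespace DampingData

variable {ω : ℝ} {f χ : ℝ → ℝ} {κ : ℝ} {R : ℕ}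

lemma dampedRatio_sub (h : DampingData ω f χ κ R) (x : ℝ) :
    dampedRatio ω f χ κ R x - f x = -∑ k ∈ Finset.range R, dampingFlux ω f χ κ R k (x - k * ω) := by
  have hpair : (Finset.range R : Set ℕ).Pairwise fun i j =>
      dampingFactor ω f χ κ R (i + 1) (x - i * ω) / dampingFactor ω f χ κ R i (x - i * ω) = 1 ∨
        dampingFactor ω f χ κ R (j + 1) (x - j * ω) /
          dampingFactor ω f χ κ R j (x - j * ω) = 1 := by
    intro i hi j hj hij
    refine (h.bump_sub_eq_zero_or x (Finset.mem_range.1 hi).le (Finset.mem_range.1 hj).le hij).imp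
      ?_ ?_ <;> exact fun hzero => by simp only [dampingFactor_eq_one hzero, div_one]
  rw [dampedRatio, prod_eq_one_add_sum_sub_one hpair, mul_add, mul_one, add_sub_cancel_left,
    Finset.mul_sum, ← Finset.sum_neg_distrib]
  refine Finset.sum_congr rfl fun k hk => ?_
  have hfac := (h.dampingFactor_pos (Finset.mem_range.1 hk).le (x - k * ω)).ne'
  have hprod := (orbitProd_pos (ω := ω) h.ratio_pos k (x - k * ω)).ne'
  have hf := (h.ratio_pos x).ne'
  rw [dampingFlux, dampingFactor_succ, orbitProd_succ, sub_add_cancel]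
  field_simp
  ring

lemma one_div_dampedRatio_sub (h : DampingData ω f χ κ R) (x : ℝ) :
    1 / dampedRatio ω f χ κ R (x - ω) - 1 / f (x - ω) =
      ∑ k ∈ Finset.range R, dampingFlux ω f χ κ R (k + 1) (x - ((k + 1 : ℕ) : ℝ) * ω) := by
  have hshift (k : ℕ) : x - ω - k * ω = x - ((k + 1 : ℕ) : ℝ) * ω := by push_cast; ring
  have hpair : (Finset.range R : Set ℕ).Pairwise fun i j =>
      dampingFactor ω f χ κ R i (x - ω - i * ω) /
          dampingFactor ω f χ κ R (i + 1) (x - ω - i * ω) = 1 ∨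
        dampingFactor ω f χ κ R j (x - ω - j * ω) /
          dampingFactor ω f χ κ R (j + 1) (x - ω - j * ω) = 1 := by
    intro i hi j hj hij
    refine (h.bump_sub_eq_zero_or (x - ω) (Finset.mem_range.1 hi).le (Finset.mem_range.1 hj).le
      hij).imp ?_ ?_ <;> exact fun hzero => by simp only [dampingFactor_eq_one hzero, div_one]
  rw [dampedRatio, ← one_div_mul_one_div, one_div (∏ _ ∈ _, _), ← Finset.prod_inv_distrib]
  simp only [inv_div]
  rw [prod_eq_one_add_sum_sub_one hpair, mul_add, mul_one, add_sub_cancel_left, Finset.mul_sum]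
  refine Finset.sum_congr rfl fun k hk => ?_
  have hfac : dampingFactor ω f χ κ R (k + 1) (x - ω - k * ω) ≠ 0 :=
    (h.dampingFactor_pos (Finset.mem_range.1 hk) _).ne'
  have hf := (h.ratio_pos (x - ω)).ne'
  rw [dampingFlux, ← hshift, eq_add_of_sub_eq (dampingFactor_succ k (x - ω - k * ω)).symm,
    orbitProd_succ, sub_add_cancel]
  generalize dampingFactor ω f χ κ R (k + 1) (x - ω - k * ω) = t at hfac ⊢
  field_simp
  ring

lemma riccatiPotential_dampedRatio_sub (h : DampingData ω f χ κ R) (x : ℝ) :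
    riccatiPotential ω (dampedRatio ω f χ κ R) x - riccatiPotential ω f x =
      dampingFlux ω f χ κ R R (x - R * ω) - dampingFlux ω f χ κ R 0 x := by
  have htelescope := Finset.sum_range_sub
    (fun k : ℕ => dampingFlux ω f χ κ R k (x - k * ω)) R
  rw [Finset.sum_sub_distrib, ← h.one_div_dampedRatio_sub, Nat.cast_zero, zero_mul,
    sub_zero] at htelescope
  rw [riccatiPotential, riccatiPotential, ← htelescope]
  linarith [h.dampedRatio_sub x]

lemma sum_bump_le_one (h : DampingData ω f χ κ R) {n : ℕ} (hn : n ≤ R + 1) (x : ℝ) :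
    ∑ i ∈ Finset.range n, χ (x + i * ω) ≤ 1 := by
  have hpair : (Finset.range n : Set ℕ).Pairwise fun i j =>
      χ (x + i * ω) = 0 ∨ χ (x + j * ω) = 0 := fun i hi j hj hij =>
    have hi := Finset.mem_range.1 hi
    have hj := Finset.mem_range.1 hj
    h.bump_add_eq_zero_or x (by omega) (by omega) hij
  rcases sum_eq_zero_or_exists_sum_eq hpair with hzero | ⟨k, -, hsum⟩
  · exact hzero.trans_le zero_le_one
  · exact hsum.trans_le (h.bump_le_one _)

lemma sum_bump_le (h : DampingData ω f χ κ R) (n : ℕ) (x : ℝ) :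
    ∑ i ∈ Finset.range n, χ (x + i * ω) ≤ n / (R + 1) + 1 := by
  induction n using Nat.strong_induction_on generalizing x with
  | _ n ih =>
  rcases Nat.lt_or_ge n (R + 1) with hn | hn
  · have : (0 : ℝ) ≤ n / (R + 1) := by positivity
    linarith [h.sum_bump_le_one hn.le x]
  · obtain ⟨d, rfl⟩ := Nat.exists_eq_add_of_le' hn
    have hblock : ∑ i ∈ Finset.range (R + 1), χ (x + ((d + i : ℕ) : ℝ) * ω) ≤ 1 := by
      convert h.sum_bump_le_one le_rfl (x + d * ω) using 3
      push_cast
      ring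
    have hcast : ((d + (R + 1) : ℕ) : ℝ) / (R + 1) = d / (R + 1) + 1 := by
      have : (R : ℝ) + 1 ≠ 0 := by positivity
      push_cast
      field_simp
    rw [Finset.sum_range_add, hcast]
    linarith [ih d (by omega) x]

lemma orbitProd_dampedRatio_mul_dampingProfile (h : DampingData ω f χ κ R) (n : ℕ) (x : ℝ) :
    orbitProd ω (dampedRatio ω f χ κ R) n x * dampingProfile ω f χ κ R x =
      orbitProd ω f n x * Real.exp (-κ * ∑ i ∈ Finset.range n, χ (x - R * ω + i * ω)) *
        dampingProfile ω f χ κ R (x + n * ω) := by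
  induction n with
  | zero => simp [orbitProd_zero]
  | succ n ih =>
    have hrel := h.dampedRatio_mul_dampingProfile (x + n * ω)
    rw [show x + n * ω - R * ω = x - R * ω + n * ω by ring,
      show x + n * ω + ω = x + ((n + 1 : ℕ) : ℝ) * ω by push_cast; ring] at hrel
    rw [orbitProd_succ, orbitProd_succ, Finset.sum_range_succ, mul_add, Real.exp_add]
    linear_combination dampedRatio ω f χ κ R (x + n * ω) * ih +
      orbitProd ω f n x * Real.exp (-κ * ∑ i ∈ Finset.range n, χ (x - R * ω + i * ω)) * hrel

lemma exp_le_orbitProd_dampedRatio (h : DampingData ω f χ κ R) {γ a : ℝ}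
    (hgrowth : ∀ (n : ℕ) (x : ℝ), Real.exp (γ * n - a) ≤ orbitProd ω f n x) (n : ℕ) (x : ℝ) :
    Real.exp ((γ - κ / (R + 1)) * n - (a + 2 * κ)) ≤ orbitProd ω (dampedRatio ω f χ κ R) n x := by
  have hcount : -κ * (n / (R + 1) + 1) ≤ -κ * ∑ i ∈ Finset.range n, χ (x - R * ω + i * ω) :=
    mul_le_mul_of_nonpos_left (h.sum_bump_le n _) (neg_nonpos.2 h.strength_nonneg)
  calc Real.exp ((γ - κ / (R + 1)) * n - (a + 2 * κ))
      = Real.exp (γ * n - a) * Real.exp (-κ * (n / (R + 1) + 1)) * Real.exp (-κ) := by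
        rw [← Real.exp_add, ← Real.exp_add]
        ring_nf
    _ ≤ orbitProd ω f n x * Real.exp (-κ * ∑ i ∈ Finset.range n, χ (x - R * ω + i * ω)) *
          dampingProfile ω f χ κ R (x + n * ω) := by
        have := orbitProd_pos (ω := ω) h.ratio_pos n x
        gcongr
        exacts [hgrowth n x, h.exp_neg_le_dampingProfile _]
    _ = orbitProd ω (dampedRatio ω f χ κ R) n x * dampingProfile ω f χ κ R x :=
        (h.orbitProd_dampedRatio_mul_dampingProfile n x).symm
    _ ≤ orbitProd ω (dampedRatio ω f χ κ R) n x :=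
        mul_le_of_le_one_right (orbitProd_pos h.dampedRatio_pos n x).le (h.dampingProfile_le_one x)

lemma continuous_dampingFactor (h : DampingData ω f χ κ R) (hf : Continuous f) (hχ : Continuous χ)
    (j : ℕ) : Continuous (dampingFactor ω f χ κ R j) :=
  continuous_const.sub <| Continuous.mul
    (Continuous.div (by fun_prop) (continuous_wronskianSum hf h.ratio_pos R)
      fun x => (h.wronskianSum_length_pos x).ne')
    (continuous_wronskianSum hf h.ratio_pos j)

lemma continuous_dampingProfile (h : DampingData ω f χ κ R) (hf : Continuous f)
    (hχ : Continuous χ) : Continuous (dampingProfile ω f χ κ R) :=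
  continuous_finsetProd _ fun _ _ => (h.continuous_dampingFactor hf hχ _).comp (by fun_prop)

lemma log_dampedRatio (h : DampingData ω f χ κ R) (x : ℝ) :
    Real.log (dampedRatio ω f χ κ R x) = Real.log (f x) - κ * χ (x - R * ω) +
      (Real.log (dampingProfile ω f χ κ R (x + ω)) - Real.log (dampingProfile ω f χ κ R x)) := by
  have hlog := congrArg Real.log (h.dampedRatio_mul_dampingProfile x)
  rw [Real.log_mul (h.dampedRatio_pos x).ne' (h.dampingProfile_pos x).ne',
    Real.log_mul (mul_pos (h.ratio_pos x) (Real.exp_pos _)).ne' (h.dampingProfile_pos _).ne',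
    Real.log_mul (h.ratio_pos x).ne' (Real.exp_pos _).ne', Real.log_exp] at hlog
  linarith

end DampingData

lemma intervalIntegral_comp_add_of_periodic {E : Type*} [NormedAddCommGroup E] [NormedSpace ℝ E]
    {g : ℝ → E} {T : ℝ} (hg : Function.Periodic g T) (c : ℝ) :
    ∫ x in (0 : ℝ)..T, g (x + c) = ∫ x in (0 : ℝ)..T, g x := by
  rw [intervalIntegral.integral_comp_add_right (fun x => g x), zero_add, add_comm T]
  simpa only [zero_add] using hg.intervalIntegral_add_eq c 0

lemma DampingData.integral_log_dampedRatio {ω : ℝ} {f χ : ℝ → ℝ} {κ : ℝ} {R : ℕ}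
    (h : DampingData ω f χ κ R) (hf : Continuous f) (hχ : Continuous χ)
    (hfp : Function.Periodic f 1) (hχp : Function.Periodic χ 1) :
    ∫ x in (0 : ℝ)..1, Real.log (dampedRatio ω f χ κ R x) =
      (∫ x in (0 : ℝ)..1, Real.log (f x)) - κ * ∫ x in (0 : ℝ)..1, χ x := by
  have hprofile : Continuous fun x => Real.log (dampingProfile ω f χ κ R x) :=
    (h.continuous_dampingProfile hf hχ).log fun x => (h.dampingProfile_pos x).ne'
  have hshifted : Continuous fun x => Real.log (dampingProfile ω f χ κ R (x + ω)) :=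
    hprofile.comp (continuous_id.add continuous_const)
  have hlog : Continuous fun x => Real.log (f x) := hf.log fun x => (h.ratio_pos x).ne'
  have hperiodic : Function.Periodic (fun x => Real.log (dampingProfile ω f χ κ R x)) 1 :=
    (periodic_dampingProfile hfp hχp).comp Real.log
  simp_rw [h.log_dampedRatio, sub_eq_add_neg _ ((R : ℝ) * ω)]
  rw [intervalIntegral.integral_add, intervalIntegral.integral_sub, intervalIntegral.integral_sub,
    intervalIntegral.integral_const_mul, intervalIntegral_comp_add_of_periodic hχp,
    intervalIntegral_comp_add_of_periodic hperiodic, sub_self, add_zero]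
  all_goals exact Continuous.intervalIntegrable (by fun_prop) _ _

section DerivDominatedOrbit

variable {ω C : ℝ} {f : ℝ → ℝ} {l R : ℕ}

lemma derivDominated_orbitProd (h : DerivDominated l C f f) (hC : 0 ≤ C) (n : ℕ) :
    DerivDominated l (n * C) (orbitProd ω f n) (orbitProd ω f n) := by
  have hprod := DerivDominated.prod (s := Finset.range n) hC fun i _ => h.comp_add_const (i * ω)
  rwa [Finset.card_range] at hprod

lemma derivDominated_wronskianSum_term (h : DerivDominated l C f f) (hC : 0 ≤ C)
    (hpos : ∀ x, 0 < f x) {i : ℕ} (hi : i < R) : DerivDominated l (2 ^ l * (2 * R * C))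
      (fun x => 1 / (orbitProd ω f i x * orbitProd ω f (i + 1) x))
      (fun x => 1 / (orbitProd ω f i x * orbitProd ω f (i + 1) x)) := by
  have hiR : (i : ℝ) + 1 ≤ R := by exact_mod_cast hi
  refine (((derivDominated_orbitProd h hC i).mul (derivDominated_orbitProd h hC (i + 1))
    (by positivity)).mono_const (by positivity) ?_).one_div (by positivity) fun x =>
      mul_pos (orbitProd_pos hpos i x) (orbitProd_pos hpos (i + 1) x)
  push_cast
  nlinarith

lemma derivDominated_one_div_wronskianSum (h : DerivDominated l C f f) (hC : 0 ≤ C)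
    (hpos : ∀ x, 0 < f x) (hR : 1 ≤ R) : DerivDominated l (2 ^ l * (2 ^ l * (2 * R * C)))
      (fun x => 1 / wronskianSum ω f R x) (fun x => 1 / wronskianSum ω f R x) :=
  (DerivDominated.sum (by positivity) fun _ hi =>
    derivDominated_wronskianSum_term h hC hpos (Finset.mem_range.1 hi)).one_div
      (by positivity) fun x => wronskianSum_pos hpos hR x

lemma derivDominated_one_sub_wronskianSum_div (h : DerivDominated l C f f) (hC : 0 ≤ C)
    (hpos : ∀ x, 0 < f x) {j : ℕ} (hR : 1 ≤ R) (hj : j ≤ R) :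
    DerivDominated l (2 ^ l * (2 * R * C) + 2 ^ l * (2 ^ l * (2 * R * C)))
      (fun x => 1 - wronskianSum ω f j x / wronskianSum ω f R x)
      (fun x => 1 - wronskianSum ω f j x / wronskianSum ω f R x) := by
  have htail := DerivDominated.sum (s := Finset.Ico j R) (by positivity) fun i hi =>
    derivDominated_wronskianSum_term h (ω := ω) hC hpos (Finset.mem_Ico.1 hi).2
  have heq (x : ℝ) : (∑ i ∈ Finset.Ico j R, 1 / (orbitProd ω f i x *
      orbitProd ω f (i + 1) x)) * (1 / wronskianSum ω f R x) =
        1 - wronskianSum ω f j x / wronskianSum ω f R x := by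
    have := (wronskianSum_pos (ω := ω) hpos hR x).ne'
    rw [Finset.sum_Ico_eq_sub _ hj, ← wronskianSum, ← wronskianSum]
    field_simp
  simpa only [heq] using htail.mul
    (derivDominated_one_div_wronskianSum (ω := ω) h hC hpos hR) (by positivity)

end DerivDominatedOrbit

namespace DampingData

variable {ω κ C c : ℝ} {f χ : ℝ → ℝ} {s : Set ℝ} {l R : ℕ}

lemma derivDominated_dampingFactor (h : DampingData ω f χ κ R) (hC : 0 ≤ C)
    (hf : DerivDominated l C f f) (hc : 0 ≤ c) (hχ : DerivDominated l c χ (s.indicator 1)) {j : ℕ}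
    (hj : j ≤ R) :
    DerivDominated l
      (3 * (2 ^ l * c * (1 + κ) + (2 ^ l * (2 * R * C) + 2 ^ l * (2 ^ l * (2 * R * C)))))
      (dampingFactor ω f χ κ R j) (dampingFactor ω f χ κ R j) := by
  have hκ := h.strength_nonneg
  have heq (x : ℝ) : Real.exp (-κ * χ x) + (1 - Real.exp (-κ * χ x)) *
      (1 - wronskianSum ω f j x / wronskianSum ω f R x) = dampingFactor ω f χ κ R j x := by
    rw [dampingFactor, dampingCoeff]
    ring
  simpa only [heq] using (hχ.exp_neg_mul hc hκ (Set.indicator_le_self' fun _ _ => zero_le_one)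
    ).add_one_sub_mul
    (derivDominated_one_sub_wronskianSum_div hf hC h.ratio_pos h.one_le_length hj) (by positivity)
    (by positivity) h.exp_neg_mul_bump_le_one fun x => sub_le_self _ <|
      div_nonneg (wronskianSum_nonneg h.ratio_pos j x) (h.wronskianSum_length_pos x).le

lemma derivDominated_dampedRatio (h : DampingData ω f χ κ R) (hC : 0 ≤ C)
    (hf : DerivDominated l C f f) (hc : 0 ≤ c) (hχ : DerivDominated l c χ (s.indicator 1)) :
    DerivDominated l (C + R * ((1 + 2 ^ l) *
        (3 * (2 ^ l * c * (1 + κ) + (2 ^ l * (2 * R * C) + 2 ^ l * (2 ^ l * (2 * R * C)))))))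
      (dampedRatio ω f χ κ R) (dampedRatio ω f χ κ R) := by
  have hκ := h.strength_nonneg
  set T := 3 * (2 ^ l * c * (1 + κ) + (2 ^ l * (2 * R * C) + 2 ^ l * (2 ^ l * (2 * R * C))))
  have hT : 0 ≤ T := by positivity
  have hquot (k : ℕ) (hk : k ∈ Finset.range R) : DerivDominated l ((1 + 2 ^ l) * T)
      (fun x => dampingFactor ω f χ κ R (k + 1) (x - k * ω) / dampingFactor ω f χ κ R k (x - k * ω))
      fun x => dampingFactor ω f χ κ R (k + 1) (x - k * ω) /
        dampingFactor ω f χ κ R k (x - k * ω) := by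
    have hk := Finset.mem_range.1 hk
    have hinv := (h.derivDominated_dampingFactor hC hf hc hχ hk.le).one_div hT
      (h.dampingFactor_pos hk.le)
    have hmul := ((h.derivDominated_dampingFactor hC hf hc hχ hk).mul hinv hT).comp_add_const
      (-(k * ω))
    simpa only [mul_one_div, ← sub_eq_add_neg, one_add_mul] using hmul
  have hprod := DerivDominated.prod (by positivity) hquot
  rw [Finset.card_range] at hprod
  exact hf.mul hprod hC

lemma derivDominated_dampingCoeff (h : DampingData ω f χ κ R) (hC : 0 ≤ C)
    (hf : DerivDominated l C f f) (hc : 0 ≤ c) (hχ : DerivDominated l c χ (s.indicator 1)) :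
    DerivDominated l (2 ^ l * c * (1 + κ) + 2 ^ l * (2 ^ l * (2 * R * C)))
      (dampingCoeff ω f χ κ R) (fun x => s.indicator 1 x * (1 / wronskianSum ω f R x)) := by
  have hκ := h.strength_nonneg
  simpa only [mul_one_div] using! (hχ.one_sub_exp_neg_mul hc hκ h.bump_nonneg).mul
    (derivDominated_one_div_wronskianSum hf hC h.ratio_pos h.one_le_length) (by positivity)

lemma derivDominated_riccatiPotential_dampedRatio_sub (h : DampingData ω f χ κ R) (hC : 0 ≤ C)
    (hf : DerivDominated l C f f) (hc : 0 ≤ c) (hχ : DerivDominated l c χ (s.indicator 1)) :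
    DerivDominated l ((1 + 2 ^ l) * (2 ^ l * c * (1 + κ) + 2 ^ l * (2 * R * C)))
      (fun x => riccatiPotential ω (dampedRatio ω f χ κ R) x - riccatiPotential ω f x)
      (fun x => s.indicator 1 x * (1 / wronskianSum ω f R x) +
        s.indicator 1 (x - R * ω) * (1 / wronskianSum ω f R (x - R * ω)) *
          (1 / (orbitProd ω f R (x - R * ω) * orbitProd ω f R (x - R * ω)) *
            (1 / Real.exp (-κ * χ (x - R * ω))))) := by
  have hκ := h.strength_nonneg
  have hcoeff := h.derivDominated_dampingCoeff hC hf hc hχ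
  have hP := derivDominated_orbitProd hf (ω := ω) hC R
  have hsq := (hP.mul hP (by positivity)).one_div (by positivity) fun x =>
    mul_pos (orbitProd_pos h.ratio_pos _ _) (orbitProd_pos h.ratio_pos _ _)
  have hexp := (hχ.exp_neg_mul hc hκ (Set.indicator_le_self' fun _ _ => zero_le_one)).one_div
    (by positivity) fun x => Real.exp_pos _
  have hlast := (hcoeff.mul (hsq.mul hexp (by positivity)) (by positivity)).comp_add_const
    (-(R * ω))
  have hc₁ : 0 ≤ 2 ^ l * (2 ^ l * c * (1 + κ)) := by positivity
  have hc₂ : 0 ≤ 2 ^ l * (2 * R * C) := by positivity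
  have hsum := (hcoeff.mono_const (by positivity) (by linarith)).neg.add
    (hlast.mono_const (C' := (1 + 2 ^ l) * (2 ^ l * c * (1 + κ) + 2 ^ l * (2 * R * C)))
      (by positivity) (by linarith))
  simp only [← sub_eq_add_neg] at hsum
  convert hsum using 2 with x
  rw [h.riccatiPotential_dampedRatio_sub, dampingFlux, dampingFlux, h.dampingFactor_length,
    dampingFactor_zero, orbitProd_zero]
  ring

end DampingData

/-- A common derivative constant for a damped ratio and for the change of its potential, in terms of
the constants of the ratio (`C`) and of the bump function (`B`). -/
noncomputable def dampedDerivConst (l R : ℕ) (B κ C : ℝ) : ℝ :=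
  100 * (2 ^ l) ^ 3 * B * R ^ 2 * (1 + κ + C)

section DampedDerivConst

variable {l R : ℕ} {B κ C ℓ : ℝ}

lemma one_le_dampedDerivConst (hB : 1 ≤ B) (hR : 1 ≤ R) (hκ : 0 ≤ κ) (hC : 0 ≤ C) :
    1 ≤ dampedDerivConst l R B κ C := by
  have hR' : (1 : ℝ) ≤ R := by exact_mod_cast hR
  have hL : (1 : ℝ) ≤ 2 ^ l := one_le_pow₀ one_le_two
  have hhundred : 1 ≤ (100 : ℝ) * (2 ^ l) ^ 3 := by linarith [one_le_pow₀ hL (n := 3)]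
  exact one_le_mul_of_one_le_of_one_le (one_le_mul_of_one_le_of_one_le
    (one_le_mul_of_one_le_of_one_le hhundred hB) (one_le_pow₀ hR')) (by linarith)

lemma bump_add_ratio_const_le (hB : 1 ≤ B) (hR : 1 ≤ R) (hκ : 0 ≤ κ) (hC : 0 ≤ C) (hℓ : 0 < ℓ)
    (hRℓ : 1 / 2 ≤ (R + 1) * ℓ) :
    2 ^ l * (B / ℓ) * (1 + κ) + (2 ^ l * (2 * R * C) + 2 ^ l * (2 ^ l * (2 * R * C))) ≤
      8 * (2 ^ l) ^ 2 * B * R * (1 + κ + C) := by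
  have hR' : (1 : ℝ) ≤ R := by exact_mod_cast hR
  have hL : (1 : ℝ) ≤ 2 ^ l := one_le_pow₀ one_le_two
  generalize (2 : ℝ) ^ l = L at hL ⊢
  have hbump : B / ℓ ≤ 4 * B * R := by
    rw [div_le_iff₀ hℓ]
    nlinarith [mul_nonneg (sub_nonneg.2 hR') hℓ.le]
  have hLL : L ≤ L ^ 2 := le_self_pow₀ hL two_ne_zero
  calc L * (B / ℓ) * (1 + κ) + (L * (2 * R * C) + L * (L * (2 * R * C)))
      = L * (B / ℓ) * (1 + κ) + (2 * L * R * C + 2 * L ^ 2 * R * C) := by ring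
    _ ≤ L ^ 2 * (4 * B * R) * (1 + κ) + (2 * L ^ 2 * R * C + 2 * L ^ 2 * R * C) := by gcongr
    _ = 4 * L ^ 2 * B * R * (1 + κ) + 1 * (4 * L ^ 2 * R * C) := by ring
    _ ≤ 8 * L ^ 2 * B * R * (1 + κ) + B * (8 * L ^ 2 * R * C) := by gcongr <;> norm_num
    _ = 8 * L ^ 2 * B * R * (1 + κ + C) := by ring

lemma ratio_const_le_dampedDerivConst (hB : 1 ≤ B) (hR : 1 ≤ R) (hκ : 0 ≤ κ) (hC : 0 ≤ C)
    (hℓ : 0 < ℓ) (hRℓ : 1 / 2 ≤ (R + 1) * ℓ) :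
    C + R * ((1 + 2 ^ l) * (3 * (2 ^ l * (B / ℓ) * (1 + κ) +
      (2 ^ l * (2 * R * C) + 2 ^ l * (2 ^ l * (2 * R * C)))))) ≤ dampedDerivConst l R B κ C := by
  have hL : (1 : ℝ) ≤ 2 ^ l := one_le_pow₀ one_le_two
  have hC' : C ≤ (2 ^ l) ^ 3 * B * R ^ 2 * (1 + κ + C) := by
    have hR' : (1 : ℝ) ≤ R := by exact_mod_cast hR
    have hprefactor : 1 ≤ (2 ^ l) ^ 3 * B * (R : ℝ) ^ 2 := one_le_mul_of_one_le_of_one_le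
      (one_le_mul_of_one_le_of_one_le (one_le_pow₀ hL) hB) (one_le_pow₀ hR')
    nlinarith
  calc _ ≤ (2 ^ l) ^ 3 * B * R ^ 2 * (1 + κ + C) +
        R * ((2 ^ l + 2 ^ l) * (3 * (8 * (2 ^ l) ^ 2 * B * R * (1 + κ + C)))) := by
        gcongr
        exact bump_add_ratio_const_le hB hR hκ hC hℓ hRℓ
    _ = 49 * ((2 ^ l) ^ 3 * B * R ^ 2 * (1 + κ + C)) := by ring
    _ ≤ 100 * ((2 ^ l) ^ 3 * B * R ^ 2 * (1 + κ + C)) := by gcongr; norm_num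
    _ = dampedDerivConst l R B κ C := by rw [dampedDerivConst]; ring

lemma potential_const_le_dampedDerivConst (hB : 1 ≤ B) (hR : 1 ≤ R) (hκ : 0 ≤ κ) (hC : 0 ≤ C)
    (hℓ : 0 < ℓ) (hRℓ : 1 / 2 ≤ (R + 1) * ℓ) :
    (1 + 2 ^ l) * (2 ^ l * (B / ℓ) * (1 + κ) + 2 ^ l * (2 * R * C)) ≤
      dampedDerivConst l R B κ C := by
  have hR' : (1 : ℝ) ≤ R := by exact_mod_cast hR
  refine le_trans ?_ (ratio_const_le_dampedDerivConst hB hR hκ hC hℓ hRℓ)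
  set a := 2 ^ l * (B / ℓ) * (1 + κ)
  set b := 2 ^ l * (2 * R * C)
  have ha : 0 ≤ a := by positivity
  have hb : 0 ≤ b := by positivity
  calc (1 + 2 ^ l) * (a + b) ≤ 1 * ((1 + 2 ^ l) * (3 * (a + (b + 2 ^ l * b)))) := by
        rw [one_mul]
        gcongr
        nlinarith [mul_nonneg (show (0 : ℝ) ≤ 2 ^ l by positivity) hb]
    _ ≤ C + R * ((1 + 2 ^ l) * (3 * (a + (b + 2 ^ l * b)))) := by
        refine le_add_of_nonneg_of_le hC ?_
        gcongr

end DampedDerivConst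

namespace DampingData

variable {ω κ C B ℓ : ℝ} {f χ : ℝ → ℝ} {s : Set ℝ} {l R : ℕ}

lemma derivDominated_dampedRatio_dampedDerivConst (h : DampingData ω f χ κ R) (hC : 0 ≤ C)
    (hf : DerivDominated l C f f) (hB : 1 ≤ B) (hℓ : 0 < ℓ) (hRℓ : 1 / 2 ≤ (R + 1) * ℓ)
    (hχ : DerivDominated l (B / ℓ) χ (s.indicator 1)) :
    DerivDominated l (dampedDerivConst l R B κ C) (dampedRatio ω f χ κ R)
      (dampedRatio ω f χ κ R) := by
  have hκ := h.strength_nonneg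
  exact (h.derivDominated_dampedRatio hC hf (by positivity) hχ).mono_const (by positivity)
    (ratio_const_le_dampedDerivConst hB h.one_le_length hκ hC hℓ hRℓ)

lemma one_div_sq_orbitProd_mul_exp_le (h : DampingData ω f χ κ R) {b u : ℝ}
    (hfb : ∀ x, f x ≤ Real.exp b) (hu : ∀ x, Real.exp u ≤ orbitProd ω f R x) (x : ℝ) :
    s.indicator 1 x * (1 / wronskianSum ω f R x) *
        (1 / (orbitProd ω f R x * orbitProd ω f R x) * (1 / Real.exp (-κ * χ x))) ≤
      Real.exp (b + κ - 2 * u) := by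
  have hN := h.wronskianSum_length_pos x
  calc _ ≤ 1 * Real.exp b * (1 / (Real.exp u * Real.exp u) * (1 / Real.exp (-κ))) := by
        have hP := orbitProd_pos (ω := ω) h.ratio_pos R x
        have hind : s.indicator 1 x ≤ (1 : ℝ) := Set.indicator_le_self' (fun _ _ => zero_le_one) x
        have hexp := h.exp_neg_le_exp_neg_mul_bump x
        have hle := (one_div_wronskianSum_le (ω := ω) h.ratio_pos h.one_le_length x).trans (hfb x)
        have hux := hu x
        gcongr ?_ * ?_ * (1 / (?_ * ?_) * (1 / ?_))
    _ = Real.exp (b + κ - 2 * u) := by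
        rw [one_mul, ← Real.exp_add, one_div, one_div, ← Real.exp_neg, ← Real.exp_neg,
          ← Real.exp_add, ← Real.exp_add]
        ring_nf

lemma abs_iteratedDeriv_riccatiPotential_dampedRatio_sub_le (h : DampingData ω f χ κ R)
    (hC : 0 ≤ C) (hf : DerivDominated l C f f) (hB : 1 ≤ B) (hℓ : 0 < ℓ)
    (hRℓ : 1 / 2 ≤ (R + 1) * ℓ) (hχ : DerivDominated l (B / ℓ) χ (s.indicator 1)) {b u d : ℝ}
    (hfb : ∀ x, f x ≤ Real.exp b) (hu : ∀ x, Real.exp u ≤ orbitProd ω f R x) (hd : 0 ≤ d)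
    (hN : ∀ x ∈ s, 1 / wronskianSum ω f R x ≤ d) {m : ℕ} (hm : m ≤ l) (x : ℝ) :
    |iteratedDeriv m
        (fun x => riccatiPotential ω (dampedRatio ω f χ κ R) x - riccatiPotential ω f x) x| ≤
      dampedDerivConst l R B κ C ^ l * (d + Real.exp (b + κ - 2 * u)) := by
  have hκ := h.strength_nonneg
  have hone := one_le_dampedDerivConst (l := l) hB h.one_le_length hκ hC
  have hdom := (h.derivDominated_riccatiPotential_dampedRatio_sub hC hf (by positivity)
    hχ).mono_const (by positivity)
      (potential_const_le_dampedDerivConst hB h.one_le_length hκ hC hℓ hRℓ)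
  have hfirst : s.indicator 1 x * (1 / wronskianSum ω f R x) ≤ d := by
    by_cases hx : x ∈ s
    · simpa only [Set.indicator_of_mem hx, Pi.one_apply, one_mul] using hN x hx
    · rwa [Set.indicator_of_notMem hx, zero_mul]
  calc _ ≤ dampedDerivConst l R B κ C ^ m * _ := hdom.abs_iteratedDeriv_le hm x
    _ ≤ dampedDerivConst l R B κ C ^ l * (d + Real.exp (b + κ - 2 * u)) := by
        gcongr
        · exact hdom.nonneg x
        · exact h.one_div_sq_orbitProd_mul_exp_le hfb hu (x - R * ω)

end DampingData

/-! ### Finite Lyapunov exponents of unimodular cocycles -/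

section OpNorm

open scoped Matrix.Norms.L2Operator

lemma opNorm_eq_norm (A : Matrix (Fin 2) (Fin 2) ℝ) : opNorm A = ‖A‖ :=
  Matrix.l2_opNorm_toEuclideanCLM A

lemma opNorm_nonneg (A : Matrix (Fin 2) (Fin 2) ℝ) : 0 ≤ opNorm A := norm_nonneg _

lemma opNorm_one : opNorm 1 = 1 := by rw [opNorm_eq_norm, norm_one]

lemma opNorm_mul_le (A B : Matrix (Fin 2) (Fin 2) ℝ) : opNorm (A * B) ≤ opNorm A * opNorm B := by
  simpa only [opNorm_eq_norm] using norm_mul_le A B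

lemma continuous_opNorm : Continuous opNorm :=
  continuous_norm.congr fun A => (opNorm_eq_norm A).symm

end OpNorm

lemma sq_norm_toEuclideanCLM_apply (A : Matrix (Fin 2) (Fin 2) ℝ) (v : EuclideanSpace ℝ (Fin 2)) :
    ‖Matrix.toEuclideanCLM (𝕜 := ℝ) A v‖ ^ 2 =
      (A 0 0 * v 0 + A 0 1 * v 1) ^ 2 + (A 1 0 * v 0 + A 1 1 * v 1) ^ 2 := by
  rw [EuclideanSpace.norm_sq_eq]
  simp [Fin.sum_univ_two, Matrix.mulVec, dotProduct]

lemma sq_add_sq_le_sq_opNorm_mul (A : Matrix (Fin 2) (Fin 2) ℝ) (p q : ℝ) :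
    (A 0 0 * p + A 0 1 * q) ^ 2 + (A 1 0 * p + A 1 1 * q) ^ 2 ≤
      opNorm A ^ 2 * (p ^ 2 + q ^ 2) := by
  have hnorm : ‖(!₂[p, q] : EuclideanSpace ℝ (Fin 2))‖ ^ 2 = p ^ 2 + q ^ 2 := by
    simp [EuclideanSpace.norm_sq_eq, Fin.sum_univ_two]
  rw [← hnorm, ← mul_pow]
  exact (sq_norm_toEuclideanCLM_apply A !₂[p, q]).symm.trans_le <|
    pow_le_pow_left₀ (norm_nonneg _) ((Matrix.toEuclideanCLM (𝕜 := ℝ) A).le_opNorm _) 2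

lemma opNorm_le_two_mul {A : Matrix (Fin 2) (Fin 2) ℝ} {K : ℝ} (h : ∀ i j, |A i j| ≤ K) :
    opNorm A ≤ 2 * K := by
  have hK : 0 ≤ K := (abs_nonneg _).trans (h 0 0)
  have hrow (i : Fin 2) (p q : ℝ) :
      (A i 0 * p + A i 1 * q) ^ 2 ≤ 2 * K ^ 2 * (p ^ 2 + q ^ 2) :=
    calc (A i 0 * p + A i 1 * q) ^ 2 ≤ 2 * ((A i 0 * p) ^ 2 + (A i 1 * q) ^ 2) := add_sq_le
      _ = 2 * (|A i 0| ^ 2 * p ^ 2 + |A i 1| ^ 2 * q ^ 2) := by simp only [mul_pow, sq_abs]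
      _ ≤ 2 * (K ^ 2 * p ^ 2 + K ^ 2 * q ^ 2) := by gcongr <;> exact h _ _
      _ = 2 * K ^ 2 * (p ^ 2 + q ^ 2) := by ring
  refine ContinuousLinearMap.opNorm_le_bound _ (by positivity) fun v =>
    le_of_sq_le_sq ?_ (by positivity)
  rw [sq_norm_toEuclideanCLM_apply, mul_pow, EuclideanSpace.norm_sq_eq, Fin.sum_univ_two]
  simp only [Real.norm_eq_abs, sq_abs]
  linarith [hrow 0 (v 0) (v 1), hrow 1 (v 0) (v 1)]

lemma one_le_opNorm {A : Matrix (Fin 2) (Fin 2) ℝ} (h : A.det = 1) : 1 ≤ opNorm A := by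
  rw [Matrix.det_fin_two] at h
  have hcol₀ := sq_add_sq_le_sq_opNorm_mul A 1 0
  have hcol₁ := sq_add_sq_le_sq_opNorm_mul A 0 1
  norm_num only [mul_one, mul_zero, add_zero, zero_add] at hcol₀ hcol₁
  refine (one_le_pow_iff_of_nonneg (opNorm_nonneg A) four_ne_zero).1 ?_
  calc 1 = (A 0 0 * A 1 1 - A 0 1 * A 1 0) ^ 2 := by rw [h, one_pow]
    _ ≤ (A 0 0 ^ 2 + A 1 0 ^ 2) * (A 0 1 ^ 2 + A 1 1 ^ 2) := by
        linarith [sq_nonneg (A 0 0 * A 0 1 + A 1 0 * A 1 1)]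
    _ ≤ opNorm A ^ 2 * opNorm A ^ 2 := by gcongr
    _ = opNorm A ^ 4 := by ring

section Cocycle

variable {ω : ℝ} {A : ℝ → Matrix (Fin 2) (Fin 2) ℝ}

lemma cocycle_zero (ω : ℝ) (A : ℝ → Matrix (Fin 2) (Fin 2) ℝ) (x : ℝ) : cocycle ω A 0 x = 1 := rfl

lemma cocycle_succ (ω : ℝ) (A : ℝ → Matrix (Fin 2) (Fin 2) ℝ) (n : ℕ) (x : ℝ) :
    cocycle ω A (n + 1) x = A (x + n * ω) * cocycle ω A n x := rfl

lemma cocycle_add (ω : ℝ) (A : ℝ → Matrix (Fin 2) (Fin 2) ℝ) (m n : ℕ) (x : ℝ) :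
    cocycle ω A (m + n) x = cocycle ω A m (x + n * ω) * cocycle ω A n x := by
  induction m with
  | zero => rw [zero_add, cocycle_zero, one_mul]
  | succ m ih =>
    rw [Nat.add_right_comm, cocycle_succ, cocycle_succ, ih, Matrix.mul_assoc, add_assoc, ← add_mul,
      Nat.cast_add, add_comm (n : ℝ)]

lemma det_cocycle (hdet : ∀ x, (A x).det = 1) (n : ℕ) (x : ℝ) : (cocycle ω A n x).det = 1 := by
  induction n with
  | zero => rw [cocycle_zero, Matrix.det_one]
  | succ n ih => rw [cocycle_succ, Matrix.det_mul, ih, hdet, mul_one]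

lemma one_le_opNorm_cocycle (hdet : ∀ x, (A x).det = 1) (n : ℕ) (x : ℝ) :
    1 ≤ opNorm (cocycle ω A n x) :=
  one_le_opNorm (det_cocycle hdet n x)

lemma opNorm_cocycle_le {K : ℝ} (hK : ∀ x, opNorm (A x) ≤ K) (n : ℕ) (x : ℝ) :
    opNorm (cocycle ω A n x) ≤ K ^ n := by
  induction n with
  | zero => rw [cocycle_zero, opNorm_one, pow_zero]
  | succ n ih =>
    rw [cocycle_succ, pow_succ']
    exact (opNorm_mul_le _ _).trans
      (mul_le_mul (hK _) ih (opNorm_nonneg _) ((opNorm_nonneg _).trans (hK 0)))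

lemma continuous_cocycle (hA : Continuous A) (n : ℕ) : Continuous (cocycle ω A n) := by
  induction n with
  | zero => exact continuous_const
  | succ n ih => exact (hA.comp (by fun_prop)).mul ih

lemma periodic_cocycle {c : ℝ} (hA : Function.Periodic A c) (n : ℕ) :
    Function.Periodic (cocycle ω A n) c := fun x => by
  induction n with
  | zero => rfl
  | succ n ih =>
    have hshift : A (x + c + n * ω) = A (x + n * ω) := hA.add_const (n * ω) x
    rw [cocycle_succ, cocycle_succ, ih, hshift]

lemma tendsto_cocycle {ι : Type*} {F : Filter ι} {As : ι → ℝ → Matrix (Fin 2) (Fin 2) ℝ}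
    (hlim : ∀ x, Tendsto (As · x) F (nhds (A x))) (n : ℕ) (x : ℝ) :
    Tendsto (fun k => cocycle ω (As k) n x) F (nhds (cocycle ω A n x)) := by
  induction n with
  | zero => exact tendsto_const_nhds
  | succ n ih => exact (hlim _).mul ih

lemma log_opNorm_cocycle_nonneg (hdet : ∀ x, (A x).det = 1) (n : ℕ) (x : ℝ) :
    0 ≤ Real.log (opNorm (cocycle ω A n x)) :=
  Real.log_nonneg (one_le_opNorm_cocycle hdet n x)

lemma continuous_log_opNorm_cocycle (hA : Continuous A) (hdet : ∀ x, (A x).det = 1) (n : ℕ) :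
    Continuous fun x => Real.log (opNorm (cocycle ω A n x)) :=
  (continuous_opNorm.comp (continuous_cocycle hA n)).log fun x =>
    (one_pos.trans_le (one_le_opNorm_cocycle hdet n x)).ne'

lemma log_opNorm_cocycle_add_le (hdet : ∀ x, (A x).det = 1) (m n : ℕ) (x : ℝ) :
    Real.log (opNorm (cocycle ω A (m + n) x)) ≤
      Real.log (opNorm (cocycle ω A m (x + n * ω))) + Real.log (opNorm (cocycle ω A n x)) := by
  have hpos (k : ℕ) (y : ℝ) : 0 < opNorm (cocycle ω A k y) :=
    one_pos.trans_le (one_le_opNorm_cocycle hdet k y)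
  rw [← Real.log_mul (hpos m _).ne' (hpos n x).ne']
  refine Real.log_le_log (hpos _ x) ?_
  rw [cocycle_add]
  exact opNorm_mul_le _ _

lemma integral_log_opNorm_cocycle_nonneg (hdet : ∀ x, (A x).det = 1) (n : ℕ) :
    0 ≤ ∫ x in (0 : ℝ)..1, Real.log (opNorm (cocycle ω A n x)) :=
  intervalIntegral.integral_nonneg zero_le_one fun x _ => log_opNorm_cocycle_nonneg hdet n x

lemma LEn_nonneg (hdet : ∀ x, (A x).det = 1) (n : ℕ) : 0 ≤ LEn ω A n :=
  mul_nonneg (by positivity) (integral_log_opNorm_cocycle_nonneg hdet n)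

lemma subadditive_integral_log_opNorm_cocycle (hA : Continuous A) (hdet : ∀ x, (A x).det = 1)
    (hper : Function.Periodic A 1) :
    Subadditive fun n => ∫ x in (0 : ℝ)..1, Real.log (opNorm (cocycle ω A n x)) := fun m n => by
  have hlog (k : ℕ) := continuous_log_opNorm_cocycle (ω := ω) hA hdet k
  have hshift : Continuous fun x => Real.log (opNorm (cocycle ω A m (x + n * ω))) :=
    (hlog m).comp (by fun_prop)
  calc ∫ x in (0 : ℝ)..1, Real.log (opNorm (cocycle ω A (m + n) x))
    _ ≤ ∫ x in (0 : ℝ)..1, (Real.log (opNorm (cocycle ω A m (x + n * ω))) +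
          Real.log (opNorm (cocycle ω A n x))) :=
        intervalIntegral.integral_mono zero_le_one ((hlog _).intervalIntegrable _ _)
          ((hshift.add (hlog n)).intervalIntegrable _ _) (log_opNorm_cocycle_add_le hdet m n)
    _ = (∫ x in (0 : ℝ)..1, Real.log (opNorm (cocycle ω A m (x + n * ω)))) +
          ∫ x in (0 : ℝ)..1, Real.log (opNorm (cocycle ω A n x)) :=
        intervalIntegral.integral_add (hshift.intervalIntegrable _ _)
          ((hlog n).intervalIntegrable _ _)
    _ = _ := by
        congr 1
        exact intervalIntegral_comp_add_of_periodic
          (((periodic_cocycle hper m).comp opNorm).comp Real.log) (n * ω)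

lemma exists_tendsto_LEn (hA : Continuous A) (hdet : ∀ x, (A x).det = 1)
    (hper : Function.Periodic A 1) : ∃ L, Tendsto (LEn ω A) atTop (nhds L) := by
  have hsub := subadditive_integral_log_opNorm_cocycle (ω := ω) hA hdet hper
  refine ⟨hsub.lim, (hsub.tendsto_lim ⟨0, ?_⟩).congr fun n => ?_⟩
  · rintro _ ⟨n, rfl⟩
    exact div_nonneg (integral_log_opNorm_cocycle_nonneg hdet n) n.cast_nonneg
  · rw [LEn, one_div, div_eq_inv_mul]

lemma tendsto_LEn_of_tendsto {As : ℕ → ℝ → Matrix (Fin 2) (Fin 2) ℝ} {K : ℝ}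
    (hcont : ∀ k, Continuous (As k)) (hdet : ∀ k x, (As k x).det = 1) (hdetA : ∀ x, (A x).det = 1)
    (hK : ∀ k x, opNorm (As k x) ≤ K) (hlim : ∀ x, Tendsto (As · x) atTop (nhds (A x))) (n : ℕ) :
    Tendsto (fun k => LEn ω (As k) n) atTop (nhds (LEn ω A n)) := by
  refine Tendsto.const_mul _ <|
    intervalIntegral.tendsto_integral_filter_of_dominated_convergence (fun _ => Real.log (K ^ n))
      ?_ ?_ intervalIntegrable_const ?_
  · exact .of_forall fun k =>
      (continuous_log_opNorm_cocycle (hcont k) (hdet k) n).aestronglyMeasurable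
  · refine .of_forall fun k => ae_of_all _ fun x _ => ?_
    rw [Real.norm_eq_abs, abs_of_nonneg (log_opNorm_cocycle_nonneg (hdet k) n x)]
    exact Real.log_le_log (one_pos.trans_le (one_le_opNorm_cocycle (hdet k) n x))
      (opNorm_cocycle_le (hK k) n x)
  · exact ae_of_all _ fun x _ => ((continuous_opNorm.tendsto _).comp (tendsto_cocycle hlim n x)).log
      (one_pos.trans_le (one_le_opNorm_cocycle hdetA n x)).ne'

end Cocycle

/-! ### Schrödinger cocycles with a positive solution -/

section Schrodinger

variable {v : ℝ → ℝ}

lemma det_schrodingerCocycle (v : ℝ → ℝ) (x : ℝ) : (SchrodingerCocycle v x).det = 1 := by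
  simp [SchrodingerCocycle, Matrix.det_fin_two]

lemma continuous_schrodingerCocycle (hv : Continuous v) : Continuous (SchrodingerCocycle v) := by
  unfold SchrodingerCocycle
  fun_prop

lemma periodic_schrodingerCocycle {c : ℝ} (hv : Function.Periodic v c) :
    Function.Periodic (SchrodingerCocycle v) c := fun x => by
  rw [SchrodingerCocycle, SchrodingerCocycle, hv x]

lemma opNorm_schrodingerCocycle_le {K : ℝ} (hK : 1 ≤ K) {x : ℝ} (hv : |v x| ≤ K) :
    opNorm (SchrodingerCocycle v x) ≤ 2 * K := by
  refine opNorm_le_two_mul fun i j => ?_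
  fin_cases i <;> fin_cases j <;> simp [SchrodingerCocycle] <;> linarith

lemma tendsto_LEn_schrodingerCocycle {vs : ℕ → ℝ → ℝ} {K : ℝ} (ω : ℝ)
    (hcont : ∀ k, Continuous (vs k)) (hK : ∀ k x, |vs k x| ≤ K)
    (hlim : ∀ x, Tendsto (vs · x) atTop (nhds (v x))) (n : ℕ) :
    Tendsto (fun k => LEn ω (SchrodingerCocycle (vs k)) n) atTop
      (nhds (LEn ω (SchrodingerCocycle v) n)) := by
  have hentry : Continuous fun t : ℝ => !![t, -1; 1, 0] := by fun_prop
  exact tendsto_LEn_of_tendsto (fun k => continuous_schrodingerCocycle (hcont k))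
    (fun k => det_schrodingerCocycle (vs k)) (det_schrodingerCocycle v)
    (fun k x => opNorm_schrodingerCocycle_le (le_max_right K 1) ((hK k x).trans (le_max_left K 1)))
    (fun x => (hentry.tendsto (v x)).comp (hlim x)) n

end Schrodinger

section PositiveSolution

variable {ω : ℝ} {f : ℝ → ℝ}

lemma cocycle_riccatiPotential_mul (hf : ∀ x, 0 < f x) (n : ℕ) (x : ℝ) :
    cocycle ω (SchrodingerCocycle (riccatiPotential ω f)) n x * !![f (x - ω), -1; 1, 0] =
      !![f (x - ω + n * ω), -1; 1, 0] *
        !![orbitProd ω f n (x - ω), -(orbitProd ω f n (x - ω) * wronskianSum ω f n (x - ω));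
          0, 1 / orbitProd ω f n (x - ω)] := by
  induction n with
  | zero => simp [cocycle, orbitProd_zero, wronskianSum_zero]
  | succ n ih =>
    have hF := hf (x - ω + n * ω)
    have hP := orbitProd_pos (ω := ω) hf n (x - ω)
    rw [cocycle_succ, Matrix.mul_assoc, ih, ← Matrix.mul_assoc, wronskianSum_succ, orbitProd_succ,
      SchrodingerCocycle, riccatiPotential, show x + n * ω - ω = x - ω + n * ω by ring,
      show x - ω + ((n + 1 : ℕ) : ℝ) * ω = x + n * ω by push_cast; ring]
    generalize f (x - ω + n * ω) = F at hF
    ext i j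
    fin_cases i <;> fin_cases j <;> simp [Matrix.mul_apply, Fin.sum_univ_two] <;> field_simp <;>
      ring

lemma sq_orbitProd_mul_le (hf : ∀ x, 0 < f x) (n : ℕ) (x : ℝ) :
    orbitProd ω f n (x - ω) ^ 2 * (f (x - ω + n * ω) ^ 2 + 1) ≤
      opNorm (cocycle ω (SchrodingerCocycle (riccatiPotential ω f)) n x) ^ 2 *
        (f (x - ω) ^ 2 + 1) := by
  have hconj := cocycle_riccatiPotential_mul (ω := ω) hf n x
  set A := cocycle ω (SchrodingerCocycle (riccatiPotential ω f)) n x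
  have hfst : A 0 0 * f (x - ω) + A 0 1 * 1 = f (x - ω + n * ω) * orbitProd ω f n (x - ω) := by
    simpa [Matrix.mul_apply, Fin.sum_univ_two] using congrFun (congrFun hconj 0) 0
  have hsnd : A 1 0 * f (x - ω) + A 1 1 * 1 = orbitProd ω f n (x - ω) := by
    simpa [Matrix.mul_apply, Fin.sum_univ_two] using congrFun (congrFun hconj 1) 0
  have hle := sq_add_sq_le_sq_opNorm_mul A (f (x - ω)) 1
  rw [hfst, hsnd, one_pow] at hle
  linarith

lemma log_orbitProd_add_le_log_opNorm (hf : ∀ x, 0 < f x) (n : ℕ) (x : ℝ) :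
    Real.log (orbitProd ω f n (x - ω)) + (Real.log (f (x - ω + n * ω) ^ 2 + 1) / 2 -
        Real.log (f (x - ω) ^ 2 + 1) / 2) ≤
      Real.log (opNorm (cocycle ω (SchrodingerCocycle (riccatiPotential ω f)) n x)) := by
  have hP := orbitProd_pos (ω := ω) hf n (x - ω)
  have hA := one_le_opNorm_cocycle (ω := ω)
    (det_schrodingerCocycle (riccatiPotential ω f)) n x
  have hlog := Real.log_le_log (by positivity) (sq_orbitProd_mul_le (ω := ω) hf n x)
  rw [Real.log_mul (by positivity) (by positivity), Real.log_mul (by positivity) (by positivity),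
    Real.log_pow, Real.log_pow] at hlog
  push_cast at hlog
  linarith

lemma log_orbitProd (hf : ∀ x, 0 < f x) (n : ℕ) (x : ℝ) :
    Real.log (orbitProd ω f n x) = ∑ i ∈ Finset.range n, Real.log (f (x + i * ω)) :=
  Real.log_prod fun _ _ => (hf _).ne'

lemma integral_log_orbitProd (hf : ∀ x, 0 < f x) (hc : Continuous f) (hp : Function.Periodic f 1)
    (n : ℕ) : ∫ x in (0 : ℝ)..1, Real.log (orbitProd ω f n (x - ω)) =
      n * ∫ x in (0 : ℝ)..1, Real.log (f x) := by
  have hlog : Continuous fun x => Real.log (f x) := hc.log fun x => (hf x).ne'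
  have hterm (i : ℕ) : ∫ x in (0 : ℝ)..1, Real.log (f (x - ω + i * ω)) =
      ∫ x in (0 : ℝ)..1, Real.log (f x) := by
    simpa only [sub_eq_add_neg, add_assoc, Function.comp_apply] using
      intervalIntegral_comp_add_of_periodic (hp.comp Real.log) (-ω + i * ω)
  have hint (i : ℕ) : IntervalIntegrable (fun x => Real.log (f (x - ω + i * ω))) volume 0 1 :=
    (hlog.comp (by fun_prop : Continuous fun x => x - ω + i * ω)).intervalIntegrable _ _
  simp_rw [log_orbitProd hf]
  rw [intervalIntegral.integral_finsetSum fun i _ => hint i,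
    Finset.sum_congr rfl fun i _ => hterm i, Finset.sum_const, Finset.card_range, nsmul_eq_mul]

lemma integral_log_le_LEn (hf : ∀ x, 0 < f x) (hc : Continuous f) (hp : Function.Periodic f 1)
    {n : ℕ} (hn : 1 ≤ n) :
    ∫ x in (0 : ℝ)..1, Real.log (f x) ≤
      LEn ω (SchrodingerCocycle (riccatiPotential ω f)) n := by
  have hw : Continuous (riccatiPotential ω f) :=
    (contDiff_riccatiPotential (contDiff_zero.2 hc) hf).continuous
  have hP : Continuous fun x => Real.log (orbitProd ω f n (x - ω)) :=
    ((continuous_orbitProd hc n).comp (by fun_prop)).log fun x => (orbitProd_pos hf n _).ne'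
  let g : ℝ → ℝ := fun x => Real.log (f x ^ 2 + 1) / 2
  have hg : Continuous g :=
    (Continuous.log (by fun_prop) fun x => by positivity).div_const 2
  have hgp : Function.Periodic g 1 := hp.comp fun t => Real.log (t ^ 2 + 1) / 2
  have hshift : ∫ x in (0 : ℝ)..1, (g (x - ω + n * ω) - g (x - ω)) = 0 := by
    rw [intervalIntegral.integral_sub (Continuous.intervalIntegrable (by fun_prop) _ _)
      (Continuous.intervalIntegrable (by fun_prop) _ _)]
    simp only [sub_eq_add_neg, add_assoc, intervalIntegral_comp_add_of_periodic hgp, add_neg_cancel]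
  have hmono := intervalIntegral.integral_mono (a := 0) (b := 1) (μ := volume) zero_le_one
    (Continuous.intervalIntegrable (by fun_prop) _ _)
    ((continuous_log_opNorm_cocycle (ω := ω) (continuous_schrodingerCocycle hw)
      (det_schrodingerCocycle _) n).intervalIntegrable _ _)
    (f := fun x => Real.log (orbitProd ω f n (x - ω)) + (g (x - ω + n * ω) - g (x - ω)))
    (log_orbitProd_add_le_log_opNorm hf n)
  rw [intervalIntegral.integral_add (hP.intervalIntegrable _ _)
    (Continuous.intervalIntegrable (by fun_prop) _ _), hshift, add_zero,
    integral_log_orbitProd hf hc hp] at hmono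
  rwa [LEn, one_div, ← div_eq_inv_mul, le_div_iff₀' (by positivity)]

end PositiveSolution

/-! ### Uniform equidistribution of irrational rotations -/

/-- The deviation, at the point `y`, of the Birkhoff sum of `G` over `n` steps of the rotation by
`α` from its expected value `n * ∫ G`. -/
noncomputable def rotationDiscrepancy (α : UnitAddCircle) (G : C(UnitAddCircle, ℂ)) (n : ℕ)
    (y : UnitAddCircle) : ℂ :=
  ∑ i ∈ Finset.range n, G (y + i • α) - n * ∫ z, G z

section Equidistribution

variable {α : UnitAddCircle}

lemma integrable_continuousMap_unitAddCircle (G : C(UnitAddCircle, ℂ)) : Integrable G :=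
  G.continuous.integrable_of_hasCompactSupport (HasCompactSupport.of_compactSpace _)

lemma rotationDiscrepancy_add (α : UnitAddCircle) (G H : C(UnitAddCircle, ℂ)) (n : ℕ)
    (y : UnitAddCircle) :
    rotationDiscrepancy α (G + H) n y =
      rotationDiscrepancy α G n y + rotationDiscrepancy α H n y := by
  simp only [rotationDiscrepancy, ContinuousMap.add_apply, Finset.sum_add_distrib,
    integral_add (integrable_continuousMap_unitAddCircle G)
      (integrable_continuousMap_unitAddCircle H)]
  ring

lemma rotationDiscrepancy_smul (α : UnitAddCircle) (a : ℂ) (G : C(UnitAddCircle, ℂ)) (n : ℕ)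
    (y : UnitAddCircle) :
    rotationDiscrepancy α (a • G) n y = a * rotationDiscrepancy α G n y := by
  simp only [rotationDiscrepancy, ContinuousMap.smul_apply, smul_eq_mul, ← Finset.mul_sum,
    integral_const_mul]
  ring

lemma norm_rotationDiscrepancy_le (α : UnitAddCircle) (G : C(UnitAddCircle, ℂ)) (n : ℕ)
    (y : UnitAddCircle) : ‖rotationDiscrepancy α G n y‖ ≤ 2 * ‖G‖ * n := by
  have hsum : ‖∑ i ∈ Finset.range n, G (y + i • α)‖ ≤ n * ‖G‖ := by
    simpa using norm_sum_le_of_le (Finset.range n) fun i _ => G.norm_coe_le_norm (y + i • α)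
  have hmean : ‖∫ z, G z‖ ≤ ‖G‖ := by
    simpa only [measureReal_def, UnitAddCircle.measure_univ, ENNReal.toReal_one, mul_one] using
      norm_integral_le_of_norm_le_const (μ := volume) (.of_forall G.norm_coe_le_norm)
  calc ‖rotationDiscrepancy α G n y‖
      ≤ ‖∑ i ∈ Finset.range n, G (y + i • α)‖ + ‖(n : ℂ) * ∫ z, G z‖ := norm_sub_le _ _
    _ = ‖∑ i ∈ Finset.range n, G (y + i • α)‖ + n * ‖∫ z, G z‖ := by
        rw [norm_mul, Complex.norm_natCast]
    _ ≤ n * ‖G‖ + n * ‖G‖ := by gcongr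
    _ = 2 * ‖G‖ * n := by ring

lemma fourier_add_nsmul (k : ℤ) (y α : UnitAddCircle) (i : ℕ) :
    fourier k (y + i • α) = fourier k y * fourier k α ^ i := by
  simp only [fourier_apply, smul_add, smul_comm k i α, AddCircle.toCircle_add,
    AddCircle.toCircle_nsmul, Circle.coe_mul, Circle.coe_pow]

lemma fourier_ne_one (hα : ¬ IsOfFinAddOrder α) {k : ℤ} (hk : k ≠ 0) : fourier k α ≠ 1 := by
  intro h
  have hsmul : k • α = 0 := AddCircle.injective_toCircle one_ne_zero <| by
    rw [AddCircle.toCircle_zero, ← Circle.coe_inj, Circle.coe_one, ← h, fourier_apply]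
  exact hα (isOfFinAddOrder_iff_zsmul_eq_zero.2 ⟨k, hk, hsmul⟩)

lemma exists_norm_rotationDiscrepancy_fourier_le (hα : ¬ IsOfFinAddOrder α) (k : ℤ) :
    ∃ c, ∀ n y, ‖rotationDiscrepancy α (fourier k) n y‖ ≤ c := by
  obtain rfl | hk := eq_or_ne k 0
  · exact ⟨0, fun n y => by simp [rotationDiscrepancy, measureReal_def]⟩
  refine ⟨2 / ‖fourier k α - 1‖, fun n y => ?_⟩
  have hmean : ∫ z : UnitAddCircle, fourier k z = 0 :=
    integral_eq_zero_of_add_right_eq_neg (fourier_add_half_inv_index hk one_pos)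
  have hnorm (z : UnitAddCircle) : ‖fourier k z‖ = 1 := Circle.norm_coe _
  simp only [rotationDiscrepancy, fourier_add_nsmul]
  rw [← Finset.mul_sum, geom_sum_eq (fourier_ne_one hα hk), hmean, mul_zero, sub_zero, norm_mul,
    norm_div, hnorm, one_mul]
  gcongr
  calc ‖fourier k α ^ n - 1‖ ≤ ‖fourier k α ^ n‖ + ‖(1 : ℂ)‖ := norm_sub_le _ _
    _ = 2 := by rw [norm_pow, hnorm, one_pow, norm_one, one_add_one_eq_two]

lemma exists_norm_rotationDiscrepancy_le_of_mem_span (hα : ¬ IsOfFinAddOrder α)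
    {P : C(UnitAddCircle, ℂ)} (hP : P ∈ Submodule.span ℂ (Set.range (@fourier 1))) :
    ∃ c, ∀ n y, ‖rotationDiscrepancy α P n y‖ ≤ c := by
  induction hP using Submodule.span_induction with
  | mem P hP =>
    obtain ⟨k, rfl⟩ := hP
    exact exists_norm_rotationDiscrepancy_fourier_le hα k
  | zero => exact ⟨0, fun n y => by simp [rotationDiscrepancy]⟩
  | add P Q _ _ hP hQ =>
    obtain ⟨c, hc⟩ := hP
    obtain ⟨d, hd⟩ := hQ
    refine ⟨c + d, fun n y => ?_⟩
    rw [rotationDiscrepancy_add]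
    exact norm_add_le_of_le (hc n y) (hd n y)
  | smul a P _ hP =>
    obtain ⟨c, hc⟩ := hP
    refine ⟨‖a‖ * c, fun n y => ?_⟩
    rw [rotationDiscrepancy_smul, norm_mul]
    exact mul_le_mul_of_nonneg_left (hc n y) (norm_nonneg a)

lemma exists_norm_rotationDiscrepancy_le (hα : ¬ IsOfFinAddOrder α) (G : C(UnitAddCircle, ℂ))
    {ε : ℝ} (hε : 0 < ε) : ∃ c, ∀ n y, ‖rotationDiscrepancy α G n y‖ ≤ ε * n + c := by
  have hG : G ∈ (Submodule.span ℂ (Set.range (@fourier (1 : ℝ)))).topologicalClosure := by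
    rw [span_fourier_closure_eq_top]
    trivial
  obtain ⟨P, hP, hGP⟩ := Metric.mem_closure_iff.1 hG (ε / 2) (half_pos hε)
  obtain ⟨c, hc⟩ := exists_norm_rotationDiscrepancy_le_of_mem_span hα hP
  refine ⟨c, fun n y => ?_⟩
  have hsub : ‖rotationDiscrepancy α (G - P) n y‖ ≤ ε * n :=
    (norm_rotationDiscrepancy_le α _ n y).trans <| by
      rw [dist_eq_norm] at hGP
      gcongr
      linarith
  rw [← sub_add_cancel G P, rotationDiscrepancy_add]
  exact norm_add_le_of_le hsub (hc n y)

lemma not_isOfFinAddOrder_coe {ω : ℝ} (hω : Irrational ω) :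
    ¬ IsOfFinAddOrder (ω : UnitAddCircle) :=
  AddCircle.not_isOfFinAddOrder_iff_forall_rat_ne_div.2 fun q hq =>
    hω ⟨q, hq.trans (div_one ω)⟩

lemma exists_abs_sum_sub_integral_le {ω : ℝ} (hω : Irrational ω) {g : ℝ → ℝ} (hg : Continuous g)
    (hp : Function.Periodic g 1) {ε : ℝ} (hε : 0 < ε) :
    ∃ c, ∀ (n : ℕ) (x : ℝ),
      |∑ i ∈ Finset.range n, g (x + i * ω) - n * ∫ t in (0 : ℝ)..1, g t| ≤ ε * n + c := by
  let G : C(UnitAddCircle, ℂ) :=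
    ⟨fun y => (hp.lift y : ℂ), Complex.continuous_ofReal.comp (continuous_coinduced_dom.2 hg)⟩
  obtain ⟨c, hc⟩ := exists_norm_rotationDiscrepancy_le (not_isOfFinAddOrder_coe hω) G hε
  refine ⟨c, fun n x => (hc n x).trans' (le_of_eq ?_)⟩
  have hmean : ∫ z, G z = ((∫ t in (0 : ℝ)..1, g t : ℝ) : ℂ) := by
    rw [← intervalIntegral.integral_ofReal, ← UnitAddCircle.intervalIntegral_preimage 0, zero_add]
    rfl
  have horbit (i : ℕ) : G (x + i • (ω : UnitAddCircle)) = (g (x + i * ω) : ℂ) := by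
    rw [← AddCircle.coe_nsmul, ← AddCircle.coe_add, nsmul_eq_mul]
    rfl
  rw [rotationDiscrepancy, hmean, Finset.sum_congr rfl fun i _ => horbit i, ← Real.norm_eq_abs,
    ← Complex.norm_real]
  push_cast
  rfl

end Equidistribution

/-! ### Vanishing of the Lyapunov exponent -/

lemma exists_abs_le_of_continuous_of_periodic {g : ℝ → ℝ} {c : ℝ} (hg : Continuous g)
    (hp : Function.Periodic g c) (hc : c ≠ 0) : ∃ K, ∀ x, |g x| ≤ K := by
  obtain ⟨K, hK⟩ := (hp.isBounded_of_continuous hc hg).exists_norm_le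
  exact ⟨K, fun x => hK (g x) ⟨x, rfl⟩⟩

section ZeroExponent

variable {ω : ℝ} {f : ℝ → ℝ}

lemma exists_abs_log_orbitProd_le (hω : Irrational ω) (hf : ∀ x, 0 < f x) (hc : Continuous f)
    (hp : Function.Periodic f 1) (h0 : ∫ x in (0 : ℝ)..1, Real.log (f x) = 0) {ε : ℝ}
    (hε : 0 < ε) : ∃ c, ∀ (n : ℕ) (x : ℝ), |Real.log (orbitProd ω f n x)| ≤ ε * n + c := by
  obtain ⟨c, h⟩ := exists_abs_sum_sub_integral_le hω (hc.log fun x => (hf x).ne')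
    (hp.comp Real.log) hε
  refine ⟨c, fun n x => ?_⟩
  simpa only [log_orbitProd hf, h0, mul_zero, sub_zero] using h n x

lemma orbitProd_mul_wronskianSum_le (hf : ∀ x, 0 < f x) {n : ℕ} {x T : ℝ}
    (hT : orbitProd ω f n x ≤ T) (hT' : ∀ i ≤ n, (orbitProd ω f i x)⁻¹ ≤ T) :
    orbitProd ω f n x * wronskianSum ω f n x ≤ n * T ^ 3 := by
  have hP (i : ℕ) := orbitProd_pos (ω := ω) hf i x
  have hT0 : 0 ≤ T := (hP n).le.trans hT
  have hsum : wronskianSum ω f n x ≤ n * (T * T) := by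
    refine (Finset.sum_le_card_nsmul _ _ (T * T) fun i hi => ?_).trans (by simp)
    have hin := Finset.mem_range.1 hi
    rw [one_div, mul_inv]
    exact mul_le_mul (hT' i hin.le) (hT' (i + 1) hin) (inv_nonneg.2 (hP _).le) hT0
  calc orbitProd ω f n x * wronskianSum ω f n x
      ≤ T * (n * (T * T)) := mul_le_mul hT hsum (wronskianSum_nonneg hf n x) hT0
    _ = n * T ^ 3 := by ring

lemma opNorm_orbitProd_matrix_le (hf : ∀ x, 0 < f x) {n : ℕ} {x T : ℝ}
    (hT : ∀ i ≤ n, orbitProd ω f i x ≤ T) (hT' : ∀ i ≤ n, (orbitProd ω f i x)⁻¹ ≤ T) :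
    opNorm !![orbitProd ω f n x, -(orbitProd ω f n x * wronskianSum ω f n x);
      0, 1 / orbitProd ω f n x] ≤ 2 * ((n + 1) * T ^ 3) := by
  have hP := orbitProd_pos (ω := ω) hf n x
  have hN := wronskianSum_nonneg (ω := ω) hf n x
  have hT1 : 1 ≤ T := by simpa only [orbitProd_zero] using hT 0 n.zero_le
  have hcube : T ≤ T ^ 3 := le_self_pow₀ hT1 three_ne_zero
  have hcube_le : T ^ 3 ≤ (n + 1) * T ^ 3 :=
    le_mul_of_one_le_left (by positivity) (le_add_of_nonneg_left n.cast_nonneg)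
  have hoff : orbitProd ω f n x * wronskianSum ω f n x ≤ (n + 1) * T ^ 3 :=
    (orbitProd_mul_wronskianSum_le hf (hT n le_rfl) hT').trans (by gcongr; linarith)
  have hdiag := ((hT n le_rfl).trans hcube).trans hcube_le
  have hdiag' := ((hT' n le_rfl).trans hcube).trans hcube_le
  have hzero : 0 ≤ (n + 1) * T ^ 3 := by positivity
  refine opNorm_le_two_mul fun i j => ?_
  fin_cases i <;> fin_cases j <;>
    simp [abs_mul, abs_of_pos hP, abs_of_nonneg hN, hoff, hdiag, hdiag', hzero]

lemma cocycle_riccatiPotential_eq (hf : ∀ x, 0 < f x) (n : ℕ) (x : ℝ) :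
    cocycle ω (SchrodingerCocycle (riccatiPotential ω f)) n x =
      !![f (x - ω + n * ω), -1; 1, 0] *
        !![orbitProd ω f n (x - ω), -(orbitProd ω f n (x - ω) * wronskianSum ω f n (x - ω));
          0, 1 / orbitProd ω f n (x - ω)] * !![0, 1; -1, f (x - ω)] := by
  have hinv : !![f (x - ω), -1; 1, 0] * !![0, 1; -1, f (x - ω)] = 1 := by
    simp [Matrix.one_fin_two]
  rw [← cocycle_riccatiPotential_mul hf, Matrix.mul_assoc, hinv, Matrix.mul_one]

lemma opNorm_cocycle_riccatiPotential_le (hf : ∀ x, 0 < f x) {K : ℝ} (hK : 1 ≤ K)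
    (hfK : ∀ x, |f x| ≤ K) {n : ℕ} {x T : ℝ} (hT : ∀ i ≤ n, orbitProd ω f i (x - ω) ≤ T)
    (hT' : ∀ i ≤ n, (orbitProd ω f i (x - ω))⁻¹ ≤ T) :
    opNorm (cocycle ω (SchrodingerCocycle (riccatiPotential ω f)) n x) ≤
      8 * K ^ 2 * ((n + 1) * T ^ 3) := by
  have hT0 : 0 ≤ T := (orbitProd_pos hf n _).le.trans (hT n le_rfl)
  have hleft : opNorm !![f (x - ω + n * ω), -1; 1, 0] ≤ 2 * K :=
    opNorm_schrodingerCocycle_le (v := fun t => f (t - ω + n * ω)) hK (hfK _)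
  have hright : opNorm !![0, 1; -1, f (x - ω)] ≤ 2 * K := by
    have hfx := hfK (x - ω)
    refine opNorm_le_two_mul fun i j => ?_
    fin_cases i <;> fin_cases j <;> simp <;> linarith
  rw [cocycle_riccatiPotential_eq hf]
  calc _ ≤ 2 * K * (2 * ((n + 1) * T ^ 3)) * (2 * K) :=
        (opNorm_mul_le _ _).trans <| mul_le_mul ((opNorm_mul_le _ _).trans <|
          mul_le_mul hleft (opNorm_orbitProd_matrix_le hf hT hT') (opNorm_nonneg _)
            (by positivity)) hright (opNorm_nonneg _) (by positivity)
    _ = 8 * K ^ 2 * ((n + 1) * T ^ 3) := by ring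

lemma log_opNorm_cocycle_riccatiPotential_le (hf : ∀ x, 0 < f x) {K : ℝ} (hK : 1 ≤ K)
    (hfK : ∀ x, |f x| ≤ K) {n : ℕ} {x e : ℝ}
    (he : ∀ i ≤ n, |Real.log (orbitProd ω f i (x - ω))| ≤ e) :
    Real.log (opNorm (cocycle ω (SchrodingerCocycle (riccatiPotential ω f)) n x)) ≤
      Real.log (8 * K ^ 2) + Real.log (n + 1) + 3 * e := by
  have hP (i : ℕ) := orbitProd_pos (ω := ω) hf i (x - ω)
  have hle := opNorm_cocycle_riccatiPotential_le hf hK hfK (T := Real.exp e)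
    (fun i hi => (Real.log_le_iff_le_exp (hP i)).1 (abs_le.1 (he i hi)).2)
    (fun i hi => (Real.log_le_iff_le_exp (inv_pos.2 (hP i))).1 <| by
      rw [Real.log_inv, neg_le]
      exact (abs_le.1 (he i hi)).1)
  calc _ ≤ Real.log (8 * K ^ 2 * ((n + 1) * Real.exp e ^ 3)) :=
        Real.log_le_log (one_pos.trans_le (one_le_opNorm_cocycle (det_schrodingerCocycle _) n x))
          hle
    _ = Real.log (8 * K ^ 2) + Real.log (n + 1) + 3 * e := by
        rw [Real.log_mul (by positivity) (by positivity),
          Real.log_mul (x := (n : ℝ) + 1) (by positivity) (by positivity), ← Real.exp_nat_mul,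
          Real.log_exp, Nat.cast_ofNat, add_assoc]

lemma log_natCast_add_one_le {ε : ℝ} (hε : 0 < ε) (n : ℕ) :
    Real.log (n + 1) ≤ Real.log (1 + 1 / ε) + ε * n := by
  have hcancel : 1 / ε * (ε * n) = n := by field_simp
  rw [Real.log_le_iff_le_exp (by positivity), Real.exp_add, Real.exp_log (by positivity)]
  calc (n : ℝ) + 1 ≤ (1 + 1 / ε) * (ε * n + 1) := by
        rw [one_add_mul, mul_add, hcancel, mul_one]
        linarith [show 0 ≤ ε * n by positivity, show 0 ≤ 1 / ε by positivity]
    _ ≤ (1 + 1 / ε) * Real.exp (ε * n) := by gcongr; exact Real.add_one_le_exp _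

lemma LEn_le_of_forall_log_opNorm_le {A : ℝ → Matrix (Fin 2) (Fin 2) ℝ} (hA : Continuous A)
    (hdet : ∀ x, (A x).det = 1) {n : ℕ} {b : ℝ}
    (hb : ∀ x, Real.log (opNorm (cocycle ω A n x)) ≤ b) : LEn ω A n ≤ b / n := by
  have hint := intervalIntegral.integral_mono (a := 0) (b := 1) (μ := volume) zero_le_one
    ((continuous_log_opNorm_cocycle (ω := ω) hA hdet n).intervalIntegrable _ _)
    intervalIntegrable_const hb
  rw [intervalIntegral.integral_const, sub_zero, one_smul] at hint
  rw [LEn, one_div, ← div_eq_inv_mul]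
  gcongr

lemma exists_LEn_le (hω : Irrational ω) (hf : ∀ x, 0 < f x) (hc : Continuous f)
    (hp : Function.Periodic f 1) (h0 : ∫ x in (0 : ℝ)..1, Real.log (f x) = 0) {ε : ℝ}
    (hε : 0 < ε) : ∃ D, ∀ n : ℕ, 1 ≤ n →
      LEn ω (SchrodingerCocycle (riccatiPotential ω f)) n ≤ D / n + 4 * ε := by
  obtain ⟨K, hK⟩ := exists_abs_le_of_continuous_of_periodic hc hp one_ne_zero
  obtain ⟨c, hP⟩ := exists_abs_log_orbitProd_le hω hf hc hp h0 hε
  refine ⟨Real.log (8 * max K 1 ^ 2) + Real.log (1 + 1 / ε) + 3 * c, fun n hn => ?_⟩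
  have hlog (x : ℝ) :
      Real.log (opNorm (cocycle ω (SchrodingerCocycle (riccatiPotential ω f)) n x)) ≤
        Real.log (8 * max K 1 ^ 2) + Real.log (1 + 1 / ε) + 3 * c + 4 * ε * n := by
    have hle := log_opNorm_cocycle_riccatiPotential_le hf (le_max_right K 1)
      (fun x => (hK x).trans (le_max_left K 1)) (x := x)
      fun i (hi : i ≤ n) => (hP i (x - ω)).trans (show _ ≤ ε * n + c by gcongr)
    linarith [log_natCast_add_one_le hε n]
  have hw := (contDiff_riccatiPotential (ω := ω) (contDiff_zero.2 hc) hf).continuous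
  refine (LEn_le_of_forall_log_opNorm_le (continuous_schrodingerCocycle hw)
    (det_schrodingerCocycle _) hlog).trans_eq ?_
  rw [add_div, mul_div_cancel_right₀ _ (by positivity)]

theorem tendsto_LEn_zero_of_integral_log_eq_zero (hω : Irrational ω) (hf : ∀ x, 0 < f x)
    (hc : Continuous f) (hp : Function.Periodic f 1)
    (h0 : ∫ x in (0 : ℝ)..1, Real.log (f x) = 0) :
    Tendsto (LEn ω (SchrodingerCocycle (riccatiPotential ω f))) atTop (nhds 0) := by
  refine tendsto_order.2 ⟨fun a ha => .of_forall fun n =>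
    ha.trans_le (LEn_nonneg (det_schrodingerCocycle _) n), fun a ha => ?_⟩
  obtain ⟨D, hD⟩ := exists_LEn_le hω hf hc hp h0 (show 0 < a / 8 by positivity)
  filter_upwards [(tendsto_const_div_atTop_nhds_zero_nat D).eventually_lt_const (half_pos ha),
    eventually_ge_atTop 1] with n hn h1
  linarith [hD n h1]

end ZeroExponent

/-! ### Limits of potentials -/

/-- The functions `g` and `h` are at distance at most `r` in the `C^l` norm. -/
def ClDistLE (l : ℕ) (g h : ℝ → ℝ) (r : ℝ) : Prop :=
  ∀ m ≤ l, ∀ x, |iteratedDeriv m (fun y => g y - h y) x| ≤ r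

namespace ClDistLE

variable {l : ℕ} {f g h : ℝ → ℝ} {r s : ℝ}

lemma mono (hgh : ClDistLE l g h r) (hrs : r ≤ s) : ClDistLE l g h s :=
  fun m hm x => (hgh m hm x).trans hrs

lemma abs_sub_le (hgh : ClDistLE l g h r) (x : ℝ) : |g x - h x| ≤ r := by
  simpa only [iteratedDeriv_zero] using hgh 0 l.zero_le x

lemma symm (hgh : ClDistLE l g h r) : ClDistLE l h g r := fun m hm x => by
  simpa only [← iteratedDeriv_fun_neg, neg_sub, abs_neg] using
    (abs_neg (iteratedDeriv m (fun y => g y - h y) x)).trans_le (hgh m hm x)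

lemma trans (hf : ContDiff ℝ l f) (hg : ContDiff ℝ l g) (hh : ContDiff ℝ l h)
    (hfg : ClDistLE l f g r) (hgh : ClDistLE l g h s) : ClDistLE l f h (r + s) := fun m hm x => by
  have hml : (m : WithTop ℕ∞) ≤ l := mod_cast hm
  have hsplit : (fun y => f y - h y) = fun y => (f y - g y) + (g y - h y) :=
    funext fun y => (sub_add_sub_cancel _ _ _).symm
  rw [hsplit, iteratedDeriv_fun_add ((hf.sub hg).of_le hml).contDiffAt
    ((hg.sub hh).of_le hml).contDiffAt]
  exact (abs_add_le _ _).trans (add_le_add (hfg m hm x) (hgh m hm x))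

end ClDistLE

section Series

variable {l : ℕ} {d : ℕ → ℝ → ℝ} {u : ℕ → ℝ}

lemma contDiff_tsum_of_abs_iteratedDeriv_le (hd : ∀ k, ContDiff ℝ l (d k)) (hu : Summable u)
    (hb : ∀ k, ∀ m ≤ l, ∀ x, |iteratedDeriv m (d k) x| ≤ u k) :
    ContDiff ℝ l (fun x => ∑' k, d k x) :=
  contDiff_tsum (N := (l : ℕ∞)) (v := fun _ => u) hd (fun _ _ => hu) fun m k x hm => by
    rw [norm_iteratedFDeriv_eq_norm_iteratedDeriv]
    exact hb k m (mod_cast hm) x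

lemma abs_iteratedDeriv_tsum_le (hd : ∀ k, ContDiff ℝ l (d k)) (hu : Summable u)
    (hb : ∀ k, ∀ m ≤ l, ∀ x, |iteratedDeriv m (d k) x| ≤ u k) {m : ℕ} (hm : m ≤ l) (x : ℝ) :
    |iteratedDeriv m (fun x => ∑' k, d k x) x| ≤ ∑' k, u k := by
  have hnorm (i k : ℕ) (y : ℝ) (hi : (i : ℕ∞) ≤ l) : ‖iteratedFDeriv ℝ i (d k) y‖ ≤ u k := by
    rw [norm_iteratedFDeriv_eq_norm_iteratedDeriv]
    exact hb k i (mod_cast hi) y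
  rw [← Real.norm_eq_abs, ← norm_iteratedFDeriv_eq_norm_iteratedDeriv,
    iteratedFDeriv_tsum_apply (N := (l : ℕ∞)) hd (fun _ _ => hu) hnorm (mod_cast hm)]
  exact tsum_of_norm_bounded hu.hasSum fun k => hnorm m k x (mod_cast hm)

theorem exists_contDiff_clDistLE_tsum {w : ℕ → ℝ → ℝ} (hw : ∀ n, ContDiff ℝ l (w n))
    (hu : Summable u) (hstep : ∀ n, ClDistLE l (w (n + 1)) (w n) (u n)) :
    ∃ v : ℝ → ℝ, ContDiff ℝ l v ∧ ∀ n, ClDistLE l v (w n) (∑' k, u (k + n)) := by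
  have hd (n : ℕ) : ContDiff ℝ l fun x => w (n + 1) x - w n x := (hw (n + 1)).sub (hw n)
  have hsum (x : ℝ) : Summable fun k => w (k + 1) x - w k x :=
    .of_norm_bounded hu fun k => (hstep k).abs_sub_le x
  refine ⟨fun x => w 0 x + ∑' k, (w (k + 1) x - w k x),
    (hw 0).add (contDiff_tsum_of_abs_iteratedDeriv_le hd hu hstep), fun n m hm x => ?_⟩
  have htail : (fun y => w 0 y + ∑' k, (w (k + 1) y - w k y) - w n y) =
      fun y => ∑' k, (w (k + n + 1) y - w (k + n) y) := by
    funext y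
    rw [← (hsum y).sum_add_tsum_nat_add n, Finset.sum_range_sub (fun k => w k y)]
    ring
  rw [htail]
  exact abs_iteratedDeriv_tsum_le (fun k => hd (k + n)) ((summable_nat_add_iff n).2 hu)
    (fun k => hstep (k + n)) hm x

end Series

section Limit

variable {l : ℕ} {v : ℝ → ℝ} {w : ℕ → ℝ → ℝ} {ε : ℕ → ℝ}

lemma tendsto_apply_of_clDistLE (hε : Tendsto ε atTop (nhds 0))
    (hvw : ∀ n, ClDistLE l v (w n) (ε n)) (x : ℝ) : Tendsto (w · x) atTop (nhds (v x)) :=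
  tendsto_iff_dist_tendsto_zero.2 <| squeeze_zero (fun _ => dist_nonneg)
    (fun n => (hvw n).symm.abs_sub_le x) hε

lemma periodic_of_tendsto {c : ℝ} (hw : ∀ n, Function.Periodic (w n) c)
    (hlim : ∀ x, Tendsto (w · x) atTop (nhds (v x))) : Function.Periodic v c := fun x =>
  tendsto_nhds_unique ((hlim (x + c)).congr fun n => hw n x) (hlim x)

lemma le_LEn_of_clDistLE {ω c : ℝ} {n : ℕ} (hv : Continuous v) (hvp : Function.Periodic v 1)
    (hw : ∀ k, Continuous (w k)) (hε : Tendsto ε atTop (nhds 0))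
    (hvw : ∀ k, ClDistLE l v (w k) (ε k))
    (hc : ∀ k, c ≤ LEn ω (SchrodingerCocycle (w k)) n) : c ≤ LEn ω (SchrodingerCocycle v) n := by
  obtain ⟨K, hK⟩ := exists_abs_le_of_continuous_of_periodic hv hvp one_ne_zero
  obtain ⟨E, hE⟩ := hε.bddAbove_range
  have hbound (k : ℕ) (x : ℝ) : |w k x| ≤ E + K := by
    have htri := abs_add_le (w k x - v x) (v x)
    rw [sub_add_cancel] at htri
    linarith [(hvw k).symm.abs_sub_le x, hE (Set.mem_range_self k), hK x]
  exact ge_of_tendsto' (tendsto_LEn_schrodingerCocycle ω hw hbound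
    (tendsto_apply_of_clDistLE hε hvw) n) hc

lemma exists_pos_tendsto_LEn {ω c : ℝ} (hv : Continuous v) (hvp : Function.Periodic v 1)
    (hc : 0 < c) (hle : ∀ n, 1 ≤ n → c ≤ LEn ω (SchrodingerCocycle v) n) :
    ∃ L, 0 < L ∧ Tendsto (LEn ω (SchrodingerCocycle v)) atTop (nhds L) := by
  obtain ⟨L, hL⟩ := exists_tendsto_LEn (ω := ω) (continuous_schrodingerCocycle hv)
    (det_schrodingerCocycle v) (periodic_schrodingerCocycle hvp)
  exact ⟨L, hc.trans_le (ge_of_tendsto hL (eventually_atTop.2 ⟨1, hle⟩)), hL⟩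

end Limit

/-! ### Stages of the construction -/

/-- The real number `y` is so large that the error terms of a damping step at scale `y` are
negligible: `η` is the gain of the separation scales, `D` the growth factor between them, and `K`
the constant of the derivative bounds. -/
structure IsLargeScale (η D K : ℝ) (l : ℕ) (y : ℝ) : Prop where
  four_le : 4 ≤ y
  three_mul_le : 3 * K ≤ y
  eight_div_le_sqrt : 8 / η ≤ √y
  five_mul_sqrt_add_two_le : 5 * √y + 2 ≤ η * y / 2
  pow_mul_exp_le : (6 * K * (D * y ^ 4) ^ 3) ^ l * (2 * Real.exp (1 - √y)) ≤ 1 / y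

lemma eventually_mul_sqrt_add_two_le {η : ℝ} (hη : 0 < η) :
    ∀ᶠ y : ℝ in atTop, 5 * √y + 2 ≤ η * y / 2 := by
  filter_upwards [Real.tendsto_sqrt_atTop.eventually_ge_atTop (14 / η),
    Real.tendsto_sqrt_atTop.eventually_ge_atTop 1, eventually_ge_atTop 0] with y hy hy₁ hy₀
  rw [div_le_iff₀ hη] at hy
  nlinarith [Real.sq_sqrt hy₀]

lemma eventually_pow_mul_exp_neg_sqrt_le (D K : ℝ) (l : ℕ) :
    ∀ᶠ y : ℝ in atTop, (6 * K * (D * y ^ 4) ^ 3) ^ l * (2 * Real.exp (1 - √y)) ≤ 1 / y := by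
  have hlim := ((Real.tendsto_pow_mul_exp_neg_atTop_nhds_zero (24 * l + 2)).comp
    Real.tendsto_sqrt_atTop).const_mul ((6 * K * D ^ 3) ^ l * (2 * Real.exp 1))
  rw [mul_zero] at hlim
  filter_upwards [hlim.eventually_le_const one_pos, eventually_gt_atTop 0] with y hle hy
  have hsqrt : √y ^ (24 * l + 2) = y ^ (12 * l) * y := by
    rw [show 24 * l + 2 = 2 * (12 * l + 1) by ring, pow_mul, Real.sq_sqrt hy.le, pow_succ]
  rw [le_div_iff₀ hy]
  refine le_of_eq_of_le ?_ hle
  rw [Function.comp_apply, hsqrt, sub_eq_add_neg, Real.exp_add,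
    show 6 * K * (D * y ^ 4) ^ 3 = 6 * K * D ^ 3 * y ^ 12 by ring, mul_pow, ← pow_mul]
  ring

lemma eventually_isLargeScale {η : ℝ} (hη : 0 < η) (D K : ℝ) (l : ℕ) :
    ∀ᶠ y : ℝ in atTop, IsLargeScale η D K l y := by
  filter_upwards [eventually_ge_atTop (4 : ℝ), eventually_ge_atTop (3 * K),
    Real.tendsto_sqrt_atTop.eventually_ge_atTop (8 / η), eventually_mul_sqrt_add_two_le hη,
    eventually_pow_mul_exp_neg_sqrt_le D K l] with y h₁ h₂ h₃ h₄ h₅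
  exact ⟨h₁, h₂, h₃, h₄, h₅⟩

/-- The parameters fixed throughout the construction: the gain `η` of the separation scales, the
growth factor `D` between them, and a bump `ψ`, nearly the indicator function of `[-1/2, 1/2]`,
whose derivatives of order `m ≤ l` are bounded by `B ^ m`. -/
structure ConstructionParams (ω : ℝ) (l : ℕ) where
  η : ℝ
  D : ℝ
  ψ : ContDiffBump (0 : ℝ)
  B : ℝ
  η_pos : 0 < η
  η_le : η ≤ 1 / 6
  one_le_D : 1 ≤ D
  rIn_eq : ψ.rIn = (1 - η / 4) / 2
  rOut_eq : ψ.rOut = (1 - η / 8) / 2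
  one_le_B : 1 ≤ B
  abs_iteratedDeriv_bump_le : ∀ m ≤ l, ∀ y, |iteratedDeriv m ψ y| ≤ B ^ m
  exists_scale {X : ℝ} (hX : 1 ≤ X) :
    ∃ (R : ℕ) (ℓ : ℝ), X ≤ R ∧ R ≤ D * X ∧ SeparationScale ω η R ℓ

lemma nonempty_constructionParams {ω : ℝ} (hω : Irrational ω) {M : ℝ} (hM : 1 ≤ M)
    (hbt : ∀ k, cfDen ω (k + 1) ≤ M * cfDen ω k) (l : ℕ) :
    Nonempty (ConstructionParams ω l) := by
  have hη : 0 < 1 / (2 * (2 * M + 1)) := by positivity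
  have hη_le : 1 / (2 * (2 * M + 1)) ≤ 1 / 6 :=
    one_div_le_one_div_of_le (by norm_num) (by linarith)
  have hscale {X : ℝ} (hX : 1 ≤ X) := exists_separationScale hω hM hbt hX
  generalize 1 / (2 * (2 * M + 1)) = η at hη hη_le hscale
  let ψ : ContDiffBump (0 : ℝ) :=
    ⟨(1 - η / 4) / 2, (1 - η / 8) / 2, by linarith, by linarith⟩
  obtain ⟨B, hB, hderiv⟩ := exists_abs_iteratedDeriv_bump_le_pow ψ l
  exact ⟨⟨η, 2 * M ^ 2, ψ, B, hη, hη_le, by nlinarith, rfl, rfl, hB, hderiv, hscale⟩⟩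

/-- The growth rate guaranteed at scale `R`. The reserve `2 / √R` pays for the damping at all later
scales, so that the rate never drops below `1 - η / 4`. -/
noncomputable def guaranteedRate (η R : ℝ) : ℝ := 1 - η / 4 + 2 / √R

lemma guaranteedRate_le_sub {η R R' : ℝ} (hR : 0 < R) (hRR' : 16 * R ≤ R') :
    guaranteedRate η R' ≤ guaranteedRate η R - √R / (R + 1) := by
  have hsqrt := Real.sqrt_pos.2 hR
  have hsqrt_le : 2 * √R ≤ √R' := Real.le_sqrt_of_sq_le <| by
    rw [mul_pow, Real.sq_sqrt hR.le]
    linarith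
  have hloss : √R / (R + 1) ≤ 1 / √R := by
    rw [div_le_div_iff₀ (by positivity) hsqrt, Real.mul_self_sqrt hR.le]
    linarith
  have hreserve : 2 / √R' ≤ 1 / √R := by
    rw [div_le_div_iff₀ (by linarith) hsqrt]
    linarith
  have hsplit : 2 / √R = 1 / √R + 1 / √R := by ring
  rw [guaranteedRate, guaranteedRate]
  linarith

lemma guaranteedRate_le_one {η R : ℝ} (hη : 0 < η) (hR : 0 < R) (hηR : 8 / η ≤ √R) :
    guaranteedRate η R ≤ 1 := by
  rw [div_le_iff₀ hη] at hηR
  have hreserve : 2 / √R ≤ η / 4 := by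
    rw [div_le_iff₀ (Real.sqrt_pos.2 hR)]
    linarith
  rw [guaranteedRate]
  linarith

namespace SeparationScale

variable {ω η ℓ : ℝ} {R : ℕ}

lemma length_le_one (h : SeparationScale ω η R ℓ) : ℓ ≤ 1 :=
  (le_mul_of_one_le_left h.pos.le (le_add_of_nonneg_left R.cast_nonneg)).trans h.le_one

lemma periodicBump_eq_zero_or_add (h : SeparationScale ω η R ℓ) {ψ : ContDiffBump (0 : ℝ)}
    (hψ : ψ.rOut < 1 / 2) {j : ℕ} (hj : 1 ≤ j) (hjR : j ≤ R) (x : ℝ) :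
    periodicBump ψ ℓ x = 0 ∨ periodicBump ψ ℓ (x + j * ω) = 0 := by
  by_contra! hne
  obtain ⟨m, hm⟩ := exists_int_near_of_mem_nearInt_add
    (not_imp_comm.1 (periodicBump_eq_zero ψ h.pos) hne.1)
    (not_imp_comm.1 (periodicBump_eq_zero ψ h.pos) hne.2)
  nlinarith [h.le_abs_sub hj hjR m, h.pos]

end SeparationScale

namespace ConstructionParams

variable {ω : ℝ} {l : ℕ} (P : ConstructionParams ω l)

/-- The constant of the derivative bounds for a damping step with the bump `P.ψ`. -/
noncomputable def K : ℝ := 100 * (2 ^ l) ^ 3 * P.B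

lemma K_nonneg : 0 ≤ P.K := by
  have := P.one_le_B
  unfold K
  positivity

lemma dampedDerivConst_eq (R : ℕ) (κ C : ℝ) :
    dampedDerivConst l R P.B κ C = P.K * R ^ 2 * (1 + κ + C) := rfl

lemma rOut_lt : P.ψ.rOut < 1 / 2 := by
  linarith [P.rOut_eq, P.η_pos]

end ConstructionParams

/-- A stage of the construction: a positive ratio function `f` whose solution grows at the
guaranteed rate, together with the length `R` and the bump width `ℓ` of the next damping step. -/
structure Stage {ω : ℝ} {l : ℕ} (P : ConstructionParams ω l) where
  R : ℕ
  ℓ : ℝ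
  f : ℝ → ℝ
  isLargeScale {y : ℝ} (hy : R ≤ y) : IsLargeScale P.η P.D P.K l y
  separationScale : SeparationScale ω P.η R ℓ
  pos (x : ℝ) : 0 < f x
  periodic : Function.Periodic f 1
  le_exp_one (x : ℝ) : f x ≤ Real.exp 1
  derivDominated : DerivDominated l R f f
  exp_le_orbitProd (n : ℕ) (x : ℝ) :
    Real.exp (guaranteedRate P.η R * n - 2 * √R) ≤ orbitProd ω f n x
  le_integral_log : guaranteedRate P.η R ≤ ∫ x in (0 : ℝ)..1, Real.log (f x)

namespace Stage

variable {ω : ℝ} {l : ℕ} {P : ConstructionParams ω l} (S : Stage P) {κ : ℝ}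

lemma four_le : (4 : ℝ) ≤ S.R := (S.isLargeScale le_rfl).four_le

lemma one_le_length : 1 ≤ S.R := by
  exact_mod_cast (show (1 : ℝ) ≤ 4 by norm_num).trans S.four_le

lemma sqrt_le : √(S.R : ℝ) ≤ S.R :=
  Real.sqrt_le_left (by positivity) |>.2 (by nlinarith [S.four_le])

/-- The bump of the next damping step. -/
noncomputable def bump : ℝ → ℝ := periodicBump P.ψ S.ℓ

/-- The ratio function of the stage after a damping step of strength `κ`. -/
noncomputable def damped (κ : ℝ) : ℝ → ℝ := dampedRatio ω S.f S.bump κ S.R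

lemma dampingData (hκ : 0 ≤ κ) : DampingData ω S.f S.bump κ S.R where
  ratio_pos := S.pos
  one_le_length := S.one_le_length
  strength_nonneg := hκ
  bump_nonneg := periodicBump_nonneg P.ψ S.ℓ
  bump_le_one := periodicBump_le_one P.ψ S.ℓ
  bump_eq_zero_or_add := S.separationScale.periodicBump_eq_zero_or_add P.rOut_lt

lemma derivDominated_bump :
    DerivDominated l (P.B / S.ℓ) S.bump ((nearInt (P.ψ.rOut * S.ℓ)).indicator 1) :=
  derivDominated_periodicBump P.ψ P.abs_iteratedDeriv_bump_le P.rOut_lt S.separationScale.pos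
    S.separationScale.length_le_one

lemma half_le : 1 / 2 ≤ (S.R + 1) * S.ℓ := by
  linarith [S.separationScale.half_add_le, P.η_pos]

lemma damped_pos (hκ : 0 ≤ κ) (x : ℝ) : 0 < S.damped κ x := (S.dampingData hκ).dampedRatio_pos x

lemma damped_le_exp_one (hκ : 0 ≤ κ) (x : ℝ) : S.damped κ x ≤ Real.exp 1 :=
  ((S.dampingData hκ).dampedRatio_le x).trans (S.le_exp_one x)

lemma periodic_damped : Function.Periodic (S.damped κ) 1 :=
  periodic_dampedRatio S.periodic (periodic_periodicBump P.ψ S.ℓ)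

lemma derivDominated_damped (hκ : 0 ≤ κ) :
    DerivDominated l (dampedDerivConst l S.R P.B κ S.R) (S.damped κ) (S.damped κ) :=
  (S.dampingData hκ).derivDominated_dampedRatio_dampedDerivConst S.R.cast_nonneg S.derivDominated
    P.one_le_B S.separationScale.pos S.half_le S.derivDominated_bump

lemma integral_log_damped (hκ : 0 ≤ κ) :
    ∫ x in (0 : ℝ)..1, Real.log (S.damped κ x) =
      (∫ x in (0 : ℝ)..1, Real.log (S.f x)) - κ * ∫ x in (0 : ℝ)..1, S.bump x :=
  (S.dampingData hκ).integral_log_dampedRatio S.derivDominated.contDiff.continuous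
    S.derivDominated_bump.contDiff.continuous S.periodic (periodic_periodicBump P.ψ S.ℓ)

lemma half_le_integral_log : 1 / 2 ≤ ∫ x in (0 : ℝ)..1, Real.log (S.f x) := by
  have hreserve : 0 ≤ 2 / √(S.R : ℝ) := by positivity
  have hle := S.le_integral_log
  rw [guaranteedRate] at hle
  linarith [P.η_le]

lemma integral_log_le_one : ∫ x in (0 : ℝ)..1, Real.log (S.f x) ≤ 1 := by
  have hlog := S.derivDominated.contDiff.continuous.log fun x => (S.pos x).ne'
  have hle := intervalIntegral.integral_mono (a := 0) (b := 1) (μ := volume) zero_le_one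
    (hlog.intervalIntegrable _ _) intervalIntegrable_const
    fun x => (Real.log_le_iff_le_exp (S.pos x)).2 (S.le_exp_one x)
  simpa using hle

lemma integral_bump_le : ∫ x in (0 : ℝ)..1, S.bump x ≤ 1 / (S.R + 1) := by
  refine (integral_periodicBump_le P.ψ P.rOut_lt S.separationScale.pos
    S.separationScale.length_le_one).trans ?_
  rw [le_div_iff₀ (by positivity), mul_comm]
  exact S.separationScale.le_one

lemma le_integral_bump : (1 - P.η / 4) * S.ℓ ≤ ∫ x in (0 : ℝ)..1, S.bump x := by
  have hle := le_integral_periodicBump P.ψ P.rOut_lt S.separationScale.pos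
    S.separationScale.length_le_one
  rwa [P.rIn_eq, mul_div_cancel₀ _ two_ne_zero] at hle

lemma integral_bump_pos : 0 < ∫ x in (0 : ℝ)..1, S.bump x :=
  lt_of_lt_of_le (mul_pos (by linarith [P.η_le]) S.separationScale.pos) S.le_integral_bump

end Stage

/-- The stage `S'` arises from `S` by a damping step of strength `√R`, followed by the passage to a
scale of order `R ^ 4`. -/
structure Stage.IsNext {ω : ℝ} {l : ℕ} {P : ConstructionParams ω l} (S S' : Stage P) : Prop where
  eq_damped : S'.f = S.damped √S.R
  pow_le : (S.R : ℝ) ^ 4 ≤ S'.R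
  le_pow : (S'.R : ℝ) ≤ P.D * (S.R : ℝ) ^ 4

namespace Stage

variable {ω : ℝ} {l : ℕ} {P : ConstructionParams ω l} (S : Stage P) {κ : ℝ}

lemma sixteen_mul_le_pow : 16 * (S.R : ℝ) ≤ (S.R : ℝ) ^ 4 := by
  have := S.four_le
  calc 16 * (S.R : ℝ) ≤ 4 ^ 3 * S.R := by gcongr; norm_num
    _ ≤ (S.R : ℝ) ^ 3 * S.R := by gcongr
    _ = (S.R : ℝ) ^ 4 := (pow_succ _ 3).symm

lemma dampedDerivConst_sqrt_le : dampedDerivConst l S.R P.B √S.R S.R ≤ (S.R : ℝ) ^ 4 := by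
  have hK := P.K_nonneg
  rw [P.dampedDerivConst_eq]
  calc P.K * (S.R : ℝ) ^ 2 * (1 + √S.R + S.R) ≤ P.K * (S.R : ℝ) ^ 2 * (3 * S.R) := by
        gcongr
        linarith [S.four_le, S.sqrt_le]
    _ = 3 * P.K * (S.R : ℝ) ^ 3 := by ring
    _ ≤ S.R * (S.R : ℝ) ^ 3 := by
        gcongr
        exact (S.isLargeScale le_rfl).three_mul_le
    _ = (S.R : ℝ) ^ 4 := by ring

lemma exp_le_orbitProd_damped {R' : ℝ} (hR' : 16 * S.R ≤ R') (n : ℕ) (x : ℝ) :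
    Real.exp (guaranteedRate P.η R' * n - 2 * √R') ≤ orbitProd ω (S.damped √S.R) n x := by
  refine le_trans (Real.exp_le_exp.2 ?_)
    ((S.dampingData (Real.sqrt_nonneg _)).exp_le_orbitProd_dampedRatio S.exp_le_orbitProd n x)
  have hsqrt : 2 * √(S.R : ℝ) ≤ √R' := Real.le_sqrt_of_sq_le <| by
    rw [mul_pow, Real.sq_sqrt S.R.cast_nonneg]
    linarith [S.four_le]
  have hrate := mul_le_mul_of_nonneg_right
    (guaranteedRate_le_sub (η := P.η) (by linarith [S.four_le]) hR') n.cast_nonneg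
  linarith

lemma guaranteedRate_le_integral_log_damped {R' : ℝ} (hR' : 16 * S.R ≤ R') :
    guaranteedRate P.η R' ≤ ∫ x in (0 : ℝ)..1, Real.log (S.damped √S.R x) := by
  have hloss : √(S.R : ℝ) * ∫ x in (0 : ℝ)..1, S.bump x ≤ √S.R / (S.R + 1) := by
    rw [div_eq_mul_one_div]
    gcongr
    exact S.integral_bump_le
  rw [S.integral_log_damped (Real.sqrt_nonneg _)]
  linarith [guaranteedRate_le_sub (η := P.η) (by linarith [S.four_le]) hR', S.le_integral_log]

lemma exists_isNext : ∃ S' : Stage P, S.IsNext S' := by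
  have hR := S.four_le
  have hκ := Real.sqrt_nonneg (S.R : ℝ)
  obtain ⟨R', ℓ', hle, hle', hscale⟩ := P.exists_scale (X := (S.R : ℝ) ^ 4)
    (one_le_pow₀ (by linarith))
  have hR' : 16 * (S.R : ℝ) ≤ R' := S.sixteen_mul_le_pow.trans hle
  refine ⟨{
    R := R'
    ℓ := ℓ'
    f := S.damped √S.R
    isLargeScale := fun hy => S.isLargeScale (by linarith)
    separationScale := hscale
    pos := S.damped_pos hκ
    periodic := S.periodic_damped
    le_exp_one := S.damped_le_exp_one hκ
    derivDominated := (S.derivDominated_damped hκ).mono_const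
      (zero_le_one.trans <| one_le_dampedDerivConst P.one_le_B S.one_le_length hκ
        S.R.cast_nonneg) (S.dampedDerivConst_sqrt_le.trans hle)
    exp_le_orbitProd := S.exp_le_orbitProd_damped hR'
    le_integral_log := S.guaranteedRate_le_integral_log_damped hR' }, rfl, hle, hle'⟩

variable (P) in
lemma nonempty_stage : Nonempty (Stage P) := by
  obtain ⟨X, hX⟩ := eventually_atTop.1 (eventually_isLargeScale P.η_pos P.D P.K l)
  obtain ⟨R, ℓ, hR, -, hscale⟩ := P.exists_scale (le_max_right X 1)
  have hlarge {y : ℝ} (hy : R ≤ y) := hX y (((le_max_left X 1).trans hR).trans hy)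
  have hrate : guaranteedRate P.η R ≤ 1 := guaranteedRate_le_one P.η_pos
    (by linarith [(hlarge le_rfl).four_le]) (hlarge le_rfl).eight_div_le_sqrt
  refine ⟨{
    R := R
    ℓ := ℓ
    f := fun _ => Real.exp 1
    isLargeScale := hlarge
    separationScale := hscale
    pos := fun _ => Real.exp_pos 1
    periodic := fun _ => rfl
    le_exp_one := fun _ => le_rfl
    derivDominated := by
      simpa only [abs_of_pos (Real.exp_pos 1)] using
        DerivDominated.const (l := l) R.cast_nonneg (Real.exp 1)
    exp_le_orbitProd := fun n x => ?_
    le_integral_log := by simpa using hrate }⟩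
  rw [orbitProd, Finset.prod_const, Finset.card_range, ← Real.exp_nat_mul]
  refine Real.exp_le_exp.2 ?_
  nlinarith [Real.sqrt_nonneg (R : ℝ), n.cast_nonneg (α := ℝ)]

variable (P) in
lemma exists_seq_isNext : ∃ S : ℕ → Stage P, ∀ n, (S n).IsNext (S (n + 1)) := by
  choose next hnext using exists_isNext (P := P)
  obtain ⟨S₀⟩ := nonempty_stage P
  refine ⟨fun n => next^[n] S₀, fun n => ?_⟩
  simpa only [Function.iterate_succ_apply'] using hnext (next^[n] S₀)

lemma two_pow_le_of_isNext {S : ℕ → Stage P} (hS : ∀ n, (S n).IsNext (S (n + 1))) (n : ℕ) :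
    (2 : ℝ) ^ n ≤ (S n).R := by
  induction n with
  | zero => linarith [(S 0).four_le, pow_zero (2 : ℝ)]
  | succ n ih => linarith [(S n).sixteen_mul_le_pow, (hS n).pow_le, pow_succ (2 : ℝ) n]

/-- The strength of the damping step that makes the mean of `log f` vanish. -/
noncomputable def nullStrength : ℝ :=
  (∫ x in (0 : ℝ)..1, Real.log (S.f x)) / ∫ x in (0 : ℝ)..1, S.bump x

lemma nullStrength_nonneg : 0 ≤ S.nullStrength :=
  div_nonneg (by linarith [S.half_le_integral_log]) S.integral_bump_pos.le

/- This is where bounded type enters: a damping of strength `κ` over `R` steps is invisible only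
for `κ < 2 * R`, and `1 / 2 + η ≤ (R + 1) * ℓ` keeps the required strength below that. -/
lemma nullStrength_le : S.nullStrength ≤ 2 * (S.R + 1) * (1 - P.η / 2) := by
  have hη := P.η_pos
  have hη' := P.η_le
  have hgain : 1 ≤ (1 - P.η / 2) * (1 - P.η / 4) * (2 * (1 / 2 + P.η)) := by
    nlinarith [mul_pos hη hη, mul_pos hη (mul_pos hη hη)]
  have hhalf : 0 ≤ 1 - P.η / 2 := by linarith
  have hquarter : 0 ≤ 1 - P.η / 4 := by linarith
  rw [nullStrength, div_le_iff₀ S.integral_bump_pos]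
  calc _ ≤ 1 := S.integral_log_le_one
    _ ≤ (1 - P.η / 2) * (1 - P.η / 4) * (2 * (1 / 2 + P.η)) := hgain
    _ ≤ (1 - P.η / 2) * (1 - P.η / 4) * (2 * ((S.R + 1) * S.ℓ)) := by
        gcongr
        exact S.separationScale.half_add_le
    _ = 2 * (S.R + 1) * (1 - P.η / 2) * ((1 - P.η / 4) * S.ℓ) := by ring
    _ ≤ _ := by
        gcongr
        exact S.le_integral_bump

lemma sqrt_le_two_mul : √(S.R : ℝ) ≤ 2 * (S.R + 1) * (1 - P.η / 2) := by
  nlinarith [S.sqrt_le, S.four_le, P.η_le]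

lemma integral_log_damped_nullStrength :
    ∫ x in (0 : ℝ)..1, Real.log (S.damped S.nullStrength x) = 0 := by
  rw [S.integral_log_damped S.nullStrength_nonneg, nullStrength,
    div_mul_cancel₀ _ S.integral_bump_pos.ne', sub_self]

namespace IsNext

variable {S} {S' : Stage P}

lemma sixteen_mul_le (h : S.IsNext S') : 16 * (S.R : ℝ) ≤ S'.R :=
  S.sixteen_mul_le_pow.trans h.pow_le

lemma four_mul_width_le (h : S.IsNext S') : 4 * S'.ℓ ≤ S.ℓ := by
  have hR := S.four_le
  refine le_of_mul_le_mul_left ?_ (show 0 < (S.R : ℝ) + 1 by positivity)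
  nlinarith [S.half_le, S'.separationScale.le_one, h.sixteen_mul_le, S'.separationScale.pos]

lemma bump_eq_one (h : S.IsNext S') {x : ℝ} (hx : x ∈ nearInt (P.ψ.rOut * S'.ℓ)) :
    S.bump x = 1 := by
  refine periodicBump_eq_one P.ψ S.separationScale.pos (hx.out.trans ?_)
  rw [P.rIn_eq, P.rOut_eq]
  nlinarith [h.four_mul_width_le, S'.separationScale.pos, P.η_pos, P.η_le]

lemma one_div_wronskianSum_le (h : S.IsNext S') {x : ℝ} (hx : x ∈ nearInt (P.ψ.rOut * S'.ℓ)) :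
    1 / wronskianSum ω S'.f S'.R x ≤ Real.exp (1 - √S.R) := by
  have hdata := S.dampingData (Real.sqrt_nonneg S.R)
  have hRR' : S.R ≤ S'.R := by
    exact_mod_cast (show (S.R : ℝ) ≤ S'.R by linarith [h.sixteen_mul_le, S.four_le])
  have hone : Real.exp (-1) ≤ wronskianSum ω S.f S.R x := by
    refine le_trans ?_ (one_div_le_wronskianSum S.pos S.one_le_length x)
    rw [Real.exp_neg, ← one_div]
    exact one_div_le_one_div_of_le (S.pos x) (S.le_exp_one x)
  have hbig : Real.exp (√S.R - 1) ≤ wronskianSum ω S'.f S'.R x := by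
    calc Real.exp (√S.R - 1) = Real.exp √S.R * Real.exp (-1) := by
          rw [sub_eq_add_neg, Real.exp_add]
      _ ≤ Real.exp √S.R * wronskianSum ω S.f S.R x := by gcongr
      _ = wronskianSum ω S'.f S.R x := by
          rw [h.eq_damped, damped, hdata.wronskianSum_dampedRatio_of_bump_eq_one (h.bump_eq_one hx)]
      _ ≤ wronskianSum ω S'.f S'.R x := wronskianSum_mono S'.pos hRR' x
  refine (one_div_le_one_div_of_le (Real.exp_pos _) hbig).trans_eq ?_
  rw [one_div, ← Real.exp_neg, neg_sub]

lemma dampedDerivConst_le (h : S.IsNext S') (hκ : κ ≤ 2 * (S'.R + 1) * (1 - P.η / 2)) :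
    dampedDerivConst l S'.R P.B κ S'.R ≤ 6 * P.K * (P.D * (S.R : ℝ) ^ 4) ^ 3 := by
  have hK := P.K_nonneg
  rw [P.dampedDerivConst_eq]
  calc P.K * (S'.R : ℝ) ^ 2 * (1 + κ + S'.R) ≤ P.K * (S'.R : ℝ) ^ 2 * (6 * S'.R) := by
        gcongr
        nlinarith [S'.four_le, P.η_pos]
    _ = 6 * P.K * (S'.R : ℝ) ^ 3 := by ring
    _ ≤ _ := by
        gcongr
        exact h.le_pow

lemma exp_sub_two_mul_rate_le (h : S.IsNext S') (hκ : κ ≤ 2 * (S'.R + 1) * (1 - P.η / 2)) :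
    Real.exp (1 + κ - 2 * (guaranteedRate P.η S'.R * S'.R - 2 * √S'.R)) ≤
      Real.exp (1 - √S.R) := by
  refine Real.exp_le_exp.2 ?_
  have hsqrt : √(S.R : ℝ) ≤ √S'.R :=
    Real.sqrt_le_sqrt (by linarith [h.sixteen_mul_le, S.four_le])
  have hreserve : 0 ≤ 2 / √(S'.R : ℝ) * S'.R := by positivity
  have hlarge := (S'.isLargeScale le_rfl).five_mul_sqrt_add_two_le
  rw [guaranteedRate]
  nlinarith [P.η_pos]

lemma clDistLE_riccatiPotential_damped (h : S.IsNext S') (hκ₀ : 0 ≤ κ)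
    (hκ : κ ≤ 2 * (S'.R + 1) * (1 - P.η / 2)) :
    ClDistLE l (riccatiPotential ω (S'.damped κ)) (riccatiPotential ω S'.f) (1 / S.R) := by
  intro m hm x
  have hconst : 0 ≤ dampedDerivConst l S'.R P.B κ S'.R :=
    zero_le_one.trans (one_le_dampedDerivConst P.one_le_B S'.one_le_length hκ₀ S'.R.cast_nonneg)
  calc _ ≤ dampedDerivConst l S'.R P.B κ S'.R ^ l * (Real.exp (1 - √S.R) +
          Real.exp (1 + κ - 2 * (guaranteedRate P.η S'.R * S'.R - 2 * √S'.R))) :=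
        (S'.dampingData hκ₀).abs_iteratedDeriv_riccatiPotential_dampedRatio_sub_le
          S'.R.cast_nonneg S'.derivDominated P.one_le_B S'.separationScale.pos S'.half_le
          S'.derivDominated_bump S'.le_exp_one (S'.exp_le_orbitProd S'.R) (Real.exp_pos _).le
          (fun _ => h.one_div_wronskianSum_le) hm x
    _ ≤ (6 * P.K * (P.D * (S.R : ℝ) ^ 4) ^ 3) ^ l * (2 * Real.exp (1 - √S.R)) := by
        have hK := P.K_nonneg
        have hD := P.one_le_D
        rw [two_mul (Real.exp _)]
        exact mul_le_mul (pow_le_pow_left₀ hconst (h.dampedDerivConst_le hκ) l)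
          (add_le_add_right (h.exp_sub_two_mul_rate_le hκ) _) (by positivity) (by positivity)
    _ ≤ 1 / S.R := (S.isLargeScale le_rfl).pow_mul_exp_le

end IsNext

end Stage

namespace Stage

variable {ω : ℝ} {l : ℕ} {P : ConstructionParams ω l} (S : Stage P)

/-- The Schrödinger potential of the stage, with Lyapunov exponent at least `1 / 2`. -/
noncomputable def potential : ℝ → ℝ := riccatiPotential ω S.f

/-- The potential of the stage after the damping step that annihilates its Lyapunov exponent. -/
noncomputable def nullPotential : ℝ → ℝ := riccatiPotential ω (S.damped S.nullStrength)

lemma contDiff_potential : ContDiff ℝ l S.potential :=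
  contDiff_riccatiPotential S.derivDominated.contDiff S.pos

lemma periodic_potential : Function.Periodic S.potential 1 :=
  periodic_riccatiPotential S.periodic

lemma half_le_LEn_potential {n : ℕ} (hn : 1 ≤ n) :
    1 / 2 ≤ LEn ω (SchrodingerCocycle S.potential) n :=
  S.half_le_integral_log.trans
    (integral_log_le_LEn S.pos S.derivDominated.contDiff.continuous S.periodic hn)

lemma contDiff_nullPotential : ContDiff ℝ l S.nullPotential :=
  contDiff_riccatiPotential (S.derivDominated_damped S.nullStrength_nonneg).contDiff
    (S.damped_pos S.nullStrength_nonneg)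

lemma periodic_nullPotential : Function.Periodic S.nullPotential 1 :=
  periodic_riccatiPotential S.periodic_damped

lemma tendsto_LEn_nullPotential (hω : Irrational ω) :
    Tendsto (LEn ω (SchrodingerCocycle S.nullPotential)) atTop (nhds 0) :=
  tendsto_LEn_zero_of_integral_log_eq_zero hω (S.damped_pos S.nullStrength_nonneg)
    (S.derivDominated_damped S.nullStrength_nonneg).contDiff.continuous S.periodic_damped
    S.integral_log_damped_nullStrength

section Sequence

variable {S : ℕ → Stage P} (hS : ∀ n, (S n).IsNext (S (n + 1)))
include hS

lemma one_div_le_half_pow (n : ℕ) : 1 / ((S n).R : ℝ) ≤ (1 / 2) ^ n := by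
  rw [one_div_pow]
  exact one_div_le_one_div_of_le (by positivity) (two_pow_le_of_isNext hS n)

lemma clDistLE_potential_succ (n : ℕ) :
    ClDistLE l (S (n + 2)).potential (S (n + 1)).potential ((1 / 2) ^ n) := by
  rw [potential, (hS (n + 1)).eq_damped]
  exact ((hS n).clDistLE_riccatiPotential_damped (Real.sqrt_nonneg _)
    (S (n + 1)).sqrt_le_two_mul).mono (one_div_le_half_pow hS n)

lemma clDistLE_nullPotential_potential (n : ℕ) :
    ClDistLE l (S (n + 1)).nullPotential (S (n + 1)).potential ((1 / 2) ^ n) :=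
  ((hS n).clDistLE_riccatiPotential_damped (S (n + 1)).nullStrength_nonneg
    (S (n + 1)).nullStrength_le).mono (one_div_le_half_pow hS n)

end Sequence

end Stage

theorem schrodinger_positive_LE_not_Cl_open
    (ω : ℝ) (hω : Irrational ω)
    (M : ℝ) (hM : 1 ≤ M) (hbt : ∀ k : ℕ, cfDen ω (k + 1) ≤ M * cfDen ω k)
    (l : ℕ) :
    ∃ v : ℝ → ℝ, Function.Periodic v 1 ∧ ContDiff ℝ l v ∧
      -- L(S_v) > 0
      (∃ L : ℝ, 0 < L ∧ Tendsto (fun m => LEn ω (SchrodingerCocycle v) m) atTop (nhds L)) ∧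
      -- every C^l-neighborhood of v contains a potential with zero Lyapunov exponent
      (∀ δ : ℝ, 0 < δ → ∃ w : ℝ → ℝ, Function.Periodic w 1 ∧ ContDiff ℝ l w ∧
        (∀ j ≤ l, ∀ x : ℝ, |iteratedDeriv j (fun y => w y - v y) x| < δ) ∧
        Tendsto (fun m => LEn ω (SchrodingerCocycle w) m) atTop (nhds 0)) := by
  obtain ⟨P⟩ := nonempty_constructionParams hω hM hbt l
  obtain ⟨S, hS⟩ := Stage.exists_seq_isNext P
  have hpot (n : ℕ) : ContDiff ℝ l (S (n + 1)).potential := (S (n + 1)).contDiff_potential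
  obtain ⟨v, hv, hdist⟩ := exists_contDiff_clDistLE_tsum hpot summable_geometric_two
    (Stage.clDistLE_potential_succ hS)
  have htail := tendsto_sum_nat_add fun n : ℕ => (1 / 2 : ℝ) ^ n
  have hper : Function.Periodic v 1 := periodic_of_tendsto
    (fun n => (S (n + 1)).periodic_potential) (tendsto_apply_of_clDistLE htail hdist)
  refine ⟨v, hper, hv, ?_, fun δ hδ => ?_⟩
  · exact exists_pos_tendsto_LEn hv.continuous hper one_half_pos fun n hn =>
      le_LEn_of_clDistLE hv.continuous hper (fun k => (hpot k).continuous) htail hdist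
        fun k => (S (k + 1)).half_le_LEn_potential hn
  · have hsmall : Tendsto (fun n : ℕ => (1 / 2 : ℝ) ^ n + ∑' k, (1 / 2 : ℝ) ^ (k + n))
        atTop (nhds 0) := by
      simpa using (tendsto_pow_atTop_nhds_zero_of_lt_one one_half_pos.le one_half_lt_one).add htail
    obtain ⟨n, hn⟩ := (hsmall.eventually_lt_const hδ).exists
    have hnull : ContDiff ℝ l (S (n + 1)).nullPotential := (S (n + 1)).contDiff_nullPotential
    have hclose := (Stage.clDistLE_nullPotential_potential hS n).trans hnull (hpot n) hv
      (hdist n).symm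
    exact ⟨_, (S (n + 1)).periodic_nullPotential, hnull,
      fun j hj x => (hclose j hj x).trans_lt hn, (S (n + 1)).tendsto_LEn_nullPotential hω⟩
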